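/- arXiv:1909.04085 — 2 statements merged into one kernel-verified Lean document; each statement's English description precedes it below -/
import Mathlib

section
/- For every t with 0 < t < √3/2 and every δ > 0, the polynomially convex hull of (P₀ᵗ ∪ P₁ᵗ ∪ P₂ᵗ) ∩ B̄(0;δ) contains a neighbourhood of the origin in ℂ²; i.e., there exists ρ > 0 such that the open ball B(0;ρ) is contained in the hull of (P₀ᵗ ∪ P₁ᵗ ∪ P₂ᵗ) ∩ B̄(0;δ). -/
open Complex ComplexConjugate

/-- The polynomially convex hull of a set `K ⊆ ℂ²`. -/
def polyHull2 (K : Set (ℂ × ℂ)) : Set (ℂ × ℂ) :=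
  { z | ∀ p : MvPolynomial (Fin 2) ℂ,
      ‖MvPolynomial.eval (fun i => if i = 0 then z.1 else z.2) p‖ ≤
        sSup ((fun w : ℂ × ℂ =>
          ‖MvPolynomial.eval (fun i => if i = 0 then w.1 else w.2) p‖) '' K) }

/-- A set `K ⊆ ℂ²` is polynomially convex if it equals its polynomially convex hull. -/
def PolyConvex2 (K : Set (ℂ × ℂ)) : Prop := polyHull2 K = K

/-- The closed Euclidean ball of radius `r` centred at the origin in `ℂ²`. -/
def eClosedBall (r : ℝ) : Set (ℂ × ℂ) := { z | ‖z.1‖ ^ 2 + ‖z.2‖ ^ 2 ≤ r ^ 2 }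

/-- The open Euclidean ball of radius `r` centred at the origin in `ℂ²`. -/
def eOpenBall (r : ℝ) : Set (ℂ × ℂ) := { z | ‖z.1‖ ^ 2 + ‖z.2‖ ^ 2 < r ^ 2 }

/-- The plane `P₀ᵗ = {w = z̄}`. -/
def P0 : Set (ℂ × ℂ) := { zw | zw.2 = conj zw.1 }

/-- The plane `P₁ᵗ = {w = −(√3(√3−i)/(2t)) z − ((1−i√3)/2) z̄}`. -/
noncomputable def P1 (t : ℝ) : Set (ℂ × ℂ) :=
  { zw | zw.2 = -((Real.sqrt 3 : ℂ) * ((Real.sqrt 3 : ℂ) - Complex.I) / (2 * (t : ℂ))) * zw.1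
      - ((1 - Complex.I * (Real.sqrt 3 : ℂ)) / 2) * conj zw.1 }

/-- The plane `P₂ᵗ = {w = −(√3(√3+i)/(2t)) z − ((1+i√3)/2) z̄}`. -/
noncomputable def P2 (t : ℝ) : Set (ℂ × ℂ) :=
  { zw | zw.2 = -((Real.sqrt 3 : ℂ) * ((Real.sqrt 3 : ℂ) + Complex.I) / (2 * (t : ℂ))) * zw.1
      - ((1 + Complex.I * (Real.sqrt 3 : ℂ)) / 2) * conj zw.1 }

/-!
In the coordinates `(z, v)` with `v = z + t * w`, the three planes are the graph of `z + t * conj z`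
and its rotations by cube roots of unity, so they are the preimage under `(z, v) ↦ (z, v ^ 3)` of
the single graph `u = (z + t * conj z) ^ 3`, and hulls pull back under this map.

A disc `ζ ↦ (ζ * y, (ζ ^ 3 + exp (-κ (ζ ^ 3))) * y ^ 3)` has its boundary on that graph when
`x = q * exp (κ q)`, `q = ζ ^ 3`, solves `x * ((1 + s) ^ 3 - 1) = 1` with a slope `s` of modulus `t`
and `(ζ * y) ^ 2 * s ≥ 0`. For `t < √3 / 2` the first condition holds for a Riemann map `x` of the
simply connected domain of parameters avoiding all slopes of modulus at most `t`; the second is a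
Riemann–Hilbert problem for `y`, with enough solutions for the discs to reach an open cone of
points. As the boundary regularity of `x` is not known a priori, all this is done on slightly
smaller circles, with slopes converging to `t`. The maximum principle on the lines `z = const` then
fills a neighbourhood of the origin.
-/

section

open Set Filter Topology Metric

/-! ### The Riemann mapping theorem for bounded domains -/

theorem le_norm_center_of_le_norm_sphere {f : ℂ → ℂ} {c : ℂ} {r m : ℝ} (hr : 0 < r) (hm : 0 < m)
    (hd : DifferentiableOn ℂ f (closedBall c r)) (hne : ∀ z ∈ closedBall c r, f z ≠ 0)
    (hle : ∀ z ∈ sphere c r, m ≤ ‖f z‖) : m ≤ ‖f c‖ := by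
  have hinv : ‖(f c)⁻¹‖ ≤ m⁻¹ := by
    refine Complex.norm_le_of_forall_mem_frontier_norm_le (f := fun z => (f z)⁻¹) isBounded_ball
      (DifferentiableOn.diffContOnCl ?_) (fun z hz => ?_) (subset_closure (mem_ball_self hr))
    · rw [closure_ball c hr.ne']
      exact hd.inv hne
    · rw [frontier_ball c hr.ne'] at hz
      rw [norm_inv]
      exact inv_anti₀ hm (hle z hz)
  rw [norm_inv] at hinv
  exact (inv_le_inv₀ (norm_pos_iff.2 (hne c (mem_closedBall_self hr.le))) hm).1 hinv

theorem eqOn_zero_or_forall_ne_zero_of_tendstoLocallyUniformlyOn {ι : Type*} {l : Filter ι}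
    [l.NeBot] {U : Set ℂ} {F : ι → ℂ → ℂ} {f : ℂ → ℂ} (hU : IsOpen U) (hc : IsPreconnected U)
    (hlim : TendstoLocallyUniformlyOn F f l U) (hd : ∀ᶠ i in l, DifferentiableOn ℂ (F i) U)
    (hne : ∀ᶠ i in l, ∀ z ∈ U, F i z ≠ 0) : EqOn f 0 U ∨ ∀ z ∈ U, f z ≠ 0 := by
  have hfd : DifferentiableOn ℂ f U := hlim.differentiableOn hd hU
  have han : AnalyticOnNhd ℂ f U := hfd.analyticOnNhd hU
  refine or_iff_not_imp_left.2 fun hf z₀ hz₀ hfz₀ => ?_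
  have hisolated : ∀ᶠ z in 𝓝[≠] z₀, f z ≠ 0 :=
    (han z₀ hz₀).eventually_eq_zero_or_eventually_ne_zero.resolve_left fun h =>
      hf (han.eqOn_zero_of_preconnected_of_eventuallyEq_zero hc hz₀ h)
  obtain ⟨r, hr, hball⟩ := nhds_basis_closedBall.mem_iff.1
    ((eventually_nhdsWithin_iff.1 hisolated).and (hU.mem_nhds hz₀))
  have hsub : closedBall z₀ r ⊆ U := fun z hz => (hball hz).2
  have hsphere : ∀ z ∈ sphere z₀ r, f z ≠ 0 := fun z hz =>
    (hball (sphere_subset_closedBall hz)).1 (ne_of_mem_sphere hz hr.ne')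
  obtain ⟨z₁, hz₁, hmin⟩ := (isCompact_sphere z₀ r).exists_isMinOn
    (NormedSpace.sphere_nonempty.2 hr.le)
    (hfd.continuousOn.mono (sphere_subset_closedBall.trans hsub)).norm
  have hm : 0 < ‖f z₁‖ / 2 := half_pos (norm_pos_iff.2 (hsphere z₁ hz₁))
  have hunif : ∀ᶠ i in l, ∀ z ∈ closedBall z₀ r, dist (f z) (F i z) < ‖f z₁‖ / 2 :=
    Metric.tendstoUniformlyOn_iff.1 ((tendstoLocallyUniformlyOn_iff_forall_isCompact hU).1 hlim _
      hsub (isCompact_closedBall z₀ r)) _ hm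
  obtain ⟨i, hdi, hnei, hi⟩ := (hd.and (hne.and hunif)).exists
  have hle : ‖f z₁‖ / 2 ≤ ‖F i z₀‖ := by
    refine le_norm_center_of_le_norm_sphere hr hm (hdi.mono hsub) (fun z hz => hnei z (hsub hz))
      fun z hz => ?_
    have hmin_z : ‖f z₁‖ ≤ ‖f z‖ := hmin hz
    have hclose := hi z (sphere_subset_closedBall hz)
    rw [dist_eq_norm] at hclose
    linarith [norm_sub_norm_le (f z) (F i z)]
  have hlt := hi z₀ (mem_closedBall_self hr.le)
  rw [hfz₀, dist_zero_left] at hlt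
  exact absurd hle hlt.not_ge

theorem exists_eqOn_const_or_injOn_of_tendstoLocallyUniformlyOn {ι : Type*} {l : Filter ι}
    [l.NeBot] {U : Set ℂ} {F : ι → ℂ → ℂ} {f : ℂ → ℂ} (hU : IsOpen U) (hc : IsPreconnected U)
    (hlim : TendstoLocallyUniformlyOn F f l U) (hd : ∀ᶠ i in l, DifferentiableOn ℂ (F i) U)
    (hinj : ∀ᶠ i in l, InjOn (F i) U) : (∃ w, ∀ z ∈ U, f z = w) ∨ InjOn f U := by
  refine or_iff_not_imp_left.2 fun hconst a ha b hb hab => ?_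
  by_contra hne
  obtain ⟨r, hr, hball⟩ := Metric.isOpen_iff.1 (hU.sdiff (isClosed_singleton (x := a))) b
    ⟨hb, fun h => hne h.symm⟩
  have hsub : ball b r ⊆ U := fun z hz => (hball hz).1
  have hlim_sub : TendstoLocallyUniformlyOn (fun i z => F i z - F i a) (fun z => f z - f a) l
      (ball b r) := by
    have hconst_a : TendstoLocallyUniformlyOn (fun i _ => F i a) (fun _ => f a) l (ball b r) :=
      ((hlim.tendsto_at ha).tendstoUniformlyOn_const (ball b r)).tendstoLocallyUniformlyOn
    exact (hlim.mono hsub).sub hconst_a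
  have hne_zero : ∀ᶠ i in l, ∀ z ∈ ball b r, F i z - F i a ≠ 0 := by
    filter_upwards [hinj] with i hi z hz h
    exact (hball hz).2 (hi (hsub hz) ha (sub_eq_zero.1 h))
  rcases eqOn_zero_or_forall_ne_zero_of_tendstoLocallyUniformlyOn isOpen_ball
    (convex_ball b r).isPreconnected hlim_sub
    (hd.mono fun i hi => (hi.mono hsub).sub (differentiableOn_const _)) hne_zero with h | h
  · have han : AnalyticOnNhd ℂ (fun z => f z - f a) U :=
      ((hlim.differentiableOn hd hU).sub (differentiableOn_const _)).analyticOnNhd hU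
    have heq := han.eqOn_zero_of_preconnected_of_eventuallyEq_zero hc hb
      (mem_of_superset (ball_mem_nhds b hr) h)
    exact hconst ⟨f a, fun z hz => sub_eq_zero.1 (heq hz)⟩
  · exact h b (mem_ball_self hr) (by rw [hab, sub_self])

/-- Montel's theorem, with an ultrafilter in place of the usual subsequence. -/
theorem exists_tendstoLocallyUniformlyOn_of_norm_le {ι : Type*} (l : Ultrafilter ι) {U : Set ℂ}
    {F : ι → ℂ → ℂ} {M : ℝ} (hU : IsOpen U) (hd : ∀ i, DifferentiableOn ℂ (F i) U)
    (hb : ∀ i, ∀ z ∈ U, ‖F i z‖ ≤ M) :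
    ∃ f : ℂ → ℂ, TendstoLocallyUniformlyOn F f l U ∧ ∀ z ∈ U, ‖f z‖ ≤ M := by
  have hpointwise : ∀ z ∈ U, ∃ w, ‖w‖ ≤ M ∧ Tendsto (fun i => F i z) l (𝓝 w) := fun z hz => by
    obtain ⟨w, hw, hle⟩ := (isCompact_closedBall (0 : ℂ) M).ultrafilter_le_nhds
      (l.map fun i => F i z)
      (le_principal_iff.2 (mem_map.2 (univ_mem' fun i => mem_closedBall_zero_iff.2 (hb i z hz))))
    exact ⟨w, mem_closedBall_zero_iff.1 hw, hle⟩
  choose! f hfM hf using hpointwise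
  refine ⟨f, Metric.tendstoLocallyUniformlyOn_iff.2 fun ε hε z hz => ?_, hfM⟩
  obtain ⟨r, hr, hball⟩ := Metric.isOpen_iff.1 hU z hz
  have hlip : ∀ i, ∀ y ∈ ball z r, dist (F i y) (F i z) ≤ 2 * M / r * dist y z := fun i y hy => by
    refine Complex.dist_le_div_mul_dist_of_mapsTo_ball ((hd i).mono hball) (fun x hx => ?_) hy
    rw [mem_closedBall, dist_eq_norm]
    linarith [norm_sub_le (F i x) (F i z), hb i x (hball hx), hb i z hz]
  have hlip_lim : ∀ y ∈ ball z r, dist (f y) (f z) ≤ 2 * M / r * dist y z := fun y hy =>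
    le_of_tendsto ((hf y (hball hy)).dist (hf z hz)) (Eventually.of_forall fun i => hlip i y hy)
  have hsmall : ∀ᶠ y in 𝓝 z, 2 * M / r * dist y z < ε / 4 := by
    refine ContinuousAt.eventually_lt (by fun_prop) continuousAt_const ?_
    rw [dist_self, mul_zero]
    positivity
  refine ⟨_, mem_nhdsWithin_of_mem_nhds (hsmall.and (ball_mem_nhds z hr)), ?_⟩
  filter_upwards [Metric.tendsto_nhds.1 (hf z hz) (ε / 4) (by positivity)] with i hi y ⟨hy, hyr⟩
  have hFi := hlip i y hyr
  rw [dist_comm] at hi hFi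
  linarith [dist_triangle4 (f y) (f z) (F i z) (F i y), hlip_lim y hyr]

theorem exists_differentiableOn_exp_eq {U : Set ℂ} {g : ℂ → ℂ} (hU : IsOpen U)
    (hc : IsSimplyConnected U) (hg : DifferentiableOn ℂ g U) (hne : ∀ z ∈ U, g z ≠ 0) :
    ∃ f : ℂ → ℂ, DifferentiableOn ℂ f U ∧ ∀ z ∈ U, exp (f z) = g z := by
  obtain ⟨f, hf, hfg⟩ := Complex.exists_continuousOn_eqOn_exp_comp hc hU hg.continuousOn
    (fun ⟨z, hz, h⟩ => hne z hz h)
  refine ⟨f, fun z hz => DifferentiableAt.differentiableWithinAt ?_, hfg⟩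
  have hdiff : DifferentiableAt ℂ (fun w => f z + log (g w / g z)) z := by
    refine ((hg.differentiableAt (hU.mem_nhds hz)).div_const _ |>.clog ?_).const_add _
    rw [div_self (hne z hz)]
    exact one_mem_slitPlane
  have hnear : ∀ᶠ w in 𝓝 z, |(f w - f z).im| < Real.pi := by
    have hfz : ContinuousAt f z := hf.continuousAt (hU.mem_nhds hz)
    exact ContinuousAt.eventually_lt (by fun_prop) continuousAt_const (by simp [Real.pi_pos])
  refine hdiff.congr_of_eventuallyEq ?_
  filter_upwards [hU.mem_nhds hz, hnear] with w hw him
  obtain ⟨hlow, hupp⟩ := abs_lt.1 him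
  rw [← hfg hw, ← hfg hz, Function.comp_apply, Function.comp_apply, ← exp_sub,
    log_exp hlow hupp.le, add_sub_cancel]

/-- The automorphism `z ↦ (z - c) / (1 - c̄ z)` of the unit disc. -/
noncomputable def discAut (c z : ℂ) : ℂ := (z - c) / (1 - conj c * z)

theorem one_sub_conj_mul_ne_zero {c z : ℂ} (hc : ‖c‖ < 1) (hz : ‖z‖ < 1) :
    1 - conj c * z ≠ 0 := fun h => by
  have hnorm : ‖c‖ * ‖z‖ = 1 := by
    rw [← Complex.norm_conj c, ← norm_mul, ← sub_eq_zero.1 h, norm_one]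
  nlinarith [norm_nonneg c, norm_nonneg z]

theorem norm_discAut_lt_one {c z : ℂ} (hc : ‖c‖ < 1) (hz : ‖z‖ < 1) : ‖discAut c z‖ < 1 := by
  rw [discAut, norm_div, div_lt_one (norm_pos_iff.2 (one_sub_conj_mul_ne_zero hc hz))]
  refine lt_of_pow_lt_pow_left₀ 2 (norm_nonneg _) ?_
  have hidentity : ‖1 - conj c * z‖ ^ 2 - ‖z - c‖ ^ 2 = (1 - ‖c‖ ^ 2) * (1 - ‖z‖ ^ 2) := by
    simp only [← Complex.normSq_eq_norm_sq, Complex.normSq_apply, sub_re, sub_im, one_re, one_im,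
      mul_re, mul_im, conj_re, conj_im]
    ring
  have hc2 : 0 < 1 - ‖c‖ ^ 2 := by nlinarith [norm_nonneg c]
  have hz2 : 0 < 1 - ‖z‖ ^ 2 := by nlinarith [norm_nonneg z]
  linarith [mul_pos hc2 hz2]

theorem injOn_discAut {c : ℂ} (hc : ‖c‖ < 1) : InjOn (discAut c) (ball 0 1) := by
  intro a ha b hb hab
  rw [mem_ball_zero_iff] at ha hb
  rw [discAut, discAut, div_eq_div_iff (one_sub_conj_mul_ne_zero hc ha)
    (one_sub_conj_mul_ne_zero hc hb)] at hab
  have hprod : (a - b) * (1 - conj c * c) = 0 := by linear_combination hab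
  exact sub_eq_zero.1 ((mul_eq_zero.1 hprod).resolve_right (one_sub_conj_mul_ne_zero hc hc))

theorem hasDerivAt_discAut {c z : ℂ} (hc : ‖c‖ < 1) (hz : ‖z‖ < 1) :
    HasDerivAt (discAut c) ((1 - conj c * c) / (1 - conj c * z) ^ 2) z := by
  refine (((hasDerivAt_id z).sub_const c).div (((hasDerivAt_id z).const_mul (conj c)).const_sub 1)
    (one_sub_conj_mul_ne_zero hc hz)).congr_deriv ?_
  simp only [id]
  ring

/-- The maps `f : U → 𝔻` competing in the extremal problem whose solution is the Riemann map:
univalent, sending the base point `z₀` to `0`. The condition `deriv f z ≠ 0` follows from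
injectivity but is cheaper to carry along. -/
structure IsUnivalentToDisc (U : Set ℂ) (z₀ : ℂ) (f : ℂ → ℂ) : Prop where
  differentiableOn : DifferentiableOn ℂ f U
  injOn : InjOn f U
  mapsTo : MapsTo f U (ball 0 1)
  map_base : f z₀ = 0
  deriv_ne_zero : ∀ z ∈ U, deriv f z ≠ 0

theorem IsUnivalentToDisc.discAut_comp {U : Set ℂ} {z₀ : ℂ} {h : ℂ → ℂ} (hU : IsOpen U)
    (hz₀ : z₀ ∈ U) (hd : DifferentiableOn ℂ h U) (hinj : InjOn h U) (hmaps : MapsTo h U (ball 0 1))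
    (hderiv : ∀ z ∈ U, deriv h z ≠ 0) : IsUnivalentToDisc U z₀ (discAut (h z₀) ∘ h) := by
  have hnorm : ∀ z ∈ U, ‖h z‖ < 1 := fun z hz => mem_ball_zero_iff.1 (hmaps hz)
  have hcomp : ∀ z ∈ U, HasDerivAt (discAut (h z₀) ∘ h)
      ((1 - conj (h z₀) * h z₀) / (1 - conj (h z₀) * h z) ^ 2 * deriv h z) z := fun z hz =>
    (hasDerivAt_discAut (hnorm z₀ hz₀) (hnorm z hz)).comp z
      (hd.differentiableAt (hU.mem_nhds hz)).hasDerivAt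
  refine ⟨fun z hz => (hcomp z hz).differentiableAt.differentiableWithinAt,
    (injOn_discAut (hnorm z₀ hz₀)).comp hinj hmaps,
    fun z hz => mem_ball_zero_iff.2 (norm_discAut_lt_one (hnorm z₀ hz₀) (hnorm z hz)),
    by simp [discAut], fun z hz => ?_⟩
  rw [(hcomp z hz).deriv]
  exact mul_ne_zero (div_ne_zero (one_sub_conj_mul_ne_zero (hnorm z₀ hz₀) (hnorm z₀ hz₀))
    (pow_ne_zero 2 (one_sub_conj_mul_ne_zero (hnorm z₀ hz₀) (hnorm z hz)))) (hderiv z hz)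

theorem exists_isUnivalentToDisc {U : Set ℂ} {z₀ : ℂ} (hb : Bornology.IsBounded U) :
    ∃ f, IsUnivalentToDisc U z₀ f := by
  obtain ⟨B, hB, hsub⟩ := hb.subset_ball_lt 0 z₀
  have hBc : (B : ℂ) ≠ 0 := ofReal_ne_zero.2 hB.ne'
  have hderiv : ∀ z : ℂ, HasDerivAt (fun z : ℂ => (z - z₀) / B) (1 / B) z := fun z =>
    ((hasDerivAt_id z).sub_const z₀).div_const _
  refine ⟨fun z => (z - z₀) / B,
    fun z _ => (hderiv z).differentiableAt.differentiableWithinAt,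
    fun a _ b _ hab => sub_left_injective ((div_left_inj' hBc).1 hab), fun z hz => ?_, by simp,
    fun z _ => ?_⟩
  · rw [mem_ball_zero_iff, norm_div, norm_real, Real.norm_of_nonneg hB.le, div_lt_one hB]
    exact mem_ball_iff_norm.1 (hsub hz)
  · rw [(hderiv z).deriv]
    exact one_div_ne_zero hBc

theorem IsUnivalentToDisc.of_tendstoLocallyUniformlyOn {ι : Type*} {l : Filter ι} [l.NeBot]
    {U : Set ℂ} {z₀ : ℂ} {F : ι → ℂ → ℂ} {f : ℂ → ℂ} (hU : IsOpen U) (hc : IsPreconnected U)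
    (hz₀ : z₀ ∈ U) (hF : ∀ i, IsUnivalentToDisc U z₀ (F i))
    (hlim : TendstoLocallyUniformlyOn F f l U) (hderiv : deriv f z₀ ≠ 0) :
    IsUnivalentToDisc U z₀ f := by
  have hd : ∀ᶠ i in l, DifferentiableOn ℂ (F i) U :=
    Eventually.of_forall fun i => (hF i).differentiableOn
  have hfd : DifferentiableOn ℂ f U := hlim.differentiableOn hd hU
  have hbase : f z₀ = 0 :=
    tendsto_nhds_unique (hlim.tendsto_at hz₀) (by simp only [(hF _).map_base, tendsto_const_nhds])
  have hnonconst : ¬ ∃ w, ∀ z ∈ U, f z = w := fun ⟨w, hw⟩ => hderiv <| by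
    rw [EventuallyEq.deriv_eq (mem_of_superset (hU.mem_nhds hz₀) hw), deriv_const]
  have hle : ∀ z ∈ U, ‖f z‖ ≤ 1 := fun z hz =>
    le_of_tendsto (hlim.tendsto_at hz).norm
      (Eventually.of_forall fun i => (mem_ball_zero_iff.1 ((hF i).mapsTo hz)).le)
  refine ⟨hfd, ?_, fun z hz => mem_ball_zero_iff.2 ((hle z hz).lt_of_ne fun hz1 => ?_), hbase, ?_⟩
  · exact (exists_eqOn_const_or_injOn_of_tendstoLocallyUniformlyOn hU hc hlim hd
      (Eventually.of_forall fun i => (hF i).injOn)).resolve_left hnonconst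
  · have hmax : IsMaxOn (norm ∘ f) U z := fun w hw => (hle w hw).trans_eq hz1.symm
    exact hnonconst ⟨f z, Complex.eqOn_of_isPreconnected_of_isMaxOn_norm hc hU hfd hz hmax⟩
  · exact (eqOn_zero_or_forall_ne_zero_of_tendstoLocallyUniformlyOn hU hc (hlim.deriv hd hU)
      (Eventually.of_forall fun i => (hF i).differentiableOn.deriv hU)
      (Eventually.of_forall fun i => (hF i).deriv_ne_zero)).resolve_left fun h => hderiv (h hz₀)

theorem exists_isUnivalentToDisc_norm_deriv_max {U : Set ℂ} {z₀ : ℂ} (hU : IsOpen U)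
    (hc : IsPreconnected U) (hb : Bornology.IsBounded U) (hz₀ : z₀ ∈ U) :
    ∃ g, IsUnivalentToDisc U z₀ g ∧
      ∀ f, IsUnivalentToDisc U z₀ f → ‖deriv f z₀‖ ≤ ‖deriv g z₀‖ := by
  set S := (fun f : ℂ → ℂ => ‖deriv f z₀‖) '' {f | IsUnivalentToDisc U z₀ f}
  obtain ⟨f₀, hf₀⟩ := exists_isUnivalentToDisc (z₀ := z₀) hb
  obtain ⟨r, hr, hball⟩ := Metric.isOpen_iff.1 hU z₀ hz₀
  have hbdd : BddAbove S := by
    refine ⟨1 / r, ?_⟩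
    rintro _ ⟨f, hf, rfl⟩
    refine Complex.norm_deriv_le_div_of_mapsTo_ball (hf.differentiableOn.mono hball) ?_ hr
    rw [hf.map_base]
    exact (hf.mapsTo.mono_left hball).mono_right ball_subset_closedBall
  obtain ⟨u, -, hu, huS⟩ := exists_seq_tendsto_sSup (S := S) ⟨_, f₀, hf₀, rfl⟩ hbdd
  choose F hF hFu using huS
  obtain ⟨g, hlim, -⟩ := exists_tendstoLocallyUniformlyOn_of_norm_le (hyperfilter ℕ) hU
    (fun n => (hF n).differentiableOn)
    (fun n z hz => (mem_ball_zero_iff.1 ((hF n).mapsTo hz)).le)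
  have hsSup : ‖deriv g z₀‖ = sSup S := by
    have hlim_deriv := ((hlim.deriv (Eventually.of_forall fun n => (hF n).differentiableOn)
      hU).tendsto_at hz₀).norm
    refine tendsto_nhds_unique hlim_deriv ?_
    simpa only [Function.comp_apply, hFu] using hu.mono_left Nat.hyperfilter_le_atTop
  have hmax : ∀ f, IsUnivalentToDisc U z₀ f → ‖deriv f z₀‖ ≤ ‖deriv g z₀‖ := fun f hf =>
    hsSup ▸ le_csSup hbdd ⟨f, hf, rfl⟩
  have hderiv : deriv g z₀ ≠ 0 :=
    norm_pos_iff.1 ((norm_pos_iff.2 (hf₀.deriv_ne_zero z₀ hz₀)).trans_le (hmax f₀ hf₀))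
  exact ⟨g, .of_tendstoLocallyUniformlyOn hU hc hz₀ hF hlim hderiv, hmax⟩

theorem exists_differentiableOn_sq_eq {U : Set ℂ} {g : ℂ → ℂ} (hU : IsOpen U)
    (hsc : IsSimplyConnected U) (hg : DifferentiableOn ℂ g U) (hne : ∀ z ∈ U, g z ≠ 0) :
    ∃ f : ℂ → ℂ, DifferentiableOn ℂ f U ∧ ∀ z ∈ U, f z ^ 2 = g z := by
  obtain ⟨f, hf, hfg⟩ := exists_differentiableOn_exp_eq hU hsc hg hne
  refine ⟨fun z => exp (f z / 2), (hf.div_const 2).cexp, fun z hz => ?_⟩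
  rw [← exp_nat_mul, Nat.cast_ofNat, mul_div_cancel₀ _ two_ne_zero, hfg z hz]

theorem IsUnivalentToDisc.hasDerivAt_discAut_comp {U : Set ℂ} {z₀ c z : ℂ} {g : ℂ → ℂ}
    (hU : IsOpen U) (hg : IsUnivalentToDisc U z₀ g) (hc : ‖c‖ < 1) (hz : z ∈ U) :
    HasDerivAt (discAut c ∘ g) ((1 - conj c * c) / (1 - conj c * g z) ^ 2 * deriv g z) z :=
  (hasDerivAt_discAut hc (mem_ball_zero_iff.1 (hg.mapsTo hz))).comp z
    (hg.differentiableOn.differentiableAt (hU.mem_nhds hz)).hasDerivAt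

theorem IsUnivalentToDisc.exists_sq_eq_discAut {U : Set ℂ} {z₀ c : ℂ} {g : ℂ → ℂ} (hU : IsOpen U)
    (hsc : IsSimplyConnected U) (hg : IsUnivalentToDisc U z₀ g) (hc : ‖c‖ < 1)
    (hcg : ∀ z ∈ U, g z ≠ c) :
    ∃ h : ℂ → ℂ, DifferentiableOn ℂ h U ∧ InjOn h U ∧ MapsTo h U (ball 0 1) ∧
      ∀ z ∈ U, h z ^ 2 = discAut c (g z) ∧
        2 * h z * deriv h z = (1 - conj c * c) / (1 - conj c * g z) ^ 2 * deriv g z := by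
  have hgnorm : ∀ z ∈ U, ‖g z‖ < 1 := fun z hz => mem_ball_zero_iff.1 (hg.mapsTo hz)
  have hF := fun z (hz : z ∈ U) => hg.hasDerivAt_discAut_comp hU hc hz
  obtain ⟨h, hd, hsq⟩ := exists_differentiableOn_sq_eq hU hsc
    (fun z hz => (hF z hz).differentiableAt.differentiableWithinAt)
    (fun z hz => div_ne_zero (sub_ne_zero.2 (hcg z hz)) (one_sub_conj_mul_ne_zero hc (hgnorm z hz)))
  refine ⟨h, hd, fun a ha b hb hab => ?_, fun z hz => ?_, fun z hz => ⟨hsq z hz, ?_⟩⟩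
  · have hFab : (discAut c ∘ g) a = (discAut c ∘ g) b := by rw [← hsq a ha, ← hsq b hb, hab]
    exact (injOn_discAut hc).comp hg.injOn hg.mapsTo ha hb hFab
  · rw [mem_ball_zero_iff, ← sq_lt_one_iff₀ (norm_nonneg _), ← norm_pow, hsq z hz]
    exact norm_discAut_lt_one hc (hgnorm z hz)
  · have hpow := (hd.differentiableAt (hU.mem_nhds hz)).hasDerivAt.pow 2
    have huniq := (hpow.congr_of_eventuallyEq
      (mem_of_superset (hU.mem_nhds hz) fun w hw => (hsq w hw).symm)).unique (hF z hz)
    simpa only [Nat.cast_ofNat, Nat.add_one_sub_one, pow_one] using huniq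

theorem norm_one_sub_conj_mul_self {c : ℂ} (hc : ‖c‖ < 1) : ‖1 - conj c * c‖ = 1 - ‖c‖ ^ 2 := by
  rw [conj_mul', ← ofReal_pow, ← ofReal_one, ← ofReal_sub, norm_real, Real.norm_of_nonneg]
  nlinarith [norm_nonneg c]

theorem norm_deriv_discAut_comp {h : ℂ → ℂ} {z : ℂ} (hd : DifferentiableAt ℂ h z)
    (hz : ‖h z‖ < 1) : (1 - ‖h z‖ ^ 2) * ‖deriv (discAut (h z) ∘ h) z‖ = ‖deriv h z‖ := by
  have hne : 1 - ‖h z‖ ^ 2 ≠ 0 := by nlinarith [norm_nonneg (h z)]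
  rw [((hasDerivAt_discAut hz hz).comp z hd.hasDerivAt).deriv, norm_mul, norm_div, norm_pow,
    norm_one_sub_conj_mul_self hz]
  field_simp

/-- Koebe's step: a square root composed with disc automorphisms enlarges the derivative of a
competitor that omits a value of the disc. -/
theorem IsUnivalentToDisc.exists_norm_deriv_lt {U : Set ℂ} {z₀ c : ℂ} {g : ℂ → ℂ} (hU : IsOpen U)
    (hsc : IsSimplyConnected U) (hz₀ : z₀ ∈ U) (hg : IsUnivalentToDisc U z₀ g) (hc : ‖c‖ < 1)
    (hcg : ∀ z ∈ U, g z ≠ c) :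
    ∃ f, IsUnivalentToDisc U z₀ f ∧ ‖deriv g z₀‖ < ‖deriv f z₀‖ := by
  obtain ⟨h, hd, hinj, hmaps, hsq⟩ := hg.exists_sq_eq_discAut hU hsc hc hcg
  have hderiv_ne : ∀ z ∈ U, deriv h z ≠ 0 := fun z hz h0 => by
    have hzero := (hsq z hz).2
    rw [h0, mul_zero] at hzero
    exact mul_ne_zero (div_ne_zero (one_sub_conj_mul_ne_zero hc hc) (pow_ne_zero 2
      (one_sub_conj_mul_ne_zero hc (mem_ball_zero_iff.1 (hg.mapsTo hz)))))
      (hg.deriv_ne_zero z hz) hzero.symm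
  refine ⟨discAut (h z₀) ∘ h, .discAut_comp hU hz₀ hd hinj hmaps hderiv_ne, ?_⟩
  have hh1 : ‖h z₀‖ < 1 := mem_ball_zero_iff.1 (hmaps hz₀)
  have hnormsq : ‖h z₀‖ ^ 2 = ‖c‖ := by
    rw [← norm_pow, (hsq z₀ hz₀).1, hg.map_base, discAut, zero_sub, mul_zero, sub_zero, div_one,
      norm_neg]
  have hh0 : 0 < ‖h z₀‖ := norm_pos_iff.2 fun h0 => hcg z₀ hz₀ <| by
    rw [h0, norm_zero, zero_pow two_ne_zero] at hnormsq
    rw [hg.map_base, norm_eq_zero.1 hnormsq.symm]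
  have hderiv_h : 2 * ‖h z₀‖ * ‖deriv h z₀‖ = (1 - ‖h z₀‖ ^ 4) * ‖deriv g z₀‖ := by
    have hnorm := congrArg norm (hsq z₀ hz₀).2
    rw [hg.map_base, mul_zero, sub_zero, one_pow, div_one, norm_mul, norm_mul, norm_mul,
      norm_one_sub_conj_mul_self hc, ← hnormsq, Complex.norm_two] at hnorm
    rw [hnorm]
    ring
  have hderiv_comp := norm_deriv_discAut_comp (hd.differentiableAt (hU.mem_nhds hz₀)) hh1
  have hg0 : 0 < ‖deriv g z₀‖ := norm_pos_iff.2 (hg.deriv_ne_zero z₀ hz₀)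
  have hpos : 0 < 1 - ‖h z₀‖ ^ 2 := by nlinarith
  have hratio : 2 * ‖h z₀‖ * ‖deriv (discAut (h z₀) ∘ h) z₀‖ = (1 + ‖h z₀‖ ^ 2) * ‖deriv g z₀‖ := by
    refine mul_left_cancel₀ hpos.ne' ?_
    linear_combination 2 * ‖h z₀‖ * hderiv_comp + hderiv_h
  nlinarith [mul_pos (pow_pos (sub_pos.2 hh1) 2) hg0]

theorem hasDerivAt_of_leftInvOn {U : Set ℂ} {g x : ℂ → ℂ} {z : ℂ} (hU : IsOpen U)
    (hg : DifferentiableOn ℂ g U) (hx : LeftInvOn x g U) (hz : z ∈ U) (hderiv : deriv g z ≠ 0) :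
    HasDerivAt x (deriv g z)⁻¹ (g z) := by
  have hstrict : HasStrictDerivAt g (deriv g z) z := (hg.analyticOnNhd hU z hz).hasStrictDerivAt
  have hmap : 𝓝 (g z) = map g (𝓝 z) := (hstrict.map_nhds_eq hderiv).symm
  have hcont : ContinuousAt x (g z) := by
    rw [ContinuousAt, hx hz, hmap, tendsto_map'_iff]
    exact tendsto_id.congr' (mem_of_superset (hU.mem_nhds hz) fun w hw => (hx hw).symm)
  have hright : ∀ᶠ y in 𝓝 (g z), g (x y) = y := by
    rw [hmap, eventually_map]
    exact mem_of_superset (hU.mem_nhds hz) fun w hw => congrArg g (hx hw)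
  refine HasDerivAt.of_local_left_inverse hcont ?_ hderiv hright
  rw [hx hz]
  exact hstrict.hasDerivAt

/-- The last clause says that the parametrization is proper. -/
theorem exists_riemann_parametrization {U : Set ℂ} {z₀ : ℂ} (hU : IsOpen U)
    (hsc : IsSimplyConnected U) (hb : Bornology.IsBounded U) (hz₀ : z₀ ∈ U) :
    ∃ x : ℂ → ℂ, DifferentiableOn ℂ x (ball 0 1) ∧ BijOn x (ball 0 1) U ∧ x 0 = z₀ ∧
      deriv x 0 ≠ 0 ∧
      ∀ K, IsCompact K → K ⊆ U → ∃ r < 1, ∀ q ∈ ball (0 : ℂ) 1, x q ∈ K → ‖q‖ ≤ r := by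
  obtain ⟨g, hg, hmax⟩ := exists_isUnivalentToDisc_norm_deriv_max hU
    hsc.isPathConnected.isConnected.isPreconnected hb hz₀
  have hbij : BijOn g U (ball 0 1) := ⟨hg.mapsTo, hg.injOn, fun c hc => by
    by_contra hcg
    obtain ⟨f, hf, hlt⟩ := hg.exists_norm_deriv_lt hU hsc hz₀ (mem_ball_zero_iff.1 hc)
      fun z hz h => hcg ⟨z, hz, h⟩
    exact (hmax f hf).not_gt hlt⟩
  have hinv : InvOn (Function.invFunOn g U) g U (ball 0 1) := hbij.invOn_invFunOn
  set x := Function.invFunOn g U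
  have hxbij : BijOn x (ball 0 1) U := hbij.symm hinv.symm
  have hxderiv : ∀ q ∈ ball (0 : ℂ) 1, HasDerivAt x (deriv g (x q))⁻¹ q := fun q hq => by
    have hd := hasDerivAt_of_leftInvOn hU hg.differentiableOn hinv.1 (hxbij.mapsTo hq)
      (hg.deriv_ne_zero _ (hxbij.mapsTo hq))
    rwa [hinv.2 hq] at hd
  have h0 : (0 : ℂ) ∈ ball (0 : ℂ) 1 := mem_ball_self one_pos
  refine ⟨x, fun q hq => (hxderiv q hq).differentiableAt.differentiableWithinAt, hxbij,
    hg.map_base ▸ hinv.1 hz₀, ?_, fun K hK hKU => ?_⟩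
  · rw [(hxderiv 0 h0).deriv]
    exact inv_ne_zero (hg.deriv_ne_zero _ (hxbij.mapsTo h0))
  · obtain ⟨r, hr, hsub⟩ := exists_pos_lt_subset_ball one_pos
      (hK.image_of_continuousOn (hg.differentiableOn.continuousOn.mono hKU)).isClosed
      (image_subset_iff.2 fun z hz => hg.mapsTo (hKU hz))
    refine ⟨r, hr.2, fun q hq hqK => (mem_ball_zero_iff.1 (hsub ⟨x q, hqK, hinv.2 hq⟩)).le⟩

/-! ### A Riemann–Hilbert problem on an annulus -/

/-- The Cauchy transform of `f` over the circle of radius `r` about the origin. -/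
noncomputable def cauchyTransform (f : ℂ → ℂ) (r : ℝ) (w : ℂ) : ℂ :=
  (2 * Real.pi * I : ℂ)⁻¹ * ∮ z in C(0, r), (z - w)⁻¹ * f z

theorem differentiableOn_cauchyTransform {f : ℂ → ℂ} {r : ℝ} (hr : 0 < r)
    (hf : ContinuousOn f (sphere 0 r)) :
    DifferentiableOn ℂ (cauchyTransform f r) (ball 0 r) := by
  lift r to NNReal using hr.le
  have hseries := hasFPowerSeriesOn_cauchy_integral (hf.circleIntegrable hr.le)
    (NNReal.coe_pos.1 hr)
  rw [← Metric.eball_coe]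
  exact hseries.differentiableOn

theorem circleIntegral_inv_sub_mul_eq {f : ℂ → ℂ} {r : ℝ} {w : ℂ} (hr : 0 < r) (hrw : r ≠ ‖w‖)
    (hf : ContinuousOn f (sphere 0 r)) :
    ∮ z in C(0, r), (z - w)⁻¹ * f z =
      (∮ z in C(0, r), dslope f w z) + (∮ z in C(0, r), (z - w)⁻¹) * f w := by
  have hne : ∀ z ∈ sphere (0 : ℂ) r, z ≠ w := fun z hz h =>
    hrw (by rw [← h, mem_sphere_zero_iff_norm.1 hz])
  have hinv : ContinuousOn (fun z => (z - w)⁻¹) (sphere 0 r) :=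
    ContinuousOn.inv₀ (by fun_prop) fun z hz => sub_ne_zero.2 (hne z hz)
  have hint : CircleIntegrable (fun z => (z - w)⁻¹ * f z) 0 r :=
    (hinv.mul hf).circleIntegrable hr.le
  have hint_const : CircleIntegrable (fun z => f w * (z - w)⁻¹) 0 r :=
    (continuousOn_const.mul hinv).circleIntegrable hr.le
  rw [← sub_eq_iff_eq_add, mul_comm _ (f w), ← circleIntegral.integral_const_mul,
    ← circleIntegral.integral_sub hint hint_const]
  refine circleIntegral.integral_congr hr.le fun z hz => ?_
  simp only [dslope_of_ne _ (hne z hz), slope_def_field]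
  ring

theorem circleIntegral_inv_sub_eq_zero {r : ℝ} {w : ℂ} (hr : 0 < r) (hrw : r < ‖w‖) :
    ∮ z in C(0, r), (z - w)⁻¹ = 0 := by
  have hne : ∀ z ∈ closedBall (0 : ℂ) r, z - w ≠ 0 := fun z hz h =>
    (mem_closedBall_zero_iff.1 hz).not_gt (sub_eq_zero.1 h ▸ hrw)
  refine circleIntegral_eq_zero_of_differentiable_on_off_countable hr.le countable_empty
    (ContinuousOn.inv₀ (by fun_prop) hne) fun z hz => ?_
  exact DifferentiableAt.inv (by fun_prop) (hne z (ball_subset_closedBall hz.1))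

theorem isOpen_annulus (r R : ℝ) : IsOpen {z : ℂ | r < ‖z‖ ∧ ‖z‖ < R} :=
  (isOpen_lt continuous_const continuous_norm).inter (isOpen_lt continuous_norm continuous_const)

theorem sphere_subset_annulus {r ρ R : ℝ} (hr : r < ρ) (hR : ρ < R) :
    sphere (0 : ℂ) ρ ⊆ {z | r < ‖z‖ ∧ ‖z‖ < R} := fun z hz => by
  rw [mem_sphere_zero_iff_norm] at hz
  exact ⟨hz ▸ hr, hz ▸ hR⟩

theorem eq_cauchyTransform_sub_cauchyTransform {f : ℂ → ℂ} {r r₁ r₂ R : ℝ} {w : ℂ} (hr : 0 ≤ r)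
    (hf : DifferentiableOn ℂ f {z | r < ‖z‖ ∧ ‖z‖ < R}) (hr₁ : r < r₁) (hw₁ : r₁ < ‖w‖)
    (hw₂ : ‖w‖ < r₂) (hr₂ : r₂ < R) :
    f w = cauchyTransform f r₂ w - cauchyTransform f r₁ w := by
  have h₁ : 0 < r₁ := hr.trans_lt hr₁
  have h₁₂ : r₁ < r₂ := hw₁.trans hw₂
  have hopen := isOpen_annulus r R
  have hslope : DifferentiableOn ℂ (dslope f w) {z | r < ‖z‖ ∧ ‖z‖ < R} :=
    (Complex.differentiableOn_dslope
      (hopen.mem_nhds ⟨hr₁.trans hw₁, hw₂.trans hr₂⟩)).2 hf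
  have hmem : ∀ z : ℂ, r₁ ≤ ‖z‖ → ‖z‖ ≤ r₂ → z ∈ {z : ℂ | r < ‖z‖ ∧ ‖z‖ < R} :=
    fun z hz₁ hz₂ => ⟨hr₁.trans_le hz₁, hz₂.trans_lt hr₂⟩
  have hdeform : (∮ z in C(0, r₂), dslope f w z) = ∮ z in C(0, r₁), dslope f w z := by
    refine circleIntegral_eq_of_differentiable_on_annulus_off_countable h₁ h₁₂.le
      countable_empty (hslope.continuousOn.mono fun z hz => ?_) fun z hz => ?_
    · exact hmem z (by simpa using hz.2) (by simpa using hz.1)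
    · have hz₁ : r₁ < ‖z‖ := not_le.1 fun h => hz.1.2 (mem_closedBall_zero_iff.2 h)
      have hz₂ : ‖z‖ < r₂ := mem_ball_zero_iff.1 hz.1.1
      exact hslope.differentiableAt (hopen.mem_nhds (hmem z hz₁.le hz₂.le))
  have hsphere := fun ρ h h' => hf.continuousOn.mono (sphere_subset_annulus (ρ := ρ) h h')
  rw [cauchyTransform, cauchyTransform, ← mul_sub,
    circleIntegral_inv_sub_mul_eq (h₁.trans h₁₂) hw₂.ne' (hsphere r₂ (hr₁.trans h₁₂) hr₂),
    circleIntegral_inv_sub_mul_eq h₁ hw₁.ne (hsphere r₁ hr₁ (h₁₂.trans hr₂)),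
    circleIntegral.integral_sub_inv_of_mem_ball (mem_ball_zero_iff.2 hw₂),
    circleIntegral_inv_sub_eq_zero h₁ hw₁, hdeform, zero_mul, add_zero, add_sub_cancel_left,
    inv_mul_cancel_left₀ two_pi_I_ne_zero]

theorem circleIntegral_eq_circleIntegral_inv (f : ℂ → ℂ) {r : ℝ} (hr : r ≠ 0) :
    ∮ z in C(0, r), f z = ∮ z in C(0, r⁻¹), f z⁻¹ / z ^ 2 := by
  have hperiodic : Function.Periodic
      (fun θ => circleMap 0 r θ * I * f (circleMap 0 r θ)) (2 * Real.pi) := fun θ => by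
    simp only [periodic_circleMap 0 r θ]
  have hshift := hperiodic.intervalIntegral_add_eq (-(2 * Real.pi)) 0
  have hneg := intervalIntegral.integral_comp_neg (a := 0) (b := 2 * Real.pi)
    fun θ => circleMap 0 r θ * I * f (circleMap 0 r θ)
  rw [neg_zero] at hneg
  rw [neg_add_cancel, zero_add, ← hneg] at hshift
  simp only [circleIntegral, deriv_circleMap, smul_eq_mul]
  rw [← hshift]
  refine intervalIntegral.integral_congr fun θ _ => ?_
  have hinv : circleMap 0 r (-θ) = (circleMap 0 r⁻¹ θ)⁻¹ := by rw [circleMap_zero_inv, inv_inv]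
  have hne : circleMap 0 r⁻¹ θ ≠ 0 := circleMap_ne_center (inv_ne_zero hr)
  simp only [hinv]
  field_simp [hne]

theorem exists_differentiableOn_cauchyTransform_eq {f : ℂ → ℂ} {r : ℝ} (hr : 0 < r)
    (hf : ContinuousOn f (sphere 0 r)) :
    ∃ F : ℂ → ℂ, DifferentiableOn ℂ F (ball 0 r⁻¹) ∧
      ∀ w, r < ‖w‖ → cauchyTransform f r w = -F w⁻¹ := by
  have hmaps : MapsTo (fun z : ℂ => z⁻¹) (sphere 0 r⁻¹) (sphere 0 r) := fun z hz => by
    rw [mem_sphere_zero_iff_norm] at hz ⊢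
    rw [norm_inv, hz, inv_inv]
  have hne : ∀ z ∈ sphere (0 : ℂ) r⁻¹, z ≠ 0 := fun z hz =>
    ne_of_mem_sphere hz (inv_pos.2 hr).ne'
  have hcont : ContinuousOn (fun z => f z⁻¹ / z) (sphere 0 r⁻¹) :=
    (hf.comp (continuousOn_id.inv₀ hne) hmaps).div continuousOn_id hne
  refine ⟨fun u => u * cauchyTransform (fun z => f z⁻¹ / z) r⁻¹ u,
    differentiableOn_id.mul (differentiableOn_cauchyTransform (inv_pos.2 hr) hcont),
    fun w hw => ?_⟩
  have hw0 : w ≠ 0 := norm_pos_iff.1 (hr.trans hw)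
  simp only [cauchyTransform]
  rw [circleIntegral_eq_circleIntegral_inv _ hr.ne', mul_left_comm, ← mul_neg]
  congr 1
  rw [← neg_mul, ← circleIntegral.integral_const_mul]
  refine circleIntegral.integral_congr (inv_pos.2 hr).le fun z hz => ?_
  have hz0 := hne z hz
  have hzw : z - w⁻¹ ≠ 0 := fun h => by
    rw [sub_eq_zero.1 h, mem_sphere_zero_iff_norm, norm_inv, inv_inj] at hz
    exact hw.ne' hz
  have hswap : z⁻¹ - w = -(w * (z - w⁻¹)) / z := by field_simp; ring
  rw [hswap]
  field_simp [hzw]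

theorem exists_laurent_decomposition {f : ℂ → ℂ} {r r₁ R : ℝ} (hr : 0 ≤ r) (hr₁ : r < r₁)
    (hR : r₁ < R) (hf : DifferentiableOn ℂ f {z | r < ‖z‖ ∧ ‖z‖ < R}) :
    ∃ A F : ℂ → ℂ, DifferentiableOn ℂ A (ball 0 R) ∧ DifferentiableOn ℂ F (ball 0 r₁⁻¹) ∧
      ∀ w, r₁ < ‖w‖ → ‖w‖ < R → f w = A w + F w⁻¹ := by
  have h₁ : 0 < r₁ := hr.trans_lt hr₁
  obtain ⟨r₂, h₁₂, h₂⟩ := exists_between hR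
  obtain ⟨F, hF, hFf⟩ := exists_differentiableOn_cauchyTransform_eq h₁
    (hf.continuousOn.mono (sphere_subset_annulus hr₁ hR))
  refine ⟨fun w => if r₁ < ‖w‖ then f w - F w⁻¹ else cauchyTransform f r₂ w, F, ?_, hF,
    fun w hw _ => by simp only [if_pos hw, sub_add_cancel]⟩
  have hinner : DifferentiableOn ℂ (cauchyTransform f r₂) (ball 0 r₂) :=
    differentiableOn_cauchyTransform (h₁.trans h₁₂)
      (hf.continuousOn.mono (sphere_subset_annulus (hr₁.trans h₁₂) h₂))
  intro w hwR
  rw [mem_ball_zero_iff] at hwR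
  refine DifferentiableAt.differentiableWithinAt ?_
  rcases lt_or_ge ‖w‖ r₂ with hw | hw
  · have hball : ball (0 : ℂ) r₂ ∈ 𝓝 w := isOpen_ball.mem_nhds (mem_ball_zero_iff.2 hw)
    refine (hinner.differentiableAt hball).congr_of_eventuallyEq ?_
    filter_upwards [hball] with z hz
    split_ifs with hz₁
    · rw [eq_cauchyTransform_sub_cauchyTransform hr hf hr₁ hz₁ (mem_ball_zero_iff.1 hz) h₂,
        hFf z hz₁, sub_neg_eq_add, add_sub_cancel_right]
    · rfl
  · have hw₁ : r₁ < ‖w‖ := h₁₂.trans_le hw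
    have houter : DifferentiableAt ℂ (fun z => f z - F z⁻¹) w := by
      refine (hf.differentiableAt ((isOpen_annulus r R).mem_nhds ⟨hr₁.trans hw₁, hwR⟩)).sub
        (DifferentiableAt.comp w (hF.differentiableAt (isOpen_ball.mem_nhds ?_))
          (differentiableAt_inv (norm_pos_iff.1 (h₁.trans hw₁))))
      rw [mem_ball_zero_iff, norm_inv]
      exact inv_strictAnti₀ h₁ hw₁
    refine houter.congr_of_eventuallyEq ?_
    filter_upwards [continuous_norm.continuousAt.eventually_const_lt hw₁] with z hz
    exact if_pos hz

theorem re_le_of_re_le_sphere {h : ℂ → ℂ} {ρ B : ℝ} (hρ : ρ ≠ 0)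
    (hh : ∀ q ∈ closedBall (0 : ℂ) ρ, DifferentiableAt ℂ h q)
    (hB : ∀ q ∈ sphere (0 : ℂ) ρ, (h q).re ≤ B) {q : ℂ} (hq : q ∈ closedBall (0 : ℂ) ρ) :
    (h q).re ≤ B := by
  have hexp : DifferentiableOn ℂ (fun q => exp (h q)) (closedBall 0 ρ) := fun q hq =>
    (hh q hq).cexp.differentiableWithinAt
  rw [← closure_ball 0 hρ] at hexp hq
  rw [← Real.exp_le_exp, ← norm_exp]
  refine Complex.norm_le_of_forall_mem_frontier_norm_le isBounded_ball hexp.diffContOnCl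
    (fun z hz => ?_) hq
  rw [frontier_ball 0 hρ] at hz
  rw [norm_exp]
  exact Real.exp_le_exp.2 (hB z hz)

theorem abs_re_le_of_abs_re_le_sphere {h : ℂ → ℂ} {ρ B : ℝ} (hρ : ρ ≠ 0)
    (hh : ∀ q ∈ closedBall (0 : ℂ) ρ, DifferentiableAt ℂ h q)
    (hB : ∀ q ∈ sphere (0 : ℂ) ρ, |(h q).re| ≤ B) {q : ℂ} (hq : q ∈ closedBall (0 : ℂ) ρ) :
    |(h q).re| ≤ B := by
  refine abs_le'.2 ⟨re_le_of_re_le_sphere hρ hh (fun z hz => (abs_le'.1 (hB z hz)).1) hq, ?_⟩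
  exact re_le_of_re_le_sphere hρ (fun z hz => (hh z hz).neg)
    (fun z hz => (abs_le'.1 (hB z hz)).2) hq

theorem norm_conj_div_sq_le {q : ℂ} {ρ : ℝ} (hρ : 0 < ρ) (hq : ‖q‖ ≤ ρ) :
    ‖conj q / ρ ^ 2‖ ≤ ρ⁻¹ := by
  rw [norm_div, RCLike.norm_conj, norm_pow, norm_real, Real.norm_of_nonneg hρ.le]
  calc ‖q‖ / ρ ^ 2 ≤ ρ / ρ ^ 2 := by gcongr
    _ = ρ⁻¹ := by field_simp

theorem inv_eq_conj_div_sq {q : ℂ} {ρ : ℝ} (hq : ‖q‖ = ρ) : q⁻¹ = conj q / ρ ^ 2 := by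
  rw [inv_def, ← hq, normSq_eq_norm_sq, div_eq_mul_inv, ofReal_inv, ofReal_pow]

theorem differentiableAt_conj_comp_conj_div {F : ℂ → ℂ} {c q : ℂ}
    (hF : DifferentiableAt ℂ F (conj q / c)) :
    DifferentiableAt ℂ (fun q => conj (F (conj q / c))) q := by
  have hcomp : DifferentiableAt ℂ (fun z => F (z / c)) (conj q) :=
    DifferentiableAt.comp (conj q) hF (differentiableAt_id.div_const c)
  simpa [Function.comp_def] using hcomp.conj_conj

/-- In the Laurent splitting `L q = A q + F q⁻¹`, the correction `-A q + conj (F (conj q / ρ ^ 2))`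
turns `L` into `F q⁻¹ + conj (F q⁻¹)` on the circle of radius `ρ`. -/
theorem exists_differentiableAt_im_add_eq_zero {L : ℂ → ℂ} {r N : ℝ} (hr : 0 ≤ r) (hr1 : r < 1)
    (hL : DifferentiableOn ℂ L {z | r < ‖z‖ ∧ ‖z‖ < 1})
    (hN : ∀ z, r < ‖z‖ → ‖z‖ < 1 → |(L z).re| ≤ N) :
    ∃ B, ∀ᶠ ρ in 𝓝[<] (1 : ℝ), ∃ h : ℂ → ℂ,
      (∀ q ∈ closedBall (0 : ℂ) ρ, DifferentiableAt ℂ h q) ∧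
      (∀ q ∈ sphere (0 : ℂ) ρ, (L q + h q).im = 0) ∧
      ∀ q ∈ closedBall (0 : ℂ) ρ, |(h q).re| ≤ B := by
  obtain ⟨r₁, hr₁, hr₁1⟩ := exists_between hr1
  obtain ⟨r₂, hr₂, hr₂1⟩ := exists_between hr₁1
  have h₁ : 0 < r₁ := hr.trans_lt hr₁
  obtain ⟨A, F, hA, hF, hLAF⟩ := exists_laurent_decomposition hr hr₁ hr₁1 hL
  obtain ⟨C, hC⟩ := (isCompact_closedBall (0 : ℂ) r₂⁻¹).exists_bound_of_continuousOn
    (hF.continuousOn.mono (closedBall_subset_ball (inv_strictAnti₀ h₁ hr₂)))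
  refine ⟨2 * C + N, ?_⟩
  filter_upwards [Ioo_mem_nhdsLT hr₂1] with ρ ⟨hρr, hρ1⟩
  have hρ : 0 < ρ := (h₁.trans hr₂).trans hρr
  have hrefl : ∀ q ∈ closedBall (0 : ℂ) ρ, ‖conj q / ρ ^ 2‖ ≤ r₂⁻¹ := fun q hq =>
    (norm_conj_div_sq_le hρ (mem_closedBall_zero_iff.1 hq)).trans
      (inv_anti₀ (h₁.trans hr₂) hρr.le)
  have hdiff : ∀ q ∈ closedBall (0 : ℂ) ρ,
      DifferentiableAt ℂ (fun q => -A q + conj (F (conj q / ρ ^ 2))) q := fun q hq => by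
    have hAq := hA.differentiableAt (isOpen_ball.mem_nhds (closedBall_subset_ball hρ1 hq))
    have hFq := hF.differentiableAt (isOpen_ball.mem_nhds
      (mem_ball_zero_iff.2 ((hrefl q hq).trans_lt (inv_strictAnti₀ h₁ hr₂))))
    exact hAq.neg.add (differentiableAt_conj_comp_conj_div hFq)
  have hsphere : ∀ q ∈ sphere (0 : ℂ) ρ,
      L q + (-A q + conj (F (conj q / ρ ^ 2))) = F (conj q / ρ ^ 2) + conj (F (conj q / ρ ^ 2)) :=
    fun q hq => by
    have hqρ : ‖q‖ = ρ := mem_sphere_zero_iff_norm.1 hq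
    rw [hLAF q (hqρ ▸ hr₂.trans hρr) (hqρ ▸ hρ1), inv_eq_conj_div_sq hqρ]
    ring
  refine ⟨_, hdiff, fun q hq => by rw [hsphere q hq]; simp, fun q hq =>
    abs_re_le_of_abs_re_le_sphere hρ.ne' hdiff (fun z hz => ?_) hq⟩
  have hzρ : ‖z‖ = ρ := mem_sphere_zero_iff_norm.1 hz
  have hre := congrArg re (hsphere z hz)
  rw [add_re, add_re (F _), conj_re, ← eq_sub_iff_add_eq'] at hre
  have hFz := (abs_re_le_norm _).trans
    (hC _ (mem_closedBall_zero_iff.2 (hrefl z (sphere_subset_closedBall hz))))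
  have hLz := hN z (hzρ ▸ hr₁.trans (hr₂.trans hρr)) (hzρ ▸ hρ1)
  rw [hre, two_mul]
  exact (abs_sub _ _).trans (add_le_add ((abs_add_le _ _).trans (add_le_add hFz hFz)) hLz)

/-! ### Cube roots near the positive axis -/

theorem arg_cpow_nat_inv {z : ℂ} (hz : z ≠ 0) {n : ℕ} (hn : n ≠ 0) :
    (z ^ (n : ℂ)⁻¹).arg = z.arg / n := by
  have hn1 : (1 : ℝ) ≤ n := by exact_mod_cast Nat.one_le_iff_ne_zero.2 hn
  have him : (log z * (n : ℂ)⁻¹).im = z.arg / n := by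
    rw [← div_eq_mul_inv, div_natCast_im, log_im]
  have habs : |z.arg / n| ≤ |z.arg| := by
    rw [abs_div, Nat.abs_cast]
    exact div_le_self (abs_nonneg _) hn1
  rw [cpow_def_of_ne_zero hz, ← log_im, log_exp, him]
  · rw [him, lt_div_iff₀ (by positivity)]
    nlinarith [neg_pi_lt_arg z, Real.pi_pos]
  · rw [him]
    exact (le_abs_self _).trans (habs.trans (abs_arg_le_pi z))

theorem arg_pow_of_abs_arg_lt {w : ℂ} (hw : w ≠ 0) {n : ℕ} (hn : n ≠ 0)
    (h : |w.arg| < Real.pi / n) : (w ^ n).arg = n * w.arg := by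
  have hroot := pow_cpow_nat_inv hn (abs_lt.1 h).1 (abs_lt.1 h).2.le
  have harg := arg_cpow_nat_inv (pow_ne_zero n hw) hn
  rw [hroot] at harg
  rw [harg, mul_div_cancel₀ _ (Nat.cast_ne_zero.2 hn)]

theorem im_pow_nonpos {m : ℂ} {n : ℕ} (hn : -Real.pi ≤ n * m.arg) (hm : m.arg ≤ 0) :
    (m ^ n).im ≤ 0 := by
  rw [← norm_mul_exp_arg_mul_I m, mul_pow, ← exp_nat_mul, ← ofReal_pow, im_ofReal_mul,
    ← mul_assoc, ← ofReal_natCast, ← ofReal_mul, exp_ofReal_mul_I_im]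
  exact mul_nonpos_of_nonneg_of_nonpos (by positivity)
    (Real.sin_nonpos_of_nonpos_of_neg_pi_le
      (mul_nonpos_of_nonneg_of_nonpos n.cast_nonneg hm) hn)

theorem one_add_re_pos {s : ℂ} (hs : ‖s‖ < 1) : 0 < (1 + s).re := by
  rw [add_re, one_re]
  linarith [neg_le_of_abs_le (abs_re_le_norm s)]

theorem abs_arg_one_add_le {s : ℂ} (hs : ‖s‖ < 1) : |(1 + s).arg| ≤ Real.arcsin ‖s‖ := by
  have hre := one_add_re_pos hs
  have hpos : 0 < ‖1 + s‖ := norm_pos_iff.2 fun h => by simp [h] at hre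
  have him : |(1 + s).im / ‖1 + s‖| ≤ ‖s‖ := by
    rw [abs_div, abs_norm, div_le_iff₀ hpos]
    refine abs_le_of_sq_le_sq ?_ (by positivity)
    rw [mul_pow, ← normSq_eq_norm_sq, ← normSq_eq_norm_sq, normSq_apply, normSq_apply,
      add_re, add_im, one_re, one_im]
    nlinarith [sq_nonneg (s.re + (s.re ^ 2 + s.im ^ 2))]
  rw [arg_of_re_nonneg hre.le, abs_le, ← Real.arcsin_neg]
  exact ⟨Real.monotone_arcsin (abs_le.1 him).1, Real.monotone_arcsin (abs_le.1 him).2⟩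

theorem sqrt_three_div_two_lt_one : Real.sqrt 3 / 2 < 1 := by
  rw [div_lt_one two_pos, Real.sqrt_lt' two_pos]
  norm_num

theorem abs_arg_one_add_lt_pi_div_three {s : ℂ} (hs : ‖s‖ < Real.sqrt 3 / 2) :
    |(1 + s).arg| < Real.pi / 3 := by
  have h1 := sqrt_three_div_two_lt_one
  refine (abs_arg_one_add_le (hs.trans h1)).trans_lt ?_
  calc Real.arcsin ‖s‖ < Real.arcsin (Real.sqrt 3 / 2) :=
        Real.arcsin_lt_arcsin (by linarith [norm_nonneg s]) hs h1.le
    _ = Real.pi / 3 := by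
        rw [← Real.sin_pi_div_three, Real.arcsin_sin] <;> linarith [Real.pi_pos]

/-! ### The planar domain -/

/-- The domain of the parameter `x = z ^ 3 / (v ^ 3 - z ^ 3)` that avoids the values taken at the
points with `v = z + s * z` for a slope `s` of modulus at most `t`. -/
def slopeDomain (t : ℝ) : Set ℂ :=
  {x | ∀ s : ℂ, ‖s‖ ≤ t → x * ((1 + s) ^ 3 - 1) ≠ 1}

/-- The solution `s` of `x * ((1 + s) ^ 3 - 1) = 1` given by the principal cube root. -/
noncomputable def principalSlope (x : ℂ) : ℂ :=
  (1 + x⁻¹) ^ (((3 : ℕ) : ℂ)⁻¹) - 1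

theorem one_add_principalSlope_pow_three (x : ℂ) : (1 + principalSlope x) ^ 3 = 1 + x⁻¹ := by
  rw [principalSlope, add_sub_cancel, cpow_nat_inv_pow _ three_ne_zero]

theorem principalSlope_eq_of_mul_eq_one {s x : ℂ} (hs : ‖s‖ < Real.sqrt 3 / 2)
    (hx : x * ((1 + s) ^ 3 - 1) = 1) :
    principalSlope x = s ∧ x ≠ 0 ∧ 1 + x⁻¹ ∈ slitPlane := by
  have hx0 : x ≠ 0 := left_ne_zero_of_mul_eq_one hx
  have hcube : 1 + x⁻¹ = (1 + s) ^ 3 := by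
    field_simp
    linear_combination -hx
  have harg : |(1 + s).arg| < Real.pi / (3 : ℕ) := by
    exact_mod_cast abs_arg_one_add_lt_pi_div_three hs
  have hne : 1 + s ≠ 0 := fun h => by
    have := one_add_re_pos (hs.trans sqrt_three_div_two_lt_one)
    simp [h] at this
  refine ⟨?_, hx0, ?_⟩
  · rw [principalSlope, hcube,
      pow_cpow_nat_inv three_ne_zero (abs_lt.1 harg).1 (abs_lt.1 harg).2.le, add_sub_cancel_left]
  · rw [hcube, mem_slitPlane_iff_arg, arg_pow_of_abs_arg_lt hne three_ne_zero harg]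
    push_cast at harg ⊢
    exact ⟨by linarith [(abs_lt.1 harg).2], pow_ne_zero 3 hne⟩

theorem notMem_slopeDomain_of_norm_principalSlope_le {t : ℝ} {x : ℂ} (hx : x ≠ 0)
    (h : ‖principalSlope x‖ ≤ t) : x ∉ slopeDomain t := fun hmem => by
  refine hmem _ h ?_
  rw [one_add_principalSlope_pow_three, add_sub_cancel_left, mul_inv_cancel₀ hx]

theorem notMem_slopeDomain_iff {t : ℝ} (ht : t < Real.sqrt 3 / 2) {x : ℂ} :
    x ∉ slopeDomain t ↔ (x ≠ 0 ∧ 1 + x⁻¹ ∈ slitPlane) ∧ ‖principalSlope x‖ ≤ t := by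
  refine ⟨fun h => ?_, fun h => notMem_slopeDomain_of_norm_principalSlope_le h.1.1 h.2⟩
  simp only [slopeDomain, mem_ofPred_eq, not_forall, not_not, exists_prop] at h
  obtain ⟨s, hs, hx⟩ := h
  obtain ⟨hslope, hmem⟩ := principalSlope_eq_of_mul_eq_one (hs.trans_lt ht) hx
  exact ⟨hmem, hslope ▸ hs⟩

theorem zero_mem_slopeDomain (t : ℝ) : (0 : ℂ) ∈ slopeDomain t := fun s _ => by simp

theorem conj_mem_slopeDomain {t : ℝ} {x : ℂ} (hx : x ∈ slopeDomain t) :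
    conj x ∈ slopeDomain t := fun s hs h => by
  refine hx (conj s) (by rwa [RCLike.norm_conj]) ?_
  simpa using congrArg conj h

theorem isOpen_slopeDomain (t : ℝ) : IsOpen (slopeDomain t) := by
  refine isOpen_iff_mem_nhds.2 fun x hx => ?_
  have hcont : Continuous fun p : ℂ × ℂ => p.1 * ((1 + p.2) ^ 3 - 1) := by fun_prop
  filter_upwards [(isCompact_closedBall (0 : ℂ) t).eventually_forall_of_forall_eventually
    (P := fun x s => x * ((1 + s) ^ 3 - 1) ≠ 1) fun s hs =>
      hcont.continuousAt.eventually_ne (hx s (mem_closedBall_zero_iff.1 hs))] with y hy s hs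
  exact hy s (mem_closedBall_zero_iff.2 hs)

theorem isBounded_slopeDomain {t : ℝ} (ht : 0 < t) : Bornology.IsBounded (slopeDomain t) := by
  have hM : Tendsto (fun x : ℂ => 1 + x⁻¹) (Bornology.cobounded ℂ) (𝓝 1) := by
    simpa using (tendsto_inv₀_cobounded (α := ℂ)).const_add 1
  have hslope : Tendsto principalSlope (Bornology.cobounded ℂ) (𝓝 0) := by
    have h := (hM.cpow (tendsto_const_nhds (x := ((3 : ℕ) : ℂ)⁻¹)) one_mem_slitPlane).sub_const 1
    rwa [one_cpow, sub_self] at h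
  rw [Bornology.isBounded_def]
  filter_upwards [Bornology.eventually_ne_cobounded (0 : ℂ),
    hslope.norm.eventually (gt_mem_nhds (by simpa using ht))] with x hx0 hxt
  exact notMem_slopeDomain_of_norm_principalSlope_le hx0 hxt.le

theorem hasDerivAt_principalSlope {x : ℂ} (hx : x ≠ 0) (hM : 1 + x⁻¹ ∈ slitPlane) :
    HasDerivAt principalSlope
      (-((1 + principalSlope x) ^ 3 - 1) ^ 2 / (3 * (1 + principalSlope x) ^ 2)) x := by
  have hderiv := (((hasDerivAt_inv hx).const_add 1).cpow_const
    (c := (((3 : ℕ) : ℂ)⁻¹)) hM).sub_const 1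
  refine hderiv.congr_deriv ?_
  have hm : (1 + principalSlope x) ≠ 0 := fun h => slitPlane_ne_zero hM
    (by rw [← one_add_principalSlope_pow_three, h, zero_pow three_ne_zero])
  have hroot : (1 + x⁻¹) ^ (((3 : ℕ) : ℂ)⁻¹) = 1 + principalSlope x := by
    rw [principalSlope, add_sub_cancel]
  rw [cpow_sub _ _ (slitPlane_ne_zero hM), cpow_one, hroot, one_add_principalSlope_pow_three,
    add_sub_cancel_left, ← one_add_principalSlope_pow_three x]
  push_cast
  field_simp

theorem im_cubic_sub_inv_nonpos {m : ℂ} (h₁ : -(Real.pi / 3) ≤ m.arg) (h₂ : m.arg ≤ 0) :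
    (m ^ 3 + m ^ 2 + m - 1 - m⁻¹ - (m ^ 2)⁻¹).im ≤ 0 := by
  have hpow : ∀ n ≤ 3, (m ^ n).im ≤ 0 := fun n hn => by
    have hn' : (n : ℝ) ≤ 3 := by exact_mod_cast hn
    exact im_pow_nonpos (by nlinarith) h₂
  have hinv : ∀ n ≤ 3, 0 ≤ ((m ^ n)⁻¹).im := fun n hn => by
    rw [inv_im]
    exact div_nonneg (neg_nonneg.2 (hpow n hn)) (normSq_nonneg _)
  have h1 := hpow 1 (by norm_num)
  have h1' := hinv 1 (by norm_num)
  rw [pow_one] at h1 h1'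
  simp only [add_im, sub_im, one_im]
  linarith [hpow 3 le_rfl, hpow 2 (by norm_num), hinv 2 (by norm_num)]

theorem inner_mul_I_nonpos {m : ℂ} (hm : m ≠ 0) (h₁ : -(Real.pi / 3) ≤ m.arg)
    (h₂ : m.arg ≤ 0) : inner ℝ (m - 1) (-(m ^ 3 - 1) ^ 2 / (3 * m ^ 2) * I) ≤ 0 := by
  have hfactor : -(m ^ 3 - 1) ^ 2 / (3 * m ^ 2) * I * conj (m - 1) =
      ((normSq (m - 1) / 3 : ℝ) : ℂ) *
        (-I * (m ^ 3 + m ^ 2 + m - 1 - m⁻¹ - (m ^ 2)⁻¹)) := by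
    push_cast
    rw [normSq_eq_conj_mul_self]
    field_simp
    ring
  rw [Complex.inner, hfactor, re_ofReal_mul, neg_mul, neg_re, I_mul_re, neg_neg]
  exact mul_nonpos_of_nonneg_of_nonpos (by have := normSq_nonneg (m - 1); positivity)
    (im_cubic_sub_inv_nonpos h₁ h₂)

theorem arg_one_add_principalSlope {x : ℂ} (hM : 1 + x⁻¹ ≠ 0) :
    (1 + principalSlope x).arg = (1 + x⁻¹).arg / 3 := by
  rw [principalSlope, add_sub_cancel, arg_cpow_nat_inv hM three_ne_zero, Nat.cast_ofNat]

theorem im_one_add_inv_neg {x : ℂ} (hx : 0 < x.im) : (1 + x⁻¹).im < 0 := by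
  have hne : x ≠ 0 := fun h => by simp [h] at hx
  rw [add_im, one_im, zero_add, inv_im]
  exact div_neg_of_neg_of_pos (neg_neg_of_pos hx) (normSq_pos.2 hne)

theorem inner_principalSlope_nonpos {x : ℂ} (hx : 0 < x.im) :
    inner ℝ (principalSlope x)
      (-((1 + principalSlope x) ^ 3 - 1) ^ 2 / (3 * (1 + principalSlope x) ^ 2) * I) ≤ 0 := by
  have him := im_one_add_inv_neg hx
  have hM : 1 + x⁻¹ ≠ 0 := fun h => by simp [h] at him
  have hm : 1 + principalSlope x ≠ 0 := fun h =>
    hM (by rw [← one_add_principalSlope_pow_three, h, zero_pow three_ne_zero])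
  have harg := arg_one_add_principalSlope hM
  have hinner := inner_mul_I_nonpos hm (by linarith [neg_pi_lt_arg (1 + x⁻¹)])
    (by linarith [arg_neg_iff.2 him])
  rwa [add_sub_cancel_left] at hinner

theorem norm_principalSlope_vertical_le {a b c : ℝ} (hb : 0 ≤ b) (hbc : b ≤ c)
    (h : (a + b * I : ℂ) ≠ 0 ∧ 1 + (a + b * I : ℂ)⁻¹ ∈ slitPlane) :
    ‖principalSlope (a + c * I)‖ ≤ ‖principalSlope (a + b * I)‖ := by
  have him : ∀ y : ℝ, (a + y * I : ℂ).im = y := fun y => by simp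
  have hslit : ∀ y ≥ b, (a + y * I : ℂ) ≠ 0 ∧ 1 + (a + y * I : ℂ)⁻¹ ∈ slitPlane := by
    intro y hy
    rcases hy.eq_or_lt with rfl | hy
    · exact h
    · have hpos : 0 < (a + y * I : ℂ).im := (him y).symm ▸ hb.trans_lt hy
      exact ⟨fun h => by simp [h] at hpos, Or.inr (im_one_add_inv_neg hpos).ne⟩
  have hline : ∀ y : ℝ, HasDerivAt (fun y : ℝ => (a + y * I : ℂ)) I y := fun y => by
    simpa using ((hasDerivAt_id y).ofReal_comp.mul_const I).const_add (a : ℂ)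
  have hderiv := fun y (hy : b ≤ y) =>
    ((hasDerivAt_principalSlope (hslit y hy).1 (hslit y hy).2).comp y (hline y)).norm_sq
  have hanti : AntitoneOn (fun y : ℝ => ‖principalSlope (a + y * I)‖ ^ 2) (Ici b) := by
    refine antitoneOn_of_deriv_nonpos (convex_Ici b)
      (fun y hy => (hderiv y hy).continuousAt.continuousWithinAt) (fun y hy => ?_) fun y hy => ?_
    · rw [interior_Ici] at hy
      exact (hderiv y (le_of_lt hy)).differentiableAt.differentiableWithinAt
    · rw [interior_Ici, mem_Ioi] at hy
      exact (hderiv y hy.le).deriv.trans_le (mul_nonpos_of_nonneg_of_nonpos zero_le_two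
        (inner_principalSlope_nonpos ((him y).symm ▸ hb.trans_lt hy)))
  exact le_of_sq_le_sq (hanti self_mem_Ici hbc hbc) (norm_nonneg _)

theorem re_add_mul_im_mem_slopeDomain_of_nonneg {t : ℝ} (ht : t < Real.sqrt 3 / 2) {x : ℂ}
    (hx : x ∈ slopeDomain t) (him : 0 ≤ x.im) {τ : ℝ} (hτ : τ ∈ Icc (0 : ℝ) 1) :
    (x.re + (τ * x.im : ℝ) * I : ℂ) ∈ slopeDomain t := by
  by_contra hnot
  obtain ⟨hne, hle⟩ := (notMem_slopeDomain_iff ht).1 hnot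
  have hvert := norm_principalSlope_vertical_le (mul_nonneg hτ.1 him)
    (mul_le_of_le_one_left him hτ.2) hne
  rw [re_add_im] at hvert
  have hx0 : x ≠ 0 := fun h => hne.1 (by simp [h])
  exact notMem_slopeDomain_of_norm_principalSlope_le hx0 (hvert.trans hle) hx

theorem re_add_mul_im_mem_slopeDomain {t : ℝ} (ht : t < Real.sqrt 3 / 2) {x : ℂ}
    (hx : x ∈ slopeDomain t) {τ : ℝ} (hτ : τ ∈ Icc (0 : ℝ) 1) :
    (x.re + (τ * x.im : ℝ) * I : ℂ) ∈ slopeDomain t := by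
  rcases le_total 0 x.im with him | him
  · exact re_add_mul_im_mem_slopeDomain_of_nonneg ht hx him hτ
  · simpa using conj_mem_slopeDomain (re_add_mul_im_mem_slopeDomain_of_nonneg ht
      (conj_mem_slopeDomain hx) (by simpa using him) hτ)

theorem principalSlope_conj {x : ℂ} (hM : 1 + x⁻¹ ∈ slitPlane) :
    principalSlope (conj x) = conj (principalSlope x) := by
  have hconj : 1 + (conj x)⁻¹ = conj (1 + x⁻¹) := by simp
  rw [principalSlope, principalSlope, hconj, conj_cpow _ _ (mem_slitPlane_iff_arg.1 hM).1,
    map_inv₀, map_natCast, map_sub, map_one]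

theorem exists_mul_cube_sub_one_eq {a τ r : ℝ} (hτ : τ ∈ Icc (0 : ℝ) 1)
    (h : τ * a * ((1 + r) ^ 3 - 1) = 1) : ∃ r', |r'| ≤ |r| ∧ a * ((1 + r') ^ 3 - 1) = 1 := by
  have hcont : ContinuousOn (fun s : ℝ => (1 + s) ^ 3 - 1) (uIcc 0 r) := by fun_prop
  have hmem : τ * ((1 + r) ^ 3 - 1) ∈ uIcc ((1 + (0 : ℝ)) ^ 3 - 1) ((1 + r) ^ 3 - 1) := by
    rw [add_zero, one_pow, sub_self, mem_uIcc]
    rcases le_total 0 ((1 + r) ^ 3 - 1) with hr | hr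
    · exact Or.inl ⟨mul_nonneg hτ.1 hr, mul_le_of_le_one_left hr hτ.2⟩
    · exact Or.inr ⟨le_mul_of_le_one_left hr hτ.2, mul_nonpos_of_nonneg_of_nonpos hτ.1 hr⟩
  obtain ⟨r', hr', hr'τ : (1 + r') ^ 3 - 1 = _⟩ := intermediate_value_uIcc hcont hmem
  refine ⟨r', by simpa using abs_sub_left_of_mem_uIcc hr', ?_⟩
  rw [hr'τ]
  linarith

theorem mul_ofReal_mem_slopeDomain {t : ℝ} (ht : t < Real.sqrt 3 / 2) {a : ℝ}
    (ha : (a : ℂ) ∈ slopeDomain t) {τ : ℝ} (hτ : τ ∈ Icc (0 : ℝ) 1) :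
    ((τ * a : ℝ) : ℂ) ∈ slopeDomain t := by
  intro s hs hx
  obtain ⟨hslope, -, hM⟩ := principalSlope_eq_of_mul_eq_one (hs.trans_lt ht) hx
  have hreal : conj s = s := by
    rw [← hslope, ← principalSlope_conj hM, conj_ofReal]
  obtain ⟨r, rfl⟩ := conj_eq_iff_real.1 hreal
  obtain ⟨r', hr', har'⟩ := exists_mul_cube_sub_one_eq (r := r) hτ (by exact_mod_cast hx)
  refine ha r' ?_ (by exact_mod_cast har')
  rw [norm_real, Real.norm_eq_abs] at hs ⊢
  exact hr'.trans hs

/-- The set is first contracted vertically onto its real part, then along the real axis to `0`. -/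
theorem isSimplyConnected_of_vertical_contraction {S : Set ℂ} (h0 : (0 : ℂ) ∈ S)
    (hvert : ∀ x ∈ S, ∀ τ ∈ Icc (0 : ℝ) 1, (x.re + (τ * x.im : ℝ) * I : ℂ) ∈ S)
    (hreal : ∀ a : ℝ, (a : ℂ) ∈ S → ∀ τ ∈ Icc (0 : ℝ) 1, ((τ * a : ℝ) : ℂ) ∈ S) :
    IsSimplyConnected S := by
  have hmem : ∀ (τ : unitInterval) (x : S), ((min 1 (2 - 2 * (τ : ℝ)) * (x : ℂ).re : ℝ) +
      (max 0 (1 - 2 * (τ : ℝ)) * (x : ℂ).im : ℝ) * I : ℂ) ∈ S := by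
    intro τ x
    have hτ0 := τ.2.1
    have hτ1 := τ.2.2
    rcases le_total (τ : ℝ) (1 / 2) with h | h
    · rw [min_eq_left (by linarith), max_eq_right (by linarith), one_mul]
      exact hvert x x.2 _ ⟨by linarith, by linarith⟩
    · have hre : ((x : ℂ).re : ℂ) ∈ S := by simpa using hvert x x.2 0 ⟨le_rfl, zero_le_one⟩
      rw [min_eq_right (by linarith), max_eq_left (by linarith), zero_mul, ofReal_zero, zero_mul,
        add_zero]
      exact hreal _ hre _ ⟨by linarith, by linarith⟩
  have hcontr : ContractibleSpace S := by
    rw [contractible_iff_id_nullhomotopic]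
    exact ⟨⟨0, h0⟩, ⟨{
      toFun := fun p => ⟨_, hmem p.1 p.2⟩
      continuous_toFun := Continuous.subtype_mk (by fun_prop) _
      map_zero_left := fun x => Subtype.ext (by simp)
      map_one_left := fun x => Subtype.ext (by simp) }⟩⟩
  exact (inferInstance : SimplyConnectedSpace S)

theorem isSimplyConnected_slopeDomain {t : ℝ} (ht : t < Real.sqrt 3 / 2) :
    IsSimplyConnected (slopeDomain t) :=
  isSimplyConnected_of_vertical_contraction (zero_mem_slopeDomain t)
    (fun _ hx _ hτ => re_add_mul_im_mem_slopeDomain ht hx hτ)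
    fun _ ha _ hτ => mul_ofReal_mem_slopeDomain ht ha hτ

theorem isOpen_norm_principalSlope_lt (c : ℝ) :
    IsOpen {x : ℂ | (x ≠ 0 ∧ 1 + x⁻¹ ∈ slitPlane) ∧ ‖principalSlope x‖ < c} := by
  refine isOpen_iff_mem_nhds.2 fun x ⟨⟨hx, hM⟩, hc⟩ => ?_
  have hcont : ContinuousAt (fun x : ℂ => 1 + x⁻¹) x :=
    continuousAt_const.add (continuousAt_inv₀ hx)
  filter_upwards [eventually_ne_nhds hx, hcont.eventually_mem (isOpen_slitPlane.mem_nhds hM),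
    (hasDerivAt_principalSlope hx hM).continuousAt.norm.eventually_lt_const hc] with y hy hyM hyc
  exact ⟨⟨hy, hyM⟩, hyc⟩

theorem exists_isCompact_norm_principalSlope_lt {t ε : ℝ} (ht0 : 0 < t)
    (ht : t < Real.sqrt 3 / 2) (hε : 0 < ε) :
    ∃ K, IsCompact K ∧ K ⊆ slopeDomain t ∧ ∀ x ∈ slopeDomain t, x ∉ K →
      (x ≠ 0 ∧ 1 + x⁻¹ ∈ slitPlane) ∧ ‖principalSlope x‖ < t + ε := by
  obtain ⟨B, hB⟩ := (isBounded_slopeDomain ht0).subset_closedBall 0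
  refine ⟨closedBall 0 B \ {x | (x ≠ 0 ∧ 1 + x⁻¹ ∈ slitPlane) ∧ ‖principalSlope x‖ < t + ε},
    (isCompact_closedBall 0 B).diff (isOpen_norm_principalSlope_lt _), fun x hx => ?_,
    fun x hx hxK => by_contra fun h => hxK ⟨hB hx, h⟩⟩
  by_contra hxU
  obtain ⟨hne, hle⟩ := (notMem_slopeDomain_iff ht).1 hxU
  exact hx.2 ⟨hne, hle.trans_lt (lt_add_of_pos_right t hε)⟩

/-! ### Analytic discs attached to nearby cubed planes -/

/-- Boundary values of a Riemann parametrization `q ↦ q * exp (κ q)` of the slope domain: near the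
unit circle, `s` is the slope of the parameter, and its modulus tends to `t` at the circle. -/
structure IsBoundaryModel (t r₀ : ℝ) (κ s : ℂ → ℂ) : Prop where
  pos : 0 < r₀
  lt_one : r₀ < 1
  differentiableOn_log : DifferentiableOn ℂ κ (ball 0 1)
  differentiableOn_slope : DifferentiableOn ℂ s {q | r₀ < ‖q‖ ∧ ‖q‖ < 1}
  mul_slope_eq : ∀ q, r₀ < ‖q‖ → ‖q‖ < 1 → q * exp (κ q) * ((1 + s q) ^ 3 - 1) = 1
  lt_norm_slope : ∀ q, r₀ < ‖q‖ → ‖q‖ < 1 → t < ‖s q‖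
  norm_slope_lt : ∀ q, r₀ < ‖q‖ → ‖q‖ < 1 → ‖s q‖ < Real.sqrt 3 / 2
  norm_slope_tendsto : ∀ ε > 0, ∀ᶠ ρ in 𝓝[<] (1 : ℝ), ∀ q ∈ sphere (0 : ℂ) ρ, ‖s q‖ < t + ε

theorem exists_eq_mul_exp {x : ℂ → ℂ} (hx : DifferentiableOn ℂ x (ball 0 1))
    (hinj : InjOn x (ball 0 1)) (hx0 : x 0 = 0) (hderiv : deriv x 0 ≠ 0) :
    ∃ κ : ℂ → ℂ, DifferentiableOn ℂ κ (ball 0 1) ∧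
      ∀ q ∈ ball (0 : ℂ) 1, x q = q * exp (κ q) := by
  have h0 : (0 : ℂ) ∈ ball (0 : ℂ) 1 := mem_ball_self one_pos
  have hslope : ∀ q ∈ ball (0 : ℂ) 1, dslope x 0 q ≠ 0 := fun q hq => by
    rcases eq_or_ne q 0 with rfl | hq0
    · rwa [dslope_same]
    · rw [dslope_of_ne _ hq0, slope_def_field, hx0, sub_zero, sub_zero]
      exact div_ne_zero (fun h => hq0 (hinj hq h0 (h.trans hx0.symm))) hq0
  have hball : IsSimplyConnected (ball (0 : ℂ) 1) :=
    have := (convex_ball (0 : ℂ) 1).contractibleSpace ⟨0, h0⟩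
    SimplyConnectedSpace.ofContractible _
  obtain ⟨κ, hκ, hexp⟩ := exists_differentiableOn_exp_eq isOpen_ball hball
    ((Complex.differentiableOn_dslope (ball_mem_nhds 0 one_pos)).2 hx) hslope
  refine ⟨κ, hκ, fun q hq => ?_⟩
  have hsub := sub_smul_dslope x 0 q
  rw [hx0, sub_zero, sub_zero, smul_eq_mul] at hsub
  rw [hexp q hq, hsub]

theorem exists_isBoundaryModel {t : ℝ} (ht0 : 0 < t) (ht : t < Real.sqrt 3 / 2) :
    ∃ r₀ κ s, IsBoundaryModel t r₀ κ s := by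
  obtain ⟨x, hx, hbij, hx0, hderiv, hproper⟩ := exists_riemann_parametrization
    (isOpen_slopeDomain t) (isSimplyConnected_slopeDomain ht) (isBounded_slopeDomain ht0)
    (zero_mem_slopeDomain t)
  obtain ⟨κ, hκ, hxκ⟩ := exists_eq_mul_exp hx hbij.injOn hx0 hderiv
  have hnear : ∀ ε > 0, ∃ r < 1, ∀ q, r < ‖q‖ → ‖q‖ < 1 →
      (x q ≠ 0 ∧ 1 + (x q)⁻¹ ∈ slitPlane) ∧ ‖principalSlope (x q)‖ < t + ε := by
    intro ε hε
    obtain ⟨K, hK, hKU, hslope⟩ := exists_isCompact_norm_principalSlope_lt ht0 ht hε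
    obtain ⟨r, hr, hrK⟩ := hproper K hK hKU
    refine ⟨r, hr, fun q hq hq1 => ?_⟩
    have hqball : q ∈ ball (0 : ℂ) 1 := mem_ball_zero_iff.2 hq1
    exact hslope _ (hbij.mapsTo hqball) fun h => (hrK q hqball h).not_gt hq
  obtain ⟨r, hr, hslope⟩ := hnear (Real.sqrt 3 / 2 - t) (sub_pos.2 ht)
  refine ⟨max r (1 / 2), κ, principalSlope ∘ x, by positivity, max_lt hr one_half_lt_one, hκ,
    fun q hq => ?_, fun q hq hq1 => ?_, fun q hq hq1 => ?_, fun q hq hq1 => ?_, fun ε hε => ?_⟩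
  · obtain ⟨⟨hne, hM⟩, -⟩ := hslope q (max_lt_iff.1 hq.1).1 hq.2
    exact ((hasDerivAt_principalSlope hne hM).differentiableAt.comp q (hx.differentiableAt
      (isOpen_ball.mem_nhds (mem_ball_zero_iff.2 hq.2)))).differentiableWithinAt
  · obtain ⟨⟨hne, -⟩, -⟩ := hslope q (max_lt_iff.1 hq).1 hq1
    rw [← hxκ q (mem_ball_zero_iff.2 hq1), Function.comp_apply, one_add_principalSlope_pow_three,
      add_sub_cancel_left, mul_inv_cancel₀ hne]
  · obtain ⟨⟨hne, -⟩, -⟩ := hslope q (max_lt_iff.1 hq).1 hq1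
    exact not_le.1 fun h => notMem_slopeDomain_of_norm_principalSlope_le hne h
      (hbij.mapsTo (mem_ball_zero_iff.2 hq1))
  · simpa using (hslope q (max_lt_iff.1 hq).1 hq1).2
  · obtain ⟨r', hr', hslope'⟩ := hnear ε hε
    filter_upwards [Ioo_mem_nhdsLT hr'] with ρ hρ q hq
    rw [mem_sphere_zero_iff_norm] at hq
    exact (hslope' q (hq ▸ hρ.1) (hq ▸ hρ.2)).2

theorem re_one_add_add_sq_div_pos {s : ℂ} (hs : ‖s‖ < Real.sqrt 3 / 2) :
    0 < (3 * (1 + s + s ^ 2 / 3)).re := by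
  have hsq : ‖s‖ ^ 2 < (Real.sqrt 3 / 2) ^ 2 := by gcongr
  rw [div_pow, Real.sq_sqrt zero_le_three, ← normSq_eq_norm_sq, normSq_apply] at hsq
  have hre : (3 * (1 + s + s ^ 2 / 3)).re = 3 + 3 * s.re + (s.re * s.re - s.im * s.im) := by
    simp [pow_two]
    ring
  rw [hre]
  nlinarith [sq_nonneg (s.re + 3 / 4)]

namespace IsBoundaryModel

variable {t r₀ : ℝ} {κ s : ℂ → ℂ}

/-- Cancelling `s` in `(1 + s) ^ 3 - 1 = 3 * s * (1 + s + s ^ 2 / 3)` leaves a factor with positive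
real part, which gives the logarithm of `q * s q`. -/
theorem exists_exp_eq (hM : IsBoundaryModel t r₀ κ s) :
    ∃ L : ℂ → ℂ, DifferentiableOn ℂ L {q | r₀ < ‖q‖ ∧ ‖q‖ < 1} ∧
      ∀ q, r₀ < ‖q‖ → ‖q‖ < 1 → exp (L q) = q * s q := by
  have hre := fun q (hq : r₀ < ‖q‖) (hq1 : ‖q‖ < 1) =>
    re_one_add_add_sq_div_pos (hM.norm_slope_lt q hq hq1)
  have hκ : DifferentiableOn ℂ κ {q | r₀ < ‖q‖ ∧ ‖q‖ < 1} :=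
    hM.differentiableOn_log.mono fun q hq => mem_ball_zero_iff.2 hq.2
  have hs := hM.differentiableOn_slope
  refine ⟨fun q => -κ q - log (3 * (1 + s q + s q ^ 2 / 3)),
    hκ.neg.sub (DifferentiableOn.clog (by fun_prop) fun q hq => Or.inl (hre q hq.1 hq.2)),
    fun q hq hq1 => ?_⟩
  have hne : 3 * (1 + s q + s q ^ 2 / 3) ≠ 0 := fun h => by
    have := hre q hq hq1
    simp [h] at this
  rw [exp_sub, exp_log hne, exp_neg, div_eq_iff hne]
  refine inv_eq_of_mul_eq_one_right ?_
  linear_combination hM.mul_slope_eq q hq hq1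

theorem exists_mul_exp_eq_ofReal (ht0 : 0 < t) (hM : IsBoundaryModel t r₀ κ s) :
    ∃ B, ∀ᶠ ρ in 𝓝[<] (1 : ℝ), ∃ h : ℂ → ℂ,
      (∀ q ∈ closedBall (0 : ℂ) ρ, DifferentiableAt ℂ h q) ∧
      (∀ q ∈ sphere (0 : ℂ) ρ, ∃ c : ℝ, 0 ≤ c ∧ q * s q * exp (h q) = c) ∧
      ∀ q ∈ closedBall (0 : ℂ) ρ, |(h q).re| ≤ B := by
  obtain ⟨L, hL, hexp⟩ := hM.exists_exp_eq
  have hbound : ∀ q, r₀ < ‖q‖ → ‖q‖ < 1 → |(L q).re| ≤ -Real.log (r₀ * t) := by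
    intro q hq hq1
    have hnorm : Real.exp (L q).re = ‖q‖ * ‖s q‖ := by rw [← norm_exp, hexp q hq hq1, norm_mul]
    have hlow : r₀ * t ≤ Real.exp (L q).re := by
      rw [hnorm]
      exact mul_le_mul hq.le (hM.lt_norm_slope q hq hq1).le ht0.le (norm_nonneg q)
    have hhigh : Real.exp (L q).re ≤ 1 := by
      rw [hnorm]
      exact mul_le_one₀ hq1.le (norm_nonneg _)
        ((hM.norm_slope_lt q hq hq1).trans sqrt_three_div_two_lt_one).le
    have hneg : (L q).re ≤ 0 := Real.exp_le_one_iff.1 hhigh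
    rw [abs_of_nonpos hneg]
    exact neg_le_neg ((Real.log_le_iff_le_exp (mul_pos hM.pos ht0)).2 hlow)
  obtain ⟨B, hB⟩ := exists_differentiableAt_im_add_eq_zero hM.pos.le hM.lt_one hL hbound
  refine ⟨B, ?_⟩
  filter_upwards [hB, Ioo_mem_nhdsLT hM.lt_one] with ρ ⟨h, hdiff, him, hre⟩ hρ
  refine ⟨h, hdiff, fun q hq => ⟨Real.exp (L q + h q).re, (Real.exp_pos _).le, ?_⟩, hre⟩
  have hqρ := mem_sphere_zero_iff_norm.1 hq
  rw [← hexp q (hqρ ▸ hρ.1) (hqρ ▸ hρ.2), ← exp_add, ofReal_exp]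
  exact congrArg exp (ext rfl (him q hq))

end IsBoundaryModel

/-- The part of the graph `v = (z + τ * conj z) ^ 3` with `‖z‖ ≤ R`. Cubing the second coordinate
of the graph of `z + τ * conj z` and of its two rotations by cube roots of unity gives this set. -/
def cubedPlane (τ R : ℝ) : Set (ℂ × ℂ) :=
  {p | ‖p.1‖ ≤ R ∧ p.2 = (p.1 + τ * conj p.1) ^ 3}

/-- The factor `y` of `attachedDisc`: `exp (h / 2)` prescribes its argument on the unit circle up to
the argument of `a * ξ + conj a`, whose square is a nonnegative multiple of `ξ` there. -/
noncomputable def discFactor (h : ℂ → ℂ) (r : ℝ) (a ξ : ℂ) : ℂ :=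
  exp (h ((r * ξ) ^ 3) / 2) * (a * ξ + conj a)

/-- The disc `ξ ↦ (x * y, (x ^ 3 + exp (-κ (x ^ 3))) * y ^ 3)` with `x = r * ξ` and
`y = discFactor h r a ξ`. For a boundary model and suitable `h`, its boundary lies on cubed planes
whose slope tends to `t` as `r` tends to `1`. -/
noncomputable def attachedDisc (κ h : ℂ → ℂ) (r : ℝ) (a ξ : ℂ) : ℂ × ℂ :=
  (r * ξ * discFactor h r a ξ,
    ((r * ξ) ^ 3 + exp (-κ ((r * ξ) ^ 3))) * discFactor h r a ξ ^ 3)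

theorem exp_div_natCast_pow {n : ℕ} (hn : n ≠ 0) (z : ℂ) : exp (z / n) ^ n = exp z := by
  rw [← exp_nat_mul, mul_div_cancel₀ z (Nat.cast_ne_zero.2 hn)]

theorem mul_eq_norm_mul_conj {z s : ℂ} {p : ℝ} (hp : 0 ≤ p) (h : z ^ 2 * s = p) :
    s * z = ‖s‖ * conj z := by
  rcases eq_or_ne z 0 with rfl | hz
  · simp
  have hnorm : ((‖z‖ : ℝ) : ℂ) ^ 2 * ‖s‖ = p := by
    have := congrArg norm h
    rw [norm_mul, norm_pow, norm_real, Real.norm_of_nonneg hp] at this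
    exact_mod_cast this
  refine mul_left_cancel₀ hz ?_
  linear_combination h - hnorm - (‖s‖ : ℂ) * mul_conj' z

theorem sq_add_conj_eq {ξ : ℂ} (hξ : ‖ξ‖ = 1) (a : ℂ) :
    (a * ξ + conj a) ^ 2 = ξ * (‖a * ξ + conj a‖ : ℂ) ^ 2 := by
  have hconj : ξ * conj ξ = 1 := by rw [mul_conj', hξ, ofReal_one, one_pow]
  rw [← mul_conj', map_add, map_mul, conj_conj]
  linear_combination (-(a * ξ + conj a) * conj a) * hconj

theorem exists_mul_add_conj_eq {ζ : ℂ} (hζ : ‖ζ‖ ≤ 1 / 2) (b : ℂ) :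
    ∃ a, a * ζ + conj a = b ∧ ‖a‖ ≤ 2 * ‖b‖ := by
  have hsq : ‖ζ‖ ^ 2 ≤ (1 / 2) ^ 2 := by gcongr
  have hpos : 0 < 1 - ‖ζ‖ ^ 2 := by linarith
  have hne : ((1 - ‖ζ‖ ^ 2 : ℝ) : ℂ) ≠ 0 := ofReal_ne_zero.2 hpos.ne'
  refine ⟨(conj b - conj ζ * b) / (1 - ‖ζ‖ ^ 2 : ℝ), ?_, ?_⟩
  · rw [map_div₀, conj_ofReal, div_mul_eq_mul_div, ← add_div, div_eq_iff hne]
    push_cast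
    simp only [map_sub, map_mul, conj_conj]
    linear_combination -b * mul_conj' ζ
  · rw [norm_div, norm_real, Real.norm_of_nonneg hpos.le, div_le_iff₀ hpos]
    calc ‖conj b - conj ζ * b‖ ≤ ‖conj b‖ + ‖conj ζ * b‖ := norm_sub_le _ _
      _ = ‖b‖ + ‖ζ‖ * ‖b‖ := by rw [norm_mul, norm_conj, norm_conj]
      _ ≤ 2 * ‖b‖ * (1 - ‖ζ‖ ^ 2) := by nlinarith [norm_nonneg b]

theorem differentiableOn_attachedDisc {κ h : ℂ → ℂ} {r : ℝ} (hr0 : 0 ≤ r) (hr1 : r < 1)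
    (hκ : DifferentiableOn ℂ κ (ball 0 1))
    (hh : ∀ q ∈ closedBall (0 : ℂ) (r ^ 3), DifferentiableAt ℂ h q) (a : ℂ) :
    DifferentiableOn ℂ (attachedDisc κ h r a) (closedBall 0 1) := by
  have hmaps : MapsTo (fun ξ : ℂ => ((r : ℂ) * ξ) ^ 3) (closedBall 0 1)
      (closedBall 0 (r ^ 3)) := fun ξ hξ => by
    rw [mem_closedBall_zero_iff] at hξ ⊢
    rw [norm_pow, norm_mul, norm_real, Real.norm_of_nonneg hr0]
    gcongr
    exact mul_le_of_le_one_right hr0 hξ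
  have hcube : DifferentiableOn ℂ (fun ξ : ℂ => ((r : ℂ) * ξ) ^ 3) (closedBall 0 1) := by fun_prop
  have hκcube : DifferentiableOn ℂ (fun ξ : ℂ => κ ((r * ξ) ^ 3)) (closedBall 0 1) :=
    hκ.comp hcube (hmaps.mono_right (closedBall_subset_ball (pow_lt_one₀ hr0 hr1 three_ne_zero)))
  have hhcube : DifferentiableOn ℂ (fun ξ : ℂ => h ((r * ξ) ^ 3)) (closedBall 0 1) :=
    (show DifferentiableOn ℂ h (closedBall 0 (r ^ 3)) from
      fun q hq => (hh q hq).differentiableWithinAt).comp hcube hmaps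
  have hy : DifferentiableOn ℂ (discFactor h r a) (closedBall 0 1) :=
    (hhcube.div_const 2).cexp.mul (by fun_prop)
  have hx : DifferentiableOn ℂ (fun ξ : ℂ => (r : ℂ) * ξ) (closedBall 0 1) := by fun_prop
  exact (hx.mul hy).prodMk ((hcube.add hκcube.neg.cexp).mul (hy.pow 3))

theorem attachedDisc_mem_cubedPlane {κ h : ℂ → ℂ} {r c B : ℝ} {s ξ : ℂ} (hr0 : 0 < r)
    (hr1 : r ≤ 1) (hξ : ‖ξ‖ = 1) (hc : 0 ≤ c)
    (hs : (r * ξ) ^ 3 * exp (κ ((r * ξ) ^ 3)) * ((1 + s) ^ 3 - 1) = 1)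
    (hh : (r * ξ) ^ 3 * s * exp (h ((r * ξ) ^ 3)) = c) (hB : (h ((r * ξ) ^ 3)).re ≤ B) (a : ℂ) :
    attachedDisc κ h r a ξ ∈ cubedPlane ‖s‖ (2 * Real.exp (B / 2) * ‖a‖) := by
  have hE : exp (h ((r * ξ) ^ 3) / 2) ^ 2 = exp (h ((r * ξ) ^ 3)) :=
    exp_div_natCast_pow two_ne_zero _
  have hr : (r : ℂ) ≠ 0 := ofReal_ne_zero.2 hr0.ne'
  have hsq : (r * ξ * discFactor h r a ξ) ^ 2 * s =
      (c / r * ‖a * ξ + conj a‖ ^ 2 : ℝ) := by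
    push_cast
    rw [discFactor, mul_pow, mul_pow (exp _), hE, sq_add_conj_eq hξ, ← hh]
    field_simp
  constructor
  · simp only [attachedDisc, discFactor, norm_mul, norm_exp, norm_real, hξ, mul_one,
      Real.norm_of_nonneg hr0.le]
    calc r * (Real.exp (h ((r * ξ) ^ 3) / 2).re * ‖a * ξ + conj a‖)
        ≤ 1 * (Real.exp (B / 2) * (‖a‖ + ‖a‖)) := by
          gcongr
          · rw [div_ofNat_re]
            gcongr
          · refine (norm_add_le _ _).trans_eq ?_
            rw [norm_mul, hξ, mul_one, norm_conj]
      _ = 2 * Real.exp (B / 2) * ‖a‖ := by ring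
  · have hexp : (r * ξ) ^ 3 + exp (-κ ((r * ξ) ^ 3)) = (r * ξ) ^ 3 * (1 + s) ^ 3 := by
      rw [exp_neg, inv_eq_of_mul_eq_one_right
        (b := (r * ξ) ^ 3 * ((1 + s) ^ 3 - 1)) (by linear_combination hs)]
      ring
    simp only [attachedDisc]
    rw [← mul_eq_norm_mul_conj (by positivity) hsq, hexp]
    ring

theorem attachedDisc_eq {κ h : ℂ → ℂ} {r : ℝ} {a x k ξ : ℂ}
    (hx : r * ξ * exp (κ ((r * ξ) ^ 3) / 3) = x)
    (hk : discFactor h r a ξ = k * exp (κ ((r * ξ) ^ 3) / 3)) :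
    attachedDisc κ h r a ξ = (x * k, (x ^ 3 + 1) * k ^ 3) := by
  have hE : exp (κ ((r * ξ) ^ 3) / 3) ^ 3 = exp (κ ((r * ξ) ^ 3)) :=
    exp_div_natCast_pow three_ne_zero _
  rw [attachedDisc, hk, ← hx, mul_pow k, mul_pow (r * ξ) (exp _), hE, exp_neg]
  ext
  · ring
  · simp only
    field_simp

theorem exists_forall_exists_mul_eq {f : ℂ → ℂ} (hf : DifferentiableOn ℂ f (ball 0 1))
    (hf0 : f 0 ≠ 0) {ε : ℝ} (hε : 0 < ε) :
    ∃ η > 0, ∀ x : ℂ, ‖x‖ < η → ∃ ζ : ℂ, ‖ζ‖ < ε ∧ ζ * f ζ = x := by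
  have hmem : ball (0 : ℂ) 1 ∈ 𝓝 0 := ball_mem_nhds 0 one_pos
  have hderiv : HasStrictDerivAt (fun ζ => ζ * f ζ) (1 * f 0 + 0 * deriv f 0) 0 :=
    (hasStrictDerivAt_id (0 : ℂ)).mul (hf.analyticAt hmem).hasStrictDerivAt
  have himage : (fun ζ => ζ * f ζ) '' ball 0 ε ∈ 𝓝 0 := by
    have hmap := hderiv.map_nhds_eq (by simpa using hf0)
    rw [zero_mul] at hmap
    exact hmap ▸ image_mem_map (ball_mem_nhds 0 hε)
  obtain ⟨η, hη, hsub⟩ := Metric.mem_nhds_iff.1 himage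
  refine ⟨η, hη, fun x hx => ?_⟩
  obtain ⟨ζ, hζ, rfl⟩ := hsub (mem_ball_zero_iff.2 hx)
  exact ⟨ζ, mem_ball_zero_iff.1 hζ, rfl⟩

namespace IsBoundaryModel

variable {t r₀ : ℝ} {κ s : ℂ → ℂ}

theorem eventually_exists_discFactor (ht0 : 0 < t) (hM : IsBoundaryModel t r₀ κ s) :
    ∃ B, ∀ ε > 0, ∀ᶠ r in 𝓝[<] (1 : ℝ), ∃ h : ℂ → ℂ,
      (∀ a, DifferentiableOn ℂ (attachedDisc κ h r a) (closedBall 0 1)) ∧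
      (∀ a, ∀ ξ ∈ sphere (0 : ℂ) 1, ∃ τ ∈ Icc t (t + ε),
        attachedDisc κ h r a ξ ∈ cubedPlane τ (2 * Real.exp (B / 2) * ‖a‖)) ∧
      ∀ ξ ∈ closedBall (0 : ℂ) 1, |(h ((r * ξ) ^ 3)).re| ≤ B := by
  obtain ⟨B, hB⟩ := hM.exists_mul_exp_eq_ofReal ht0
  have hcube : Tendsto (fun r : ℝ => r ^ 3) (𝓝[<] 1) (𝓝[<] 1) := by
    refine tendsto_nhdsWithin_iff.2 ⟨((continuous_pow 3).tendsto' 1 1 (one_pow 3)).mono_left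
      nhdsWithin_le_nhds, ?_⟩
    filter_upwards [Ioo_mem_nhdsLT zero_lt_one] with r hr
    exact pow_lt_one₀ hr.1.le hr.2 three_ne_zero
  refine ⟨B, fun ε hε => ?_⟩
  filter_upwards [hcube.eventually hB, hcube.eventually (hM.norm_slope_tendsto ε hε),
    hcube.eventually (Ioo_mem_nhdsLT hM.lt_one), Ioo_mem_nhdsLT zero_lt_one]
    with r ⟨h, hdiff, hreal, hre⟩ hslope hr hr01
  have hnorm : ∀ ξ : ℂ, ‖((r : ℂ) * ξ) ^ 3‖ = r ^ 3 * ‖ξ‖ ^ 3 := fun ξ => by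
    rw [norm_pow, norm_mul, norm_real, Real.norm_of_nonneg hr01.1.le, mul_pow]
  have hball : ∀ ξ ∈ closedBall (0 : ℂ) 1, ((r : ℂ) * ξ) ^ 3 ∈ closedBall 0 (r ^ 3) :=
    fun ξ hξ => by
      rw [mem_closedBall_zero_iff, hnorm]
      exact mul_le_of_le_one_right (pow_pos hr01.1 3).le
        (pow_le_one₀ (norm_nonneg ξ) (mem_closedBall_zero_iff.1 hξ))
  refine ⟨h, differentiableOn_attachedDisc hr01.1.le hr01.2 hM.differentiableOn_log hdiff,
    fun a ξ hξ => ?_, fun ξ hξ => hre _ (hball ξ hξ)⟩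
  have hξ1 := mem_sphere_zero_iff_norm.1 hξ
  have hq : ‖((r : ℂ) * ξ) ^ 3‖ = r ^ 3 := by rw [hnorm, hξ1, one_pow, mul_one]
  have hqr : r₀ < ‖((r : ℂ) * ξ) ^ 3‖ ∧ ‖((r : ℂ) * ξ) ^ 3‖ < 1 := hq.symm ▸ hr
  obtain ⟨c, hc, hcq⟩ := hreal _ (mem_sphere_zero_iff_norm.2 hq)
  exact ⟨‖s ((r * ξ) ^ 3)‖, ⟨(hM.lt_norm_slope _ hqr.1 hqr.2).le,
    (hslope _ (mem_sphere_zero_iff_norm.2 hq)).le⟩,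
    attachedDisc_mem_cubedPlane hr01.1 hr01.2.le hξ1 hc (hM.mul_slope_eq _ hqr.1 hqr.2) hcq
      (abs_le.1 (hre _ (hball ξ (sphere_subset_closedBall hξ)))).2 a⟩

theorem exists_mul_exp_eq (hM : IsBoundaryModel t r₀ κ s) :
    ∃ η > 0, ∃ m > 0, ∀ x : ℂ, ‖x‖ < η → ∃ ζ : ℂ, ‖ζ‖ < 1 / 4 ∧
      ζ * exp (κ (ζ ^ 3) / 3) = x ∧ ‖exp (κ (ζ ^ 3) / 3)‖ ≤ m := by
  have hf : DifferentiableOn ℂ (fun ζ => exp (κ (ζ ^ 3) / 3)) (ball 0 1) := by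
    have hκ := hM.differentiableOn_log.comp (s := ball 0 1) (differentiableOn_pow 3) fun ζ hζ => by
      rw [mem_ball_zero_iff] at hζ ⊢
      rw [norm_pow]
      exact pow_lt_one₀ (norm_nonneg ζ) hζ three_ne_zero
    exact (hκ.div_const 3).cexp
  obtain ⟨η, hη, hreach⟩ := exists_forall_exists_mul_eq hf (exp_ne_zero _)
    (show (0 : ℝ) < 1 / 4 by norm_num)
  obtain ⟨m, hm⟩ := (isCompact_closedBall (0 : ℂ) (1 / 4)).exists_bound_of_continuousOn
    (hf.continuousOn.mono (closedBall_subset_ball (by norm_num)))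
  refine ⟨η, hη, m, (norm_pos_iff.2 (exp_ne_zero _)).trans_le
    (hm 0 (mem_closedBall_self (by norm_num))), fun x hx => ?_⟩
  obtain ⟨ζ, hζ, hζx⟩ := hreach x hx
  exact ⟨ζ, hζ, hζx, hm ζ (mem_closedBall_zero_iff.2 hζ.le)⟩

end IsBoundaryModel

theorem exists_disc_cubedPlane {t : ℝ} (ht0 : 0 < t) (ht : t < Real.sqrt 3 / 2) :
    ∃ η > 0, ∃ C > 0, ∀ ε > 0, ∀ x k : ℂ, ‖x‖ < η → ∃ Φ : ℂ → ℂ × ℂ,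
      DifferentiableOn ℂ Φ (closedBall 0 1) ∧
      (∃ ξ ∈ ball (0 : ℂ) 1, Φ ξ = (x * k, (x ^ 3 + 1) * k ^ 3)) ∧
      ∀ ξ ∈ sphere (0 : ℂ) 1, ∃ τ ∈ Icc t (t + ε), Φ ξ ∈ cubedPlane τ (C * ‖k‖) := by
  obtain ⟨r₀, κ, s, hM⟩ := exists_isBoundaryModel ht0 ht
  obtain ⟨B, hB⟩ := hM.eventually_exists_discFactor ht0
  obtain ⟨η, hη, m, hm, hreach⟩ := hM.exists_mul_exp_eq
  refine ⟨η, hη, 4 * m * Real.exp B, by positivity, fun ε hε x k hx => ?_⟩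
  obtain ⟨ζ, hζ, rfl, hζm⟩ := hreach x hx
  obtain ⟨r, ⟨h, hdiff, hbdry, hre⟩, hr⟩ :=
    ((hB ε hε).and (Ioo_mem_nhdsLT one_half_lt_one)).exists
  have hr0 : 0 < r := one_half_pos.trans hr.1
  have hξ : ‖ζ / r‖ ≤ 1 / 2 := by
    rw [norm_div, norm_real, Real.norm_of_nonneg hr0.le, div_le_iff₀ hr0]
    linarith [hr.1]
  have hrξ : (r : ℂ) * (ζ / r) = ζ := mul_div_cancel₀ _ (ofReal_ne_zero.2 hr0.ne')
  obtain ⟨a, ha, hanorm⟩ :=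
    exists_mul_add_conj_eq hξ (k * exp (κ (ζ ^ 3) / 3) * exp (-(h (ζ ^ 3) / 2)))
  have hCa : 2 * Real.exp (B / 2) * ‖a‖ ≤ 4 * m * Real.exp B * ‖k‖ := by
    have hh : |(h (ζ ^ 3)).re| ≤ B := by
      simpa only [hrξ] using hre (ζ / r) (mem_closedBall_zero_iff.2 (by linarith))
    have hexp : ‖exp (-(h (ζ ^ 3) / 2))‖ ≤ Real.exp (B / 2) := by
      rw [norm_exp, neg_re, div_ofNat_re, ← neg_div]
      gcongr
      exact neg_le.1 (abs_le.1 hh).1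
    rw [norm_mul, norm_mul] at hanorm
    calc 2 * Real.exp (B / 2) * ‖a‖
        ≤ 2 * Real.exp (B / 2) * (2 * (‖k‖ * m * Real.exp (B / 2))) := by
          gcongr
          exact hanorm.trans (by gcongr)
      _ = 4 * m * (Real.exp (B / 2) * Real.exp (B / 2)) * ‖k‖ := by ring
      _ = 4 * m * Real.exp B * ‖k‖ := by rw [← Real.exp_add, add_halves]
  refine ⟨attachedDisc κ h r a, hdiff a, ⟨ζ / r, mem_ball_zero_iff.2 (by linarith),
    attachedDisc_eq (by rw [hrξ]) ?_⟩, fun ξ hξ => ?_⟩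
  · rw [discFactor, hrξ, ha, exp_neg]
    field_simp
  · obtain ⟨τ, hτ, hmem⟩ := hbdry a ξ hξ
    exact ⟨τ, hτ, hmem.1.trans hCa, hmem.2⟩

/-! ### Polynomially convex hulls -/

/-- The point of `ℂ × ℂ` as an evaluation point for polynomials in two variables, in the form used
by `polyHull2`. -/
def coords (z : ℂ × ℂ) : Fin 2 → ℂ := fun i => if i = 0 then z.1 else z.2

theorem continuous_eval_coords (p : MvPolynomial (Fin 2) ℂ) :
    Continuous fun z => MvPolynomial.eval (coords z) p := by
  refine (MvPolynomial.continuous_eval p).comp (continuous_pi fun i => ?_)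
  unfold coords
  split_ifs <;> fun_prop

theorem differentiable_eval_coords (p : MvPolynomial (Fin 2) ℂ) :
    Differentiable ℂ fun z => MvPolynomial.eval (coords z) p := by
  induction p using MvPolynomial.induction_on with
  | C a => simp only [MvPolynomial.eval_C, differentiable_const]
  | add p q hp hq => simpa only [map_add] using hp.fun_add hq
  | mul_X p i hp =>
    have hi : Differentiable ℂ fun z => coords z i := by
      unfold coords
      split_ifs <;> fun_prop
    simpa only [map_mul, MvPolynomial.eval_X] using hp.fun_mul hi

theorem norm_eval_le_of_mem_polyHull2 {K : Set (ℂ × ℂ)} {z : ℂ × ℂ} {M : ℝ} (hz : z ∈ polyHull2 K)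
    (hM : 0 ≤ M) {p : MvPolynomial (Fin 2) ℂ}
    (hp : ∀ w ∈ K, ‖MvPolynomial.eval (coords w) p‖ ≤ M) :
    ‖MvPolynomial.eval (coords z) p‖ ≤ M :=
  (hz p).trans (Real.sSup_le (forall_mem_image.2 hp) hM)

theorem mem_polyHull2_of_forall {K : Set (ℂ × ℂ)} (hK : Bornology.IsBounded K) {z : ℂ × ℂ}
    (hz : ∀ (p : MvPolynomial (Fin 2) ℂ) (M : ℝ), 0 ≤ M →
      (∀ w ∈ K, ‖MvPolynomial.eval (coords w) p‖ ≤ M) → ‖MvPolynomial.eval (coords z) p‖ ≤ M) :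
    z ∈ polyHull2 K := by
  refine fun p => hz p _ (Real.sSup_nonneg (forall_mem_image.2 fun w _ => norm_nonneg _))
    fun w hw => le_csSup ?_ (mem_image_of_mem _ hw)
  exact (hK.isCompact_closure.bddAbove_image (continuous_eval_coords p).norm.continuousOn).mono
    (image_mono subset_closure)

theorem mapsTo_polyHull2 {Φ : ℂ × ℂ → ℂ × ℂ} {q : Fin 2 → MvPolynomial (Fin 2) ℂ}
    (hΦ : ∀ z i, coords (Φ z) i = MvPolynomial.eval (coords z) (q i)) {K L : Set (ℂ × ℂ)}
    (hL : Bornology.IsBounded L) (hKL : MapsTo Φ K L) :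
    MapsTo Φ (polyHull2 K) (polyHull2 L) := by
  have hcomp : ∀ p w, MvPolynomial.eval (coords (Φ w)) p =
      MvPolynomial.eval (coords w) (MvPolynomial.bind₁ q p) := fun p w => by
    rw [funext (hΦ w)]
    exact (MvPolynomial.eval₂Hom_bind₁ _ _ _ _).symm
  refine fun z hz => mem_polyHull2_of_forall hL fun p M hM hp => ?_
  rw [hcomp]
  exact norm_eval_le_of_mem_polyHull2 hz hM fun w hw => hcomp p w ▸ hp _ (hKL hw)

theorem norm_le_of_norm_le_sphere {f : ℂ → ℂ} {r M : ℝ} {ξ : ℂ}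
    (hf : DifferentiableOn ℂ f (closedBall 0 r)) (hM : ∀ ζ ∈ sphere (0 : ℂ) r, ‖f ζ‖ ≤ M)
    (hξ : ξ ∈ ball (0 : ℂ) r) : ‖f ξ‖ ≤ M := by
  have hr : r ≠ 0 := (pos_of_mem_ball hξ).ne'
  refine norm_le_of_forall_mem_frontier_norm_le isBounded_ball ?_ ?_ (subset_closure hξ)
  · exact DifferentiableOn.diffContOnCl (by rwa [closure_ball _ hr])
  · rwa [frontier_ball _ hr]

theorem mem_polyHull2_of_sphere_subset {K : Set (ℂ × ℂ)} {Φ : ℂ → ℂ × ℂ} {r : ℝ} {ξ : ℂ}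
    (hΦ : Differentiable ℂ Φ) (hK : MapsTo Φ (sphere 0 r) (polyHull2 K))
    (hξ : ξ ∈ ball (0 : ℂ) r) : Φ ξ ∈ polyHull2 K := fun p =>
  norm_le_of_norm_le_sphere (f := fun ζ => MvPolynomial.eval (coords (Φ ζ)) p)
    ((differentiable_eval_coords p).comp hΦ).differentiableOn (fun _ hζ => hK hζ p) hξ

theorem norm_le_of_norm_sum_pow_le {ι : Type*} [Fintype ι] {a : ι → ℂ} {C M : ℝ} (hM : 0 ≤ M)
    (h : ∀ k : ℕ, ‖∑ i, a i ^ k‖ ≤ C * M ^ k) (i : ι) : ‖a i‖ ≤ M := by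
  by_contra! hi
  have hsmall : ∀ᶠ k : ℕ in atTop, C * (M / ‖a i‖) ^ k < 1 / 2 := by
    have hlim := (tendsto_pow_atTop_nhds_zero_of_lt_one (by positivity)
      ((div_lt_one (hM.trans_lt hi)).2 hi)).const_mul C
    rw [mul_zero] at hlim
    exact hlim.eventually_lt_const one_half_pos
  set u : ι → Circle := fun j => Circle.exp (a j).arg
  -- By recurrence on the torus, the phases of all `a j ^ k` are simultaneously close to `1`.
  have hphase : ∃ᶠ k : ℕ in atTop, ∀ j, 1 / 2 < ((u j ^ k : Circle) : ℂ).re := by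
    refine (mapClusterPt_one_atTop_pow u).frequently (p := fun v => ∀ j, 1 / 2 < (v j : ℂ).re)
      (eventually_all.2 fun j => ?_)
    have hcont : Continuous fun v : ι → Circle => (v j : ℂ).re := by fun_prop
    exact hcont.continuousAt.eventually_const_lt (by norm_num)
  obtain ⟨k, hk, hlt⟩ := (hphase.and_eventually hsmall).exists
  have hre : ∀ j, ‖a j‖ ^ k / 2 ≤ (a j ^ k).re := fun j => by
    have hpolar : a j ^ k = ((‖a j‖ ^ k : ℝ) : ℂ) * (u j ^ k : Circle) := by
      rw [Circle.coe_pow, Circle.coe_exp, ofReal_pow, ← mul_pow, norm_mul_exp_arg_mul_I]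
    rw [hpolar, re_ofReal_mul, div_eq_mul_one_div]
    exact mul_le_mul_of_nonneg_left (hk j).le (by positivity)
  have hlow : ‖a i‖ ^ k / 2 ≤ C * M ^ k := calc
    ‖a i‖ ^ k / 2 ≤ ∑ j, ‖a j‖ ^ k / 2 :=
      Finset.single_le_sum (f := fun j => ‖a j‖ ^ k / 2) (fun j _ => by positivity)
        (Finset.mem_univ i)
    _ ≤ (∑ j, a j ^ k).re := by
      rw [re_sum]
      exact Finset.sum_le_sum fun j _ => hre j
    _ ≤ C * M ^ k := (re_le_norm _).trans (h k)
  rw [div_pow, ← mul_div_assoc, div_lt_iff₀ (pow_pos (hM.trans_lt hi) k)] at hlt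
  linarith

theorem sum_pow_pow_eq_ite {R : Type*} [Field R] {n : ℕ} {ζ : R} (hζ : IsPrimitiveRoot ζ n)
    (m : ℕ) : ∑ j : Fin n, (ζ ^ (j : ℕ)) ^ m = if n ∣ m then (n : R) else 0 := by
  simp_rw [← pow_mul, mul_comm _ m, pow_mul]
  rw [← Finset.sum_range fun j => (ζ ^ m) ^ j]
  split_ifs with hm
  · simp [(hζ.pow_eq_one_iff_dvd m).2 hm]
  · rw [geom_sum_eq (mt (hζ.pow_eq_one_iff_dvd m).1 hm), ← pow_mul, mul_comm, pow_mul,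
      hζ.pow_eq_one, one_pow, sub_self, zero_div]

theorem exists_eval_pow_eq_sum {n : ℕ} {ζ : ℂ} (hζ : IsPrimitiveRoot ζ n)
    (p : MvPolynomial (Fin 2) ℂ) :
    ∃ q : MvPolynomial (Fin 2) ℂ, ∀ z v : ℂ, MvPolynomial.eval (coords (z, v ^ n)) q =
      ∑ j : Fin n, MvPolynomial.eval (coords (z, ζ ^ (j : ℕ) * v)) p := by
  induction p using MvPolynomial.induction_on' with
  | add p₁ p₂ h₁ h₂ =>
    obtain ⟨q₁, hq₁⟩ := h₁
    obtain ⟨q₂, hq₂⟩ := h₂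
    exact ⟨q₁ + q₂, fun z v => by simp only [map_add, hq₁, hq₂, Finset.sum_add_distrib]⟩
  | monomial u a =>
    refine ⟨MvPolynomial.C (a * if n ∣ u 1 then (n : ℂ) else 0) *
      (MvPolynomial.X 0 ^ u 0 * MvPolynomial.X 1 ^ (u 1 / n)), fun z v => ?_⟩
    have hsum : ∑ j : Fin n, MvPolynomial.eval (coords (z, ζ ^ (j : ℕ) * v))
        (MvPolynomial.monomial u a) =
          a * (∑ j : Fin n, (ζ ^ (j : ℕ)) ^ u 1) * (z ^ u 0 * v ^ u 1) := by
      rw [Finset.mul_sum, Finset.sum_mul]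
      refine Finset.sum_congr rfl fun j _ => ?_
      rw [MvPolynomial.eval_monomial, Finsupp.prod_fintype _ _ fun i => pow_zero _,
        Fin.prod_univ_two]
      simp only [coords, if_true, one_ne_zero, if_false]
      ring
    rw [hsum, sum_pow_pow_eq_ite hζ]
    simp only [map_mul, map_pow, MvPolynomial.eval_C, MvPolynomial.eval_X, coords, if_true,
      one_ne_zero, if_false]
    split_ifs with hn
    · rw [← pow_mul, Nat.mul_div_cancel' hn]
    · simp only [mul_zero, zero_mul]

theorem isBounded_preimage_snd_pow {n : ℕ} (hn : n ≠ 0) {K : Set (ℂ × ℂ)}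
    (hK : Bornology.IsBounded K) :
    Bornology.IsBounded ((fun w : ℂ × ℂ => (w.1, w.2 ^ n)) ⁻¹' K) := by
  obtain ⟨C, hC⟩ := isBounded_iff_forall_norm_le.1 hK
  refine isBounded_iff_forall_norm_le.2 ⟨max 1 C, fun w hw => ?_⟩
  obtain ⟨h₁, h₂⟩ := norm_prod_le_iff.1 (hC _ hw)
  rw [norm_pow] at h₂
  refine norm_prod_le_iff.2 ⟨h₁.trans (le_max_right _ _), ?_⟩
  rcases le_total ‖w.2‖ 1 with h | h
  · exact h.trans (le_max_left _ _)
  · exact ((le_self_pow₀ h hn).trans h₂).trans (le_max_right _ _)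

/-- If `‖p‖ ≤ M` on the preimage, summing `p ^ k` over the fibre of `v ↦ v ^ n` gives a polynomial
in `(z, v ^ n)` bounded by `n * M ^ k` on `K`, hence at `(z, v ^ n)`; let `k` tend to infinity. -/
theorem mem_polyHull2_preimage_snd_pow {n : ℕ} (hn : n ≠ 0) {K : Set (ℂ × ℂ)}
    (hK : Bornology.IsBounded K) {z v : ℂ} (h : (z, v ^ n) ∈ polyHull2 K) :
    (z, v) ∈ polyHull2 ((fun w : ℂ × ℂ => (w.1, w.2 ^ n)) ⁻¹' K) := by
  have hζ := isPrimitiveRoot_exp n hn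
  set ζ := exp (2 * Real.pi * I / n)
  refine mem_polyHull2_of_forall (isBounded_preimage_snd_pow hn hK) fun p M hM hp => ?_
  have hsum : ∀ k : ℕ,
      ‖∑ j : Fin n, MvPolynomial.eval (coords (z, ζ ^ (j : ℕ) * v)) p ^ k‖ ≤ n * M ^ k := by
    intro k
    obtain ⟨q, hq⟩ := exists_eval_pow_eq_sum hζ (p ^ k)
    simp only [map_pow] at hq
    rw [← hq]
    refine norm_eval_le_of_mem_polyHull2 h (by positivity) fun w hw => ?_
    obtain ⟨y, hy⟩ := IsAlgClosed.exists_pow_nat_eq w.2 (Nat.pos_of_ne_zero hn)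
    have hfibre : ∀ j : Fin n, ‖MvPolynomial.eval (coords (w.1, ζ ^ (j : ℕ) * y)) p‖ ≤ M :=
      fun j => hp _ <| by
        rwa [mem_preimage, mul_pow, ← pow_mul, mul_comm _ n, pow_mul, hζ.pow_eq_one, one_pow,
          one_mul, hy]
    have hw' : w = (w.1, y ^ n) := by rw [hy]
    rw [hw', hq]
    calc ‖∑ j : Fin n, MvPolynomial.eval (coords (w.1, ζ ^ (j : ℕ) * y)) p ^ k‖
        ≤ ∑ _j : Fin n, M ^ k := norm_sum_le_of_le _ fun j _ => by
          rw [norm_pow]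
          exact pow_le_pow_left₀ (norm_nonneg _) (hfibre j) k
      _ = n * M ^ k := by rw [Finset.sum_const, Finset.card_univ, Fintype.card_fin, nsmul_eq_mul]
  simpa using norm_le_of_norm_sum_pow_le hM hsum ⟨0, Nat.pos_of_ne_zero hn⟩

/-! ### Filling a bidisc -/

theorem isBounded_cubedPlane (τ R : ℝ) : Bornology.IsBounded (cubedPlane τ R) := by
  have himage : cubedPlane τ R ⊆ (fun z : ℂ => (z, (z + τ * conj z) ^ 3)) '' closedBall 0 R :=
    fun p hp => ⟨p.1, mem_closedBall_zero_iff.2 hp.1, Prod.ext rfl hp.2.symm⟩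
  exact ((isCompact_closedBall 0 R).image (by fun_prop)).isBounded.subset himage

theorem eventually_forall_cubedPlane_lt {f : ℂ × ℂ → ℝ} (hf : Continuous f) {t R M : ℝ}
    (hM : ∀ w ∈ cubedPlane t R, f w < M) :
    ∀ᶠ τ in 𝓝 t, ∀ w ∈ cubedPlane τ R, f w < M := by
  have hcont : Continuous fun p : ℝ × ℂ => f (p.2, (p.2 + p.1 * conj p.2) ^ 3) := by fun_prop
  have hev : ∀ᶠ τ : ℝ in 𝓝 t, ∀ z ∈ closedBall (0 : ℂ) R, f (z, (z + τ * conj z) ^ 3) < M :=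
    (isCompact_closedBall 0 R).eventually_forall_of_forall_eventually fun z hz =>
      (hcont.tendsto (t, z)).eventually_lt_const (hM _ ⟨mem_closedBall_zero_iff.1 hz, rfl⟩)
  filter_upwards [hev] with τ hτ w hw
  have hwv : w = (w.1, (w.1 + τ * conj w.1) ^ 3) := Prod.ext rfl hw.2
  exact hwv ▸ hτ w.1 (mem_closedBall_zero_iff.2 hw.1)

theorem exists_mem_polyHull2_cubedPlane {t : ℝ} (ht0 : 0 < t) (ht : t < Real.sqrt 3 / 2) :
    ∃ η > 0, ∃ C > 0, ∀ (R : ℝ) (x k : ℂ), ‖x‖ < η → C * ‖k‖ ≤ R →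
      (x * k, (x ^ 3 + 1) * k ^ 3) ∈ polyHull2 (cubedPlane t R) := by
  obtain ⟨η, hη, C, hC, hdisc⟩ := exists_disc_cubedPlane ht0 ht
  refine ⟨η, hη, C, hC, fun R x k hx hk => mem_polyHull2_of_forall (isBounded_cubedPlane t R)
    fun p M _ hp => le_of_forall_pos_le_add fun e he => ?_⟩
  obtain ⟨ε, hε, hlt⟩ := Metric.eventually_nhds_iff.1 (eventually_forall_cubedPlane_lt
    (continuous_eval_coords p).norm fun w hw => (hp w hw).trans_lt (lt_add_of_pos_right M he))
  obtain ⟨Φ, hΦ, ⟨ξ, hξ, hΦξ⟩, hbdry⟩ := hdisc (ε / 2) (half_pos hε) x k hx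
  refine hΦξ ▸ norm_le_of_norm_le_sphere (f := fun ζ => MvPolynomial.eval (coords (Φ ζ)) p)
    ((differentiable_eval_coords p).comp_differentiableOn hΦ) (fun ζ hζ => ?_) hξ
  obtain ⟨τ, hτ, hmem⟩ := hbdry ζ hζ
  have hdist : dist τ t < ε := by
    rw [Real.dist_eq, abs_of_nonneg (sub_nonneg.2 hτ.1)]
    linarith [hτ.2]
  exact (hlt hdist _ ⟨hmem.1.trans hk, hmem.2⟩).le

theorem exists_pow_three_eq_sub {m : ℝ} (hm : 0 ≤ m) {z u : ℂ} (hz : ‖z‖ < m / 2)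
    (hu : ‖u‖ = m ^ 3) : ∃ k : ℂ, k ^ 3 = u - z ^ 3 ∧ m / 2 < ‖k‖ ∧ ‖k‖ < 2 * m := by
  obtain ⟨k, hk⟩ := IsAlgClosed.exists_pow_nat_eq (u - z ^ 3) three_pos
  have hz3 : ‖z ^ 3‖ < (m / 2) ^ 3 := by
    rw [norm_pow]
    gcongr
  have hk3 : ‖k‖ ^ 3 = ‖u - z ^ 3‖ := by rw [← norm_pow, hk]
  have hm3 : 0 ≤ m ^ 3 := pow_nonneg hm 3
  refine ⟨k, hk, lt_of_pow_lt_pow_left₀ 3 (norm_nonneg k) ?_,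
    lt_of_pow_lt_pow_left₀ 3 (by positivity) ?_⟩
  · linarith [norm_sub_norm_le u (z ^ 3)]
  · linarith [norm_sub_le u (z ^ 3)]

/-- Every point with `‖u‖ = m ^ 3` and small `z` is `(x * k, (x ^ 3 + 1) * k ^ 3)` for a cube root
`k` of `u - z ^ 3`, and the maximum principle in `u` fills the inside. -/
theorem polyHull2_cubedPlane_mem_nhds {t R : ℝ} (ht0 : 0 < t) (ht : t < Real.sqrt 3 / 2)
    (hR : 0 < R) : polyHull2 (cubedPlane t R) ∈ 𝓝 0 := by
  obtain ⟨η, hη, C, hC, hmem⟩ := exists_mem_polyHull2_cubedPlane ht0 ht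
  set m := R / (2 * C)
  have hm : 0 < m := by positivity
  have hz : ∀ᶠ z : ℂ in 𝓝 0, ‖z‖ < m / 2 ∧ ‖z‖ < η * (m / 2) := by
    have hnorm : Tendsto (fun z : ℂ => ‖z‖) (𝓝 0) (𝓝 0) := tendsto_norm_zero
    exact (hnorm.eventually_lt_const (by positivity)).and
      (hnorm.eventually_lt_const (by positivity))
  have hu : ∀ᶠ u : ℂ in 𝓝 0, u ∈ ball (0 : ℂ) (m ^ 3) := ball_mem_nhds 0 (by positivity)
  rw [show (0 : ℂ × ℂ) = (0, 0) from rfl, nhds_prod_eq]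
  filter_upwards [hz.prod_mk hu] with ⟨z, u⟩ ⟨⟨hzm, hzη⟩, hu⟩
  refine mem_polyHull2_of_sphere_subset (Φ := fun u => (z, u)) (by fun_prop) (fun u hu => ?_) hu
  obtain ⟨k, hk3, hlow, hhigh⟩ :=
    exists_pow_three_eq_sub hm.le hzm (mem_sphere_zero_iff_norm.1 hu)
  have hk : 0 < ‖k‖ := (half_pos hm).trans hlow
  have hzk : z / k * k = z := div_mul_cancel₀ z (norm_pos_iff.1 hk)
  have hx : ‖z / k‖ < η := by
    rw [norm_div, div_lt_iff₀ hk]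
    exact hzη.trans (mul_lt_mul_of_pos_left hlow hη)
  have hCk : C * ‖k‖ ≤ R := by
    have hR' : C * (2 * m) = R := by
      simp only [m]
      field_simp
    exact hR' ▸ mul_le_mul_of_nonneg_left hhigh.le hC.le
  have hpoint : (z / k * k, ((z / k) ^ 3 + 1) * k ^ 3) = (z, u) := by
    rw [add_mul, one_mul, ← mul_pow, hzk, hk3, add_sub_cancel]
  simpa only [hpoint] using hmem R (z / k) k hx hCk

/-! ### The three planes -/

theorem ofReal_sqrt_three_sq : (Real.sqrt 3 : ℂ) ^ 2 = 3 := by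
  rw [← ofReal_pow, Real.sq_sqrt zero_le_three, ofReal_ofNat]

theorem eq_of_pow_three_eq {v y : ℂ} (h : v ^ 3 = y ^ 3) :
    v = y ∨ v = (-1 + I * Real.sqrt 3) / 2 * y ∨ v = (-1 - I * Real.sqrt 3) / 2 * y := by
  have hfactor : (v - y) * ((v - (-1 + I * Real.sqrt 3) / 2 * y) *
      (v - (-1 - I * Real.sqrt 3) / 2 * y)) = 0 := by
    linear_combination h - (v - y) * y ^ 2 / 4 * (Real.sqrt 3 : ℂ) ^ 2 * I_sq +
      (v - y) * y ^ 2 / 4 * ofReal_sqrt_three_sq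
  rcases mul_eq_zero.1 hfactor with h₀ | h₁₂
  · exact Or.inl (sub_eq_zero.1 h₀)
  · exact Or.inr ((mul_eq_zero.1 h₁₂).imp sub_eq_zero.1 sub_eq_zero.1)

theorem mem_planes_of_pow_three_eq {t : ℝ} (ht : t ≠ 0) {z v : ℂ}
    (h : v ^ 3 = (z + t * conj z) ^ 3) : (z, (v - z) / t) ∈ P0 ∪ P1 t ∪ P2 t := by
  have htc : (t : ℂ) ≠ 0 := ofReal_ne_zero.2 ht
  rcases eq_of_pow_three_eq h with rfl | rfl | rfl
  · refine Or.inl (Or.inl ?_)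
    simp only [P0, mem_ofPred_eq]
    field_simp
    ring
  · refine Or.inl (Or.inr ?_)
    simp only [P1, mem_ofPred_eq]
    field_simp
    linear_combination z * ofReal_sqrt_three_sq
  · refine Or.inr ?_
    simp only [P2, mem_ofPred_eq]
    field_simp
    linear_combination z * ofReal_sqrt_three_sq

theorem isBounded_eClosedBall (δ : ℝ) : Bornology.IsBounded (eClosedBall δ) := by
  refine isBounded_iff_forall_norm_le.2 ⟨|δ|, fun w hw => norm_prod_le_iff.2 ⟨?_, ?_⟩⟩
  · exact (abs_norm w.1).ge.trans
      (sq_le_sq.1 ((le_add_of_nonneg_right (sq_nonneg ‖w.2‖)).trans hw))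
  · exact (abs_norm w.2).ge.trans
      (sq_le_sq.1 ((le_add_of_nonneg_left (sq_nonneg ‖w.1‖)).trans hw))

theorem eClosedBall_mem_nhds {δ : ℝ} (hδ : 0 < δ) : eClosedBall δ ∈ 𝓝 0 := by
  have hcont : Continuous fun w : ℂ × ℂ => ‖w.1‖ ^ 2 + ‖w.2‖ ^ 2 := by fun_prop
  exact ((hcont.tendsto' 0 0 (by simp)).eventually_lt_const (pow_pos hδ 2)).mono fun _ => le_of_lt

theorem exists_eOpenBall_subset {S : Set (ℂ × ℂ)} (hS : S ∈ 𝓝 0) : ∃ ρ > 0, eOpenBall ρ ⊆ S := by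
  obtain ⟨ρ, hρ, hsub⟩ := Metric.mem_nhds_iff.1 hS
  refine ⟨ρ, hρ, fun w hw => hsub (mem_ball_zero_iff.2 (max_lt ?_ ?_))⟩
  · exact lt_of_pow_lt_pow_left₀ 2 hρ.le ((le_add_of_nonneg_right (sq_nonneg _)).trans_lt hw)
  · exact lt_of_pow_lt_pow_left₀ 2 hρ.le ((le_add_of_nonneg_left (sq_nonneg _)).trans_lt hw)

/-- The linear automorphism `(z, v) ↦ (z, (v - z) / t)`, under which the graph of `z + t * conj z`
and its rotations by cube roots of unity become `P0`, `P1 t` and `P2 t`. -/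
noncomputable def shear (t : ℝ) (w : ℂ × ℂ) : ℂ × ℂ := (w.1, (w.2 - w.1) / t)

theorem mapsTo_shear_polyHull2 (t : ℝ) {K L : Set (ℂ × ℂ)} (hL : Bornology.IsBounded L)
    (hKL : MapsTo (shear t) K L) : MapsTo (shear t) (polyHull2 K) (polyHull2 L) := by
  refine mapsTo_polyHull2 (q := ![MvPolynomial.X 0,
    MvPolynomial.C (t : ℂ)⁻¹ * (MvPolynomial.X 1 - MvPolynomial.X 0)]) (fun w i => ?_) hL hKL
  fin_cases i <;> simp [shear, coords, div_eq_inv_mul]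

theorem exists_mapsTo_shear {t δ : ℝ} (ht : 0 < t) (hδ : 0 < δ) :
    ∃ R > 0, MapsTo (shear t) ((fun w : ℂ × ℂ => (w.1, w.2 ^ 3)) ⁻¹' cubedPlane t R)
      ((P0 ∪ P1 t ∪ P2 t) ∩ eClosedBall δ) := by
  have hshear : ∀ᶠ w in 𝓝 0, shear t w ∈ eClosedBall δ := by
    have hcont : Continuous (shear t) := by
      unfold shear
      fun_prop
    exact (hcont.tendsto' 0 0 (by simp [shear])).eventually (eClosedBall_mem_nhds hδ)
  obtain ⟨ε, hε, hball⟩ := nhds_basis_closedBall.eventually_iff.1 hshear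
  refine ⟨ε / (1 + t), by positivity, fun w ⟨hw₁, hw₂⟩ =>
    ⟨mem_planes_of_pow_three_eq ht.ne' hw₂, hball (mem_closedBall_zero_iff.2 (max_le ?_ ?_))⟩⟩
  · exact hw₁.trans (div_le_self hε.le (by linarith))
  · have hnorm : ‖w.2‖ = ‖w.1 + t * conj w.1‖ :=
      (pow_left_inj₀ (norm_nonneg _) (norm_nonneg _) three_ne_zero).1 <| by
        rw [← norm_pow, ← norm_pow]
        exact congrArg norm hw₂
    calc ‖w.2‖ ≤ ‖w.1‖ + ‖t * conj w.1‖ := hnorm ▸ norm_add_le _ _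
      _ = ‖w.1‖ * (1 + t) := by
        rw [norm_mul, norm_conj, norm_real, Real.norm_of_nonneg ht.le]
        ring
      _ ≤ ε := (le_div_iff₀ (by linarith)).1 hw₁

end

/-- for `0 < t < √3/2` and every `δ > 0`, the polynomially convex hull of
`(P₀ᵗ ∪ P₁ᵗ ∪ P₂ᵗ) ∩ B̄(0;δ)` contains an open ball centred at the origin. -/
theorem stmt_4 (t : ℝ) (ht0 : 0 < t) (ht1 : t < Real.sqrt 3 / 2) (δ : ℝ) (hδ : 0 < δ) :
    ∃ ρ > (0 : ℝ), eOpenBall ρ ⊆ polyHull2 ((P0 ∪ P1 t ∪ P2 t) ∩ eClosedBall δ) := by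
  obtain ⟨R, hR, hmaps⟩ := exists_mapsTo_shear ht0 hδ
  have hbounded : Bornology.IsBounded ((P0 ∪ P1 t ∪ P2 t) ∩ eClosedBall δ) :=
    (isBounded_eClosedBall δ).subset Set.inter_subset_right
  have hcube : ∀ᶠ w : ℂ × ℂ in nhds 0, (w.1, (w.1 + t * w.2) ^ 3) ∈ polyHull2 (cubedPlane t R) :=
    (Continuous.tendsto' (by fun_prop) 0 0 (by simp)).eventually
      (polyHull2_cubedPlane_mem_nhds ht0 ht1 hR)
  refine exists_eOpenBall_subset (hcube.mono fun w hw => ?_)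
  have hw' : shear t (w.1, w.1 + t * w.2) = w := by
    rw [shear, add_sub_cancel_left, mul_div_cancel_left₀ _ (ofReal_ne_zero.2 ht0.ne')]
  exact hw' ▸ mapsTo_shear_polyHull2 t hbounded hmaps
    (mem_polyHull2_preimage_snd_pow three_ne_zero (isBounded_cubedPlane t R) hw)
end

section
/- For every t > √(15 − √33)/(2√2), the surface S_t = {(z, p_t(z,z̄)) : z ∈ ℂ}, where p_t(z,z̄) = z²z̄ + t z z̄² + (t²/3) z̄³, is locally polynomially convex at the origin: there exists r > 0 such that S_t ∩ B̄(0;r) is polynomially convex. -/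
open Complex ComplexConjugate

/-- The surface `S_t = {(z, z²z̄ + t z z̄² + (t²/3) z̄³) : z ∈ ℂ}`. -/
def Sset (t : ℝ) : Set (ℂ × ℂ) :=
  { zw | ∃ z : ℂ, zw = (z, z ^ 2 * conj z + (t : ℂ) * z * (conj z) ^ 2
      + ((t : ℂ) ^ 2 / 3) * (conj z) ^ 3) }

open Filter Topology Polynomial
open scoped Real

/-!
On `S_t` the polynomial `3 t w + z³` equals `u³`, where `u = z + t z̄`, and `S_t` is the zero set
of `3 t w + z³ - (z + t z̄)³`. A point `p` of the hull of a compact `K ⊆ S_t` is a character `χ` of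
`P(K)`, the closure of the polynomials in `C(K)`, and it has to be shown that
`χ(u³) = (χ(z) + t conj χ(z))³`.

Choose `d ∈ P(K)` such that `u d` takes values in the sector `|arg| < π / 3`. Then `u d` is a
cube root of `u³ d³ ∈ P(K)` with values where the principal root is the inverse of the cube, so
`u d ∈ P(K)`.
* If `χ(d) ≠ 0`, then `χ` extends to the closed algebra generated by `P(K)` and `u`, because `d²`
  multiplies that algebra into `P(K)`. It contains `z̄`, and characters respect conjugation there.
* If `χ(d) = 0`, then `χ(u d) = 0`, and `|z| ^ (2 k) ≤ C Re (u d)` forces `χ(z) = χ(u³) = 0`.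

For `t² > 4 / 3` the choice `d = z` works, and for `1.07 < t ≤ 2 / √3` one takes
`d = u³ - (1 + t⁴) z³`.
-/

section UniformAlgebra

variable {X : Type*} [TopologicalSpace X] {A : Subalgebra ℂ C(X, ℂ)}

lemma coe_ringInverse_apply {h : A} (hh : IsUnit h) (x : X) :
    ((Ring.inverse h : A) : C(X, ℂ)) x = ((h : C(X, ℂ)) x)⁻¹ :=
  eq_inv_of_mul_eq_one_left
    (congrArg (fun a : A => (a : C(X, ℂ)) x) (Ring.inverse_mul_cancel h hh))

variable [CompactSpace X]

-- The spectrum of `h` in `A` only exceeds its range by bounded components of the complement.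
lemma isUnit_of_forall_mem_slitPlane (hA : IsClosed (A : Set C(X, ℂ))) (h : A)
    (hs : ∀ x, (h : C(X, ℂ)) x ∈ slitPlane) : IsUnit h := by
  by_contra hunit
  let ray : Set ℂ := (fun s : ℝ => -(s : ℂ)) '' Set.Ici 0
  have hray : ray ⊆ (spectrum ℂ (h : C(X, ℂ)))ᶜ := by
    rintro _ ⟨s, hs0, rfl⟩ hspec
    obtain ⟨x, hx⟩ := ContinuousMap.spectrum_eq_range (h : C(X, ℂ)) ▸ hspec
    have := hs x
    rw [hx, neg_ofReal_mem_slitPlane] at this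
    exact this.not_ge hs0
  have hcomponent : ray ⊆ connectedComponentIn (spectrum ℂ (h : C(X, ℂ)))ᶜ 0 :=
    (isPreconnected_Ici.image _ (by fun_prop)).subset_connectedComponentIn ⟨0, by simp⟩ hray
  obtain ⟨M, hM⟩ := ((Subalgebra.spectrum_isBounded_connectedComponentIn A h
    ((spectrum.zero_mem_iff ℂ).2 hunit)).subset hcomponent).exists_norm_le
  have := hM _ ⟨|M| + 1, Set.mem_Ici.2 (by positivity), rfl⟩
  rw [norm_neg, norm_real, Real.norm_eq_abs, abs_of_pos (by positivity)] at this
  linarith [le_abs_self M]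

lemma one_add_mul_sub_one_mem_slitPlane {z : ℂ} (hz : z ∈ slitPlane) {s : ℝ}
    (hs : s ∈ Set.Icc (0 : ℝ) 1) : 1 + s * (z - 1) ∈ slitPlane := by
  simpa using starConvex_one_slitPlane.add_smul_sub_mem hz hs.1 hs.2

lemma hasDerivAt_log_one_add_mul_sub_one {z : ℂ} (hz : z ∈ slitPlane) {s : ℝ}
    (hs : s ∈ Set.Icc (0 : ℝ) 1) :
    HasDerivAt (fun s : ℝ => log (1 + s * (z - 1))) ((z - 1) / (1 + s * (z - 1))) s := by
  have hlin : HasDerivAt (fun s : ℝ => 1 + s * (z - 1)) (z - 1) s := by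
    simpa using ((hasDerivAt_id s).ofReal_comp.mul_const (z - 1)).const_add 1
  exact hlin.clog_real (one_add_mul_sub_one_mem_slitPlane hz hs)

lemma coe_intervalIntegral_apply (hA : IsClosed (A : Set C(X, ℂ))) {F : ℝ → A} {a b : ℝ}
    (hF : ContinuousOn F (Set.uIcc a b)) (x : X) :
    ((∫ s in a..b, F s : A) : C(X, ℂ)) x = ∫ s in a..b, (F s : C(X, ℂ)) x := by
  have : CompleteSpace A := hA.completeSpace_coe
  exact (((ContinuousMap.evalCLM ℂ x).comp A.toSubmodule.subtypeL).intervalIntegral_comp_comm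
    hF.intervalIntegrable).symm

-- `log h = ∫₀¹ (h - 1) / (1 + s (h - 1)) ds`
lemma exists_forall_eq_log (hA : IsClosed (A : Set C(X, ℂ))) (h : A)
    (hs : ∀ x, (h : C(X, ℂ)) x ∈ slitPlane) :
    ∃ l : A, ∀ x, (l : C(X, ℂ)) x = log ((h : C(X, ℂ)) x) := by
  have : CompleteSpace A := hA.completeSpace_coe
  let path (s : ℝ) : A := 1 + (s : ℂ) • (h - 1)
  let integrand (s : ℝ) : A := Ring.inverse (path s) * (h - 1)
  have hpath_apply (s : ℝ) (x : X) :
      (path s : C(X, ℂ)) x = 1 + s * ((h : C(X, ℂ)) x - 1) := by simp [path]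
  have hpath_unit : ∀ s ∈ Set.Icc (0 : ℝ) 1, IsUnit (path s) := fun s hs01 =>
    isUnit_of_forall_mem_slitPlane hA _ fun x => by
      rw [hpath_apply]
      exact one_add_mul_sub_one_mem_slitPlane (hs x) hs01
  have hcont : ContinuousOn integrand (Set.Icc 0 1) := by
    refine ContinuousOn.mul (fun s hs01 => ?_) continuousOn_const
    obtain ⟨v, hv⟩ := hpath_unit s hs01
    have hinv : ContinuousAt Ring.inverse (path s) := hv ▸ NormedRing.inverse_continuousAt v
    exact (hinv.comp (f := path) (by fun_prop)).continuousWithinAt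
  have happly : ∀ s ∈ Set.Icc (0 : ℝ) 1, ∀ x, (integrand s : C(X, ℂ)) x =
      ((h : C(X, ℂ)) x - 1) / (1 + s * ((h : C(X, ℂ)) x - 1)) := by
    intro s hs01 x
    change (Ring.inverse (path s) : A).1 x * ((h : C(X, ℂ)) x - 1) = _
    rw [coe_ringInverse_apply (hpath_unit s hs01), hpath_apply, inv_mul_eq_div]
  rw [← Set.uIcc_of_le (zero_le_one' ℝ)] at hcont happly
  refine ⟨∫ s in (0 : ℝ)..1, integrand s, fun x => ?_⟩
  have hderiv : ∀ s ∈ Set.uIcc (0 : ℝ) 1, HasDerivAt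
      (fun s : ℝ => log (1 + s * ((h : C(X, ℂ)) x - 1))) ((integrand s : C(X, ℂ)) x) s := by
    intro s hs01
    rw [happly s hs01 x]
    exact hasDerivAt_log_one_add_mul_sub_one (hs x) (Set.uIcc_of_le (zero_le_one' ℝ) ▸ hs01)
  have hcont_apply : ContinuousOn (fun s => (integrand s : C(X, ℂ)) x) (Set.uIcc 0 1) :=
    (ContinuousEvalConst.continuous_eval_const x).comp_continuousOn
      (continuous_subtype_val.comp_continuousOn hcont)
  rw [coe_intervalIntegral_apply hA hcont,
    intervalIntegral.integral_eq_sub_of_hasDerivAt hderiv hcont_apply.intervalIntegrable]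
  simp

lemma exists_forall_eq_exp (hA : IsClosed (A : Set C(X, ℂ))) (l : A) :
    ∃ e : A, (∀ x, (e : C(X, ℂ)) x = exp ((l : C(X, ℂ)) x)) ∧
      ∀ χ : A →ₐ[ℂ] ℂ, χ e = exp (χ l) := by
  have : CompleteSpace A := hA.completeSpace_coe
  let _ : NormedAlgebra ℚ A := .restrictScalars ℚ ℂ A
  have hmap (χ : A →ₐ[ℂ] ℂ) : χ (NormedSpace.exp l) = exp (χ l) := by
    rw [exp_eq_exp_ℂ, NormedSpace.map_exp χ (map_continuous χ)]
  exact ⟨NormedSpace.exp l, fun x => hmap ((ContinuousMap.evalAlgHom ℂ ℂ x).comp A.val), hmap⟩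

lemma mem_of_forall_eq_cpow (hA : IsClosed (A : Set C(X, ℂ))) (h : A)
    (hs : ∀ x, (h : C(X, ℂ)) x ∈ slitPlane) (c : ℂ) {k : C(X, ℂ)}
    (hk : ∀ x, k x = (h : C(X, ℂ)) x ^ c) : k ∈ A := by
  obtain ⟨l, hl⟩ := exists_forall_eq_log hA h hs
  obtain ⟨e, he, -⟩ := exists_forall_eq_exp hA (c • l)
  have hke : k = e := by
    ext x
    rw [hk, he, cpow_def_of_ne_zero (slitPlane_ne_zero (hs x)), ← hl, mul_comm]
    rfl
  exact hke ▸ e.2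

lemma pow_mem_slitPlane_of_abs_arg_lt {z : ℂ} (hz : z ≠ 0) {n : ℕ} (harg : |arg z| < π / n) :
    z ^ n ∈ slitPlane := by
  refine mem_slitPlane_iff_arg.2 ⟨fun h => ?_, pow_ne_zero n hz⟩
  have hn : 0 < (n : ℝ) := by
    by_contra! hn
    exact (abs_nonneg _).not_gt (harg.trans_le (div_nonpos_of_nonneg_of_nonpos Real.pi_pos.le hn))
  rw [lt_div_iff₀ hn, ← abs_of_pos hn, ← abs_mul, abs_lt, mul_comm] at harg
  have hangle : ((n * arg z : ℝ) : Real.Angle) = (π : Real.Angle) := by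
    rw [← h, arg_pow_coe_angle, ← Real.Angle.coe_nsmul, nsmul_eq_mul]
  have := congrArg Real.Angle.toReal hangle
  rw [Real.Angle.toReal_coe_eq_self_iff.2 ⟨harg.1, harg.2.le⟩, Real.Angle.toReal_pi] at this
  exact harg.2.ne this

-- As `arg 0 = 0`, zeros of `g` are allowed; `g` is the limit of `(g ^ n + ε) ^ (1 / n)`.
lemma mem_of_pow_mem_of_abs_arg_lt (hA : IsClosed (A : Set C(X, ℂ))) {g : C(X, ℂ)} {n : ℕ}
    (hn : n ≠ 0) (hg : g ^ n ∈ A) (harg : ∀ x, |arg (g x)| < π / n) : g ∈ A := by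
  have hslit (x : X) : g x ^ n = 0 ∨ g x ^ n ∈ slitPlane := by
    rcases eq_or_ne (g x) 0 with h0 | h0
    · exact .inl (by rw [h0, zero_pow hn])
    · exact .inr (pow_mem_slitPlane_of_abs_arg_lt h0 (harg x))
  have hinv : 0 < ((n : ℂ)⁻¹).re := by
    rw [← ofReal_natCast, ← ofReal_inv, ofReal_re]
    positivity
  let root : C(NNReal × X, ℂ) := ⟨fun q => (g q.2 ^ n + (q.1 : ℝ)) ^ (n : ℂ)⁻¹, by
    refine continuous_iff_continuousAt.2 fun q => ContinuousAt.comp (g := (· ^ (n : ℂ)⁻¹))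
      (continuousAt_cpow_const_of_re_pos ?_ hinv) (by fun_prop)
    rcases hslit q.2 with h | h
    · exact .inl (by simp [h])
    · rcases mem_slitPlane_iff.1 h with h | h
      · exact .inl (by simpa using add_nonneg h.le q.1.2)
      · exact .inr (by simpa using h)⟩
  have hroot_mem : ∀ ε > 0, root.curry ε ∈ A := fun ε hε =>
    mem_of_forall_eq_cpow hA (⟨g ^ n, hg⟩ + algebraMap ℂ A (ε : ℝ)) (fun x => by
      change g x ^ n + ((ε : ℝ) : ℂ) ∈ slitPlane
      rcases hslit x with h | h
      · simpa [h] using hε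
      · rcases mem_slitPlane_iff.1 h with h | h
        · exact .inl (by simpa using add_pos_of_pos_of_nonneg h ε.2)
        · exact .inr (by simpa using h)) _ fun x => rfl
  have hroot_zero : root.curry 0 = g := by
    ext x
    obtain ⟨hneg, hpos⟩ := abs_lt.1 (harg x)
    simpa [root] using pow_cpow_nat_inv hn hneg hpos.le
  rw [← hroot_zero]
  refine hA.mem_of_tendsto ((root.curry.continuous.tendsto 0).mono_left
    (nhdsWithin_le_nhds (s := Set.Ioi 0))) ?_
  filter_upwards [self_mem_nhdsWithin] with ε hε using hroot_mem ε hε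

end UniformAlgebra

section Character

variable {X : Type*} [TopologicalSpace X] [CompactSpace X] {A : Subalgebra ℂ C(X, ℂ)}

lemma norm_character_le (hA : IsClosed (A : Set C(X, ℂ))) (χ : A →ₐ[ℂ] ℂ) (f : A) :
    ‖χ f‖ ≤ ‖f‖ := by
  have : CompleteSpace A := hA.completeSpace_coe
  have hone : ‖(1 : A)‖ ≤ 1 :=
    (ContinuousMap.norm_le (1 : C(X, ℂ)) zero_le_one).2 fun x => by simp
  exact (AlgHom.norm_apply_le_self_mul_norm_one χ f).trans
    (mul_le_of_le_one_right (norm_nonneg f) hone)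

lemma re_character_nonpos (hA : IsClosed (A : Set C(X, ℂ))) (χ : A →ₐ[ℂ] ℂ) {f : A}
    (hf : ∀ x, ((f : C(X, ℂ)) x).re ≤ 0) : (χ f).re ≤ 0 := by
  obtain ⟨e, he, hχe⟩ := exists_forall_eq_exp hA f
  have hnorm : ‖e‖ ≤ 1 := (ContinuousMap.norm_le (e : C(X, ℂ)) zero_le_one).2 fun x => by
    rw [he, norm_exp]
    exact Real.exp_le_one_iff.2 (hf x)
  rw [← Real.exp_le_one_iff, ← norm_exp, ← hχe]
  exact (norm_character_le hA χ e).trans hnorm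

lemma re_character_eq_zero (hA : IsClosed (A : Set C(X, ℂ))) (χ : A →ₐ[ℂ] ℂ) {f : A}
    (hf : ∀ x, ((f : C(X, ℂ)) x).re = 0) : (χ f).re = 0 := by
  have hneg : (χ (-f)).re ≤ 0 := re_character_nonpos hA χ fun x => by simp [hf]
  rw [map_neg, neg_re, neg_nonpos] at hneg
  exact (re_character_nonpos hA χ fun x => (hf x).le).antisymm hneg

lemma character_eq_conj (hA : IsClosed (A : Set C(X, ℂ))) (χ : A →ₐ[ℂ] ℂ) {f g : A}
    (hfg : ∀ x, (g : C(X, ℂ)) x = conj ((f : C(X, ℂ)) x)) : χ g = conj (χ f) := by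
  have hre : (χ (f - g)).re = 0 := re_character_eq_zero hA χ fun x => by simp [hfg]
  have him : (χ (I • (f + g))).re = 0 := re_character_eq_zero hA χ fun x => by simp [hfg]
  have hadd : χ (f + g) = χ f + χ g := χ.toLinearMap.map_add f g
  rw [map_sub, sub_re] at hre
  rw [AlgHom.map_smul_of_tower, smul_eq_mul, I_mul_re, hadd, add_im] at him
  apply Complex.ext
  · rw [conj_re]
    linarith
  · rw [conj_im]
    linarith

lemma character_eq_add_mul_conj (hA : IsClosed (A : Set C(X, ℂ))) (χ : A →ₐ[ℂ] ℂ) {f u : A}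
    {t : ℂ} (hu : ∀ x, (u : C(X, ℂ)) x = (f : C(X, ℂ)) x + t * conj ((f : C(X, ℂ)) x)) :
    χ u = χ f + t * conj (χ f) := by
  rcases eq_or_ne t 0 with rfl | ht
  · rw [zero_mul, add_zero, show u = f from Subtype.ext (ContinuousMap.ext fun x => by simp [hu])]
  · have hconj : χ (t⁻¹ • (u - f)) = conj (χ f) := character_eq_conj hA χ fun x => by
      simp [hu, inv_mul_cancel_left₀ ht]
    rw [← hconj, AlgHom.map_smul_of_tower, map_sub, smul_eq_mul, mul_inv_cancel_left₀ ht,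
      add_sub_cancel]

lemma norm_character_sq_le_re (hA : IsClosed (A : Set C(X, ℂ))) (χ : A →ₐ[ℂ] ℂ) {f g : A}
    (hfg : ∀ x, ‖(f : C(X, ℂ)) x‖ ^ 2 ≤ ((g : C(X, ℂ)) x).re) : ‖χ f‖ ^ 2 ≤ (χ g).re := by
  have hnonpos := re_character_nonpos hA χ
    (f := (2 * conj (χ f)) • f - g - algebraMap ℂ A (χ f * conj (χ f))) fun x => by
      have hsq := sq_nonneg ‖(f : C(X, ℂ)) x - χ f‖
      have hx := hfg x
      simp only [← normSq_eq_norm_sq, normSq_apply, sub_re, sub_im] at hsq hx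
      simp only [AddSubgroupClass.coe_sub, SetLike.val_smul, Subalgebra.coe_algebraMap,
        ContinuousMap.sub_apply, ContinuousMap.smul_apply, _root_.algebraMap_apply, smul_eq_mul,
        mul_one, sub_re, mul_re, mul_im, conj_re, conj_im, re_ofNat, im_ofNat]
      linarith
  rw [map_sub, map_sub, AlgHom.map_smul_of_tower, AlgHom.commutes, smul_eq_mul,
    Algebra.algebraMap_self_apply, mul_assoc, mul_comm (conj _), mul_conj, sub_re, sub_re,
    ofReal_re, normSq_eq_norm_sq, ← ofReal_ofNat, ← ofReal_mul, ofReal_re] at hnonpos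
  linarith

lemma character_eq_zero_of_norm_pow_le (hA : IsClosed (A : Set C(X, ℂ))) (χ : A →ₐ[ℂ] ℂ)
    {f g : A} {k : ℕ} {C : ℝ}
    (hfg : ∀ x, (‖(f : C(X, ℂ)) x‖ ^ k) ^ 2 ≤ C * ((g : C(X, ℂ)) x).re) (hg : χ g = 0) :
    χ f = 0 := by
  have hle : ‖χ (f ^ k)‖ ^ 2 ≤ (χ ((C : ℂ) • g)).re :=
    norm_character_sq_le_re hA χ fun x => by simpa using hfg x
  rw [AlgHom.map_smul_of_tower, hg, smul_zero, zero_re, map_pow] at hle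
  exact eq_zero_of_pow_eq_zero (norm_eq_zero.1 (pow_eq_zero_iff two_ne_zero |>.1
    (hle.antisymm (sq_nonneg _))))

lemma exists_algHom_comp_inclusion_eq_of_mul_mem {𝕜 R F : Type*} [CommSemiring 𝕜] [CommSemiring R]
    [Algebra 𝕜 R] [Field F] [Algebra 𝕜 F] {A B : Subalgebra 𝕜 R} (hAB : A ≤ B) (χ : A →ₐ[𝕜] F)
    {d : A} (hd : ∀ f ∈ B, (d : R) * f ∈ A) (hχd : χ d ≠ 0) :
    ∃ χ' : B →ₐ[𝕜] F, χ'.comp (Subalgebra.inclusion hAB) = χ := by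
  let m (f : B) : A := ⟨d * f, hd f f.2⟩
  refine ⟨AlgHom.ofLinearMap
    { toFun := fun f => χ (m f) / χ d, map_add' := fun f g => ?_, map_smul' := fun c f => ?_ }
    ?_ fun f g => ?_, ?_⟩
  · rw [← add_div, ← map_add]
    exact congrArg (χ · / χ d) (Subtype.ext (mul_add _ _ _))
  · rw [RingHom.id_apply, ← smul_div_assoc, ← map_smul]
    exact congrArg (χ · / χ d) (Subtype.ext (mul_smul_comm _ _ _))
  · exact (congrArg (χ · / χ d) (Subtype.ext (mul_one _))).trans (div_self hχd)
  · have hmul : d * m (f * g) = m f * m g :=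
      Subtype.ext (show (d : R) * (d * (f * g)) = d * f * (d * g) by ring)
    have hχ := congrArg χ hmul
    rw [map_mul, map_mul] at hχ
    change χ (m (f * g)) / χ d = χ (m f) / χ d * (χ (m g) / χ d)
    rw [div_mul_div_comm, ← hχ, mul_div_mul_left _ _ hχd]
  · ext f
    change χ (d * f) / χ d = χ f
    rw [map_mul, mul_div_cancel_left₀ _ hχd]

lemma pow_mul_mem_of_mem_adjoin_singleton {𝕜 R : Type*} [CommSemiring 𝕜] [CommSemiring R]
    [Algebra 𝕜 R] {A : Subalgebra 𝕜 R} {u d : R} {n : ℕ} (hn : n ≠ 0) (hu : u ^ n ∈ A)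
    (hd : d ∈ A) (hud : u * d ∈ A) {f : R} (hf : f ∈ Algebra.adjoin A {u}) :
    d ^ (n - 1) * f ∈ A := by
  have hpow (i : ℕ) : d ^ (n - 1) * u ^ i ∈ A := by
    have hlt : i % n ≤ n - 1 := Nat.le_sub_one_of_lt (Nat.mod_lt i (Nat.pos_of_ne_zero hn))
    have heq : d ^ (n - 1) * u ^ i =
        (u ^ n) ^ (i / n) * (u * d) ^ (i % n) * d ^ (n - 1 - i % n) := by
      calc d ^ (n - 1) * u ^ i
          = d ^ (n - 1 - i % n) * d ^ (i % n) * ((u ^ n) ^ (i / n) * u ^ (i % n)) := by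
            rw [pow_sub_mul_pow d hlt, ← pow_mul, ← pow_add, Nat.div_add_mod]
        _ = (u ^ n) ^ (i / n) * (u * d) ^ (i % n) * d ^ (n - 1 - i % n) := by ring
    rw [heq]
    exact mul_mem (mul_mem (pow_mem hu _) (pow_mem hud _)) (pow_mem hd _)
  rw [Algebra.adjoin_singleton_eq_range_aeval] at hf
  obtain ⟨p, rfl⟩ := hf
  change d ^ (n - 1) * aeval u p ∈ A
  rw [aeval_eq_sum_range, Finset.mul_sum]
  refine sum_mem fun i _ => ?_
  rw [mul_smul_comm]
  exact mul_mem (p.coeff i).2 (hpow i)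

lemma exists_character_extension (hA : IsClosed (A : Set C(X, ℂ))) (χ : A →ₐ[ℂ] ℂ)
    {u : C(X, ℂ)} {d : A} {n : ℕ} (hn : n ≠ 0) (hu : u ^ n ∈ A) (hud : u * d ∈ A)
    (hχd : χ d ≠ 0) :
    ∃ (B : Subalgebra ℂ C(X, ℂ)) (hAB : A ≤ B) (χ' : B →ₐ[ℂ] ℂ),
      IsClosed (B : Set C(X, ℂ)) ∧ u ∈ B ∧ χ'.comp (Subalgebra.inclusion hAB) = χ := by
  let B₀ : Subalgebra ℂ C(X, ℂ) := (Algebra.adjoin A {u}).restrictScalars ℂ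
  have hAB : A ≤ B₀.topologicalClosure := fun f hf =>
    B₀.le_topologicalClosure ((Algebra.adjoin A {u}).algebraMap_mem ⟨f, hf⟩)
  have hmul : ∀ f ∈ B₀.topologicalClosure, ((d ^ (n - 1) : A) : C(X, ℂ)) * f ∈ A := fun f hf =>
    hA.closure_subset (map_mem_closure (continuous_const_mul _) hf fun g hg =>
      pow_mul_mem_of_mem_adjoin_singleton hn hu d.2 hud hg)
  obtain ⟨χ', hχ'⟩ := exists_algHom_comp_inclusion_eq_of_mul_mem hAB χ hmul (by
    rw [map_pow]
    exact pow_ne_zero _ hχd)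
  exact ⟨_, hAB, χ', B₀.isClosed_topologicalClosure,
    B₀.le_topologicalClosure (Algebra.self_mem_adjoin_singleton A u), hχ'⟩

/-- `d` is a sector multiplier for `u z = z + t * conj z` if `u * d` takes values in the sector
`|arg| < π / n`, on which the `n`-th root inverts the `n`-th power, and if the real part of `u * d`
dominates a multiple of some power of `|z| ^ 2`. -/
structure IsSectorMultiplier (n : ℕ) (t : ℝ) (d : ℂ → ℂ) : Prop where
  abs_arg_lt (z : ℂ) : |arg ((z + t * conj z) * d z)| < π / n
  exists_norm_pow_le : ∃ (k : ℕ) (C : ℝ), ∀ z, (‖z‖ ^ k) ^ 2 ≤ C * ((z + t * conj z) * d z).re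

lemma norm_add_mul_conj_le (t : ℝ) (z : ℂ) : ‖z + t * conj z‖ ≤ (1 + |t|) * ‖z‖ := by
  calc ‖z + t * conj z‖ ≤ ‖z‖ + ‖(t : ℂ) * conj z‖ := norm_add_le _ _
    _ = (1 + |t|) * ‖z‖ := by
      rw [norm_mul, norm_real, norm_conj, Real.norm_eq_abs]
      ring

lemma IsSectorMultiplier.character_eq_zero (hA : IsClosed (A : Set C(X, ℂ))) (χ : A →ₐ[ℂ] ℂ)
    {n : ℕ} {t : ℝ} {d : ℂ → ℂ} (hd : IsSectorMultiplier n t d) (hn : n ≠ 0) {Z U g : A}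
    (hU : ∀ x, (U : C(X, ℂ)) x = ((Z : C(X, ℂ)) x + t * conj ((Z : C(X, ℂ)) x)) ^ n)
    (hg : ∀ x, (g : C(X, ℂ)) x =
      ((Z : C(X, ℂ)) x + t * conj ((Z : C(X, ℂ)) x)) * d ((Z : C(X, ℂ)) x))
    (hχ : χ g = 0) : χ Z = 0 ∧ χ U = 0 := by
  obtain ⟨k, C, hkC⟩ := hd.exists_norm_pow_le
  have hZ (x : X) : (‖(Z : C(X, ℂ)) x‖ ^ k) ^ 2 ≤ C * ((g : C(X, ℂ)) x).re := by
    rw [hg]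
    exact hkC _
  refine ⟨character_eq_zero_of_norm_pow_le hA χ hZ hχ, ?_⟩
  let M : ℝ := (1 + |t|) ^ n * ‖Z‖ ^ (n - 1)
  have hUZ (x : X) : ‖(U : C(X, ℂ)) x‖ ≤ M * ‖(Z : C(X, ℂ)) x‖ := by
    calc ‖(U : C(X, ℂ)) x‖ ≤ ((1 + |t|) * ‖(Z : C(X, ℂ)) x‖) ^ n := by
          rw [hU, norm_pow]
          exact pow_le_pow_left₀ (norm_nonneg _) (norm_add_mul_conj_le _ _) n
      _ = (1 + |t|) ^ n * ‖(Z : C(X, ℂ)) x‖ ^ (n - 1) * ‖(Z : C(X, ℂ)) x‖ := by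
          rw [mul_pow, mul_assoc, pow_sub_one_mul hn]
      _ ≤ M * ‖(Z : C(X, ℂ)) x‖ := by
          have := (Z : C(X, ℂ)).norm_coe_le_norm x
          change _ ≤ (1 + |t|) ^ n * ‖(Z : C(X, ℂ))‖ ^ (n - 1) * _
          gcongr
  refine character_eq_zero_of_norm_pow_le hA χ (k := k) (C := (M ^ k) ^ 2 * C) (fun x => ?_) hχ
  calc (‖(U : C(X, ℂ)) x‖ ^ k) ^ 2 ≤ ((M * ‖(Z : C(X, ℂ)) x‖) ^ k) ^ 2 := by
        gcongr
        exact hUZ x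
    _ = (M ^ k) ^ 2 * (‖(Z : C(X, ℂ)) x‖ ^ k) ^ 2 := by rw [mul_pow, mul_pow]
    _ ≤ (M ^ k) ^ 2 * C * ((g : C(X, ℂ)) x).re := by
        rw [mul_assoc]
        exact mul_le_mul_of_nonneg_left (hZ x) (sq_nonneg _)

theorem IsSectorMultiplier.character_eq (hA : IsClosed (A : Set C(X, ℂ))) (χ : A →ₐ[ℂ] ℂ)
    {n : ℕ} {t : ℝ} {d : ℂ → ℂ} (hd : IsSectorMultiplier n t d) (hn : n ≠ 0) {Z D U : A}
    (hD : ∀ x, (D : C(X, ℂ)) x = d ((Z : C(X, ℂ)) x))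
    (hU : ∀ x, (U : C(X, ℂ)) x = ((Z : C(X, ℂ)) x + t * conj ((Z : C(X, ℂ)) x)) ^ n) :
    χ U = (χ Z + t * conj (χ Z)) ^ n := by
  let u : C(X, ℂ) := Z + (t : ℂ) • star (Z : C(X, ℂ))
  have hu_pow : u ^ n = U := ContinuousMap.ext fun x => (hU x).symm
  have hu_mul_apply (x : X) : (u * D : C(X, ℂ)) x =
      ((Z : C(X, ℂ)) x + t * conj ((Z : C(X, ℂ)) x)) * d ((Z : C(X, ℂ)) x) :=
    congrArg (u x * ·) (hD x)
  have hu_mul : u * D ∈ A := by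
    refine mem_of_pow_mem_of_abs_arg_lt hA hn ?_ fun x => ?_
    · rw [mul_pow, hu_pow]
      exact mul_mem U.2 (pow_mem D.2 n)
    · rw [hu_mul_apply]
      exact hd.abs_arg_lt _
  rcases eq_or_ne (χ D) 0 with hχD | hχD
  · have hχ : χ ⟨u * D, hu_mul⟩ = 0 := by
      have hpow : (⟨u * D, hu_mul⟩ : A) ^ n = U * D ^ n :=
        Subtype.ext ((mul_pow u D n).trans (by rw [hu_pow]; rfl))
      refine eq_zero_of_pow_eq_zero (n := n) ?_
      rw [← map_pow, hpow, map_mul, map_pow, hχD, zero_pow hn, mul_zero]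
    obtain ⟨hχZ, hχU⟩ := hd.character_eq_zero hA χ hn hU hu_mul_apply hχ
    rw [hχU, hχZ, map_zero, mul_zero, add_zero, zero_pow hn]
  · obtain ⟨B, hAB, χ', hB, huB, rfl⟩ :=
      exists_character_extension hA χ hn (hu_pow ▸ U.2) hu_mul hχD
    have hU' : Subalgebra.inclusion hAB U = (⟨u, huB⟩ : B) ^ n := Subtype.ext hu_pow.symm
    rw [AlgHom.comp_apply, hU', map_pow,
      character_eq_add_mul_conj hB χ' (f := Subalgebra.inclusion hAB Z) fun x => rfl]
    rfl

end Character

section Multiplier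

lemma abs_arg_lt_pi_div_three {z : ℂ} (hre : 0 < z.re) (him : z.im ^ 2 < 3 * z.re ^ 2) :
    |arg z| < π / 3 := by
  have hz : z ≠ 0 := fun h => hre.ne' (by rw [h, zero_re])
  have hnorm : ‖z‖ < 2 * z.re := by
    refine lt_of_pow_lt_pow_left₀ 2 (by positivity) ?_
    rw [← normSq_eq_norm_sq, normSq_apply]
    linarith
  have hcos : Real.cos (π / 3) < Real.cos |arg z| := by
    rw [Real.cos_abs, cos_arg hz, Real.cos_pi_div_three, lt_div_iff₀ (norm_pos_iff.2 hz)]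
    linarith
  exact (Real.strictAntiOn_cos.lt_iff_gt ⟨by positivity, by linarith [Real.pi_pos]⟩
    ⟨abs_nonneg _, abs_arg_le_pi z⟩).1 hcos

lemma isSectorMultiplier_three {t : ℝ} {d : ℂ → ℂ} {k : ℕ} {C : ℝ}
    (hre : ∀ z ≠ 0, 0 < ((z + t * conj z) * d z).re)
    (him : ∀ z ≠ 0, ((z + t * conj z) * d z).im ^ 2 < 3 * ((z + t * conj z) * d z).re ^ 2)
    (hnorm : ∀ z, (‖z‖ ^ k) ^ 2 ≤ C * ((z + t * conj z) * d z).re) : IsSectorMultiplier 3 t d where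
  abs_arg_lt z := by
    rw [Nat.cast_ofNat]
    rcases eq_or_ne z 0 with rfl | hz
    · rw [map_zero, mul_zero, add_zero, zero_mul, arg_zero, abs_zero]
      positivity
    · exact abs_arg_lt_pi_div_three (hre z hz) (him z hz)
  exists_norm_pow_le := ⟨k, C, hnorm⟩

lemma isSectorMultiplier_three_id {t : ℝ} (ht₀ : 0 < t) (ht : 4 / 3 < t ^ 2) :
    IsSectorMultiplier 3 t fun z => z := by
  have ht₁ : 0 < t - 1 := by nlinarith
  have hre (z : ℂ) : ((z + t * conj z) * z).re = 2 * z.re ^ 2 + (t - 1) * ‖z‖ ^ 2 := by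
    simp only [← normSq_eq_norm_sq, normSq_apply, add_re, add_im, mul_re, mul_im, ofReal_re,
      ofReal_im, conj_re, conj_im]
    ring
  have him (z : ℂ) : ((z + t * conj z) * z).im = 2 * z.re * z.im := by
    simp only [add_re, add_im, mul_re, mul_im, ofReal_re, ofReal_im, conj_re, conj_im]
    ring
  have hre_pos (z : ℂ) (hz : z ≠ 0) : 0 < ((z + t * conj z) * z).re := by
    have := norm_pos_iff.2 hz
    rw [hre]
    positivity
  refine isSectorMultiplier_three (k := 1) (C := (t - 1)⁻¹) hre_pos (fun z hz => ?_) fun z => ?_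
  · have hamgm : (2 * z.re * z.im) ^ 2 * (t ^ 2 - 1) ≤ ((z + t * conj z) * z).re ^ 2 := by
      rw [hre, ← normSq_eq_norm_sq, normSq_apply]
      linarith [sq_nonneg ((t + 1) * z.re ^ 2 - (t - 1) * z.im ^ 2)]
    have := pow_pos (hre_pos z hz) 2
    rw [him]
    by_contra! hle
    linarith [mul_pos (show 0 < (2 * z.re * z.im) ^ 2 by linarith) (sub_pos.2 ht)]
  · rw [hre, pow_one, ← div_eq_inv_mul, le_div_iff₀ ht₁, mul_comm]
    exact le_add_of_nonneg_left (by positivity)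

lemma re_mul_cube_sub (t : ℝ) (z : ℂ) :
    ((z + t * conj z) * ((z + t * conj z) ^ 3 - (1 + t ^ 4) * z ^ 3)).re =
      t * ‖z‖ ^ 2 * ((6 * t - 3 - 4 * t ^ 2 + t ^ 4) * ‖z‖ ^ 2 +
        2 * (3 + 4 * t ^ 2 - t ^ 4) * z.re ^ 2) := by
  rw [← normSq_eq_norm_sq, normSq_apply]
  simp only [pow_succ, pow_zero, one_mul, add_re, add_im, sub_re, sub_im, mul_re, mul_im,
    ofReal_re, ofReal_im, conj_re, conj_im, one_re, one_im]
  ring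

lemma im_mul_cube_sub (t : ℝ) (z : ℂ) :
    ((z + t * conj z) * ((z + t * conj z) ^ 3 - (1 + t ^ 4) * z ^ 3)).im =
      -2 * t * z.re * z.im *
        (8 * t ^ 3 * z.re ^ 2 - (4 * t ^ 3 - t ^ 4 - 4 * t ^ 2 + 3) * ‖z‖ ^ 2) := by
  rw [← normSq_eq_norm_sq, normSq_apply]
  simp only [pow_succ, pow_zero, one_mul, add_re, add_im, sub_re, sub_im, mul_re, mul_im,
    ofReal_re, ofReal_im, conj_re, conj_im, one_re, one_im]
  ring

lemma four_mul_mul_sub_sq_lt {X Y m b a k : ℝ} (hX : 0 ≤ X) (hY : 0 ≤ Y) (hXY : 0 < X + Y)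
    (hm : 0 < m) (ha : 0 ≤ a) (hab : a ≤ 2 * b) (hk : 0 ≤ k) (hkmb : k ^ 2 ≤ 5 * m * b) :
    4 * X * Y * (a * X - k * (X + Y)) ^ 2 < 3 * (X + Y) ^ 2 * (m * (X + Y) + 2 * b * X) ^ 2 := by
  set n := X + Y
  have hsq : (a * X - k * n) ^ 2 ≤ (2 * b * X) ^ 2 + (k * n) ^ 2 := by
    have hcross : 0 ≤ a * X * (k * n) := by positivity
    have : (a * X) ^ 2 ≤ (2 * b * X) ^ 2 := by gcongr
    linarith
  calc 4 * X * Y * (a * X - k * n) ^ 2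
      ≤ 4 * X * Y * ((2 * b * X) ^ 2 + (k * n) ^ 2) := by gcongr
    _ = 4 * X * Y * (2 * b * X) ^ 2 + 4 * X * Y * k ^ 2 * n ^ 2 := by ring
    _ ≤ n ^ 2 * (2 * b * X) ^ 2 + 4 * X * n * (5 * m * b) * n ^ 2 := by
        gcongr
        · linarith [sq_nonneg (X - Y)]
        · exact le_add_of_nonneg_left hX
    _ = 3 * n ^ 2 * (m * n + 2 * b * X) ^ 2 -
          n ^ 2 * (m ^ 2 * n ^ 2 + 2 * (m * n - 2 * b * X) ^ 2) := by ring
    _ < 3 * n ^ 2 * (m * n + 2 * b * X) ^ 2 := sub_lt_self _ (by positivity)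

-- `1 + t ^ 4` is the coefficient for which `‖z‖ ^ 2` divides the real part of the product.
lemma isSectorMultiplier_three_cube_sub {t : ℝ} (ht : 1.07 < t) (ht' : t ^ 2 ≤ 4 / 3) :
    IsSectorMultiplier 3 t fun z => (z + t * conj z) ^ 3 - (1 + t ^ 4) * z ^ 3 := by
  set m := 6 * t - 3 - 4 * t ^ 2 + t ^ 4 with hm
  set b := 3 + 4 * t ^ 2 - t ^ 4 with hb
  set k := 4 * t ^ 3 - t ^ 4 - 4 * t ^ 2 + 3 with hk
  have hs : 0 < t - 1.07 := sub_pos.2 ht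
  have ht_le : t ≤ 1.155 := by nlinarith
  have hm_ge : 0.147 ≤ m := by
    rw [hm]
    linarith [pow_pos hs 2, pow_pos hs 3, pow_pos hs 4]
  have hsq : 1.14 ≤ t ^ 2 := by nlinarith
  have hb_ge : 6.2 ≤ b := by
    rw [hb]
    linarith [mul_nonneg (sub_nonneg.2 hsq) (sub_nonneg.2 ht')]
  have hk_mem : k ∈ Set.Icc 2 2.1 := by
    have hp : 2 * t - t ^ 2 ∈ Set.Icc 0.97 1 :=
      ⟨by nlinarith, by linarith [sq_nonneg (t - 1)]⟩
    rw [show k = 3 - (2 * t - t ^ 2) ^ 2 by rw [hk]; ring]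
    constructor <;> nlinarith [hp.1, hp.2]
  have hab : 8 * t ^ 3 ≤ 2 * b := by nlinarith
  have hkmb : k ^ 2 ≤ 5 * m * b := by nlinarith [hk_mem.1, hk_mem.2]
  have hre_ge (z : ℂ) : t * m * ‖z‖ ^ 4 ≤
      ((z + t * conj z) * ((z + t * conj z) ^ 3 - (1 + t ^ 4) * z ^ 3)).re := by
    calc t * m * ‖z‖ ^ 4 ≤ t * m * ‖z‖ ^ 4 + t * ‖z‖ ^ 2 * (2 * b * z.re ^ 2) :=
          le_add_of_nonneg_right (by positivity)
      _ = _ := by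
          rw [re_mul_cube_sub]
          ring
  refine isSectorMultiplier_three (k := 2) (C := (t * m)⁻¹) (fun z hz => ?_) (fun z hz => ?_)
    fun z => ?_
  · have := norm_pos_iff.2 hz
    exact (by positivity : 0 < t * m * ‖z‖ ^ 4).trans_le (hre_ge z)
  · have hpos : 0 < z.re ^ 2 + z.im ^ 2 := by
      rw [sq, sq, ← normSq_apply]
      exact normSq_pos.2 hz
    have hlt := four_mul_mul_sub_sq_lt (sq_nonneg z.re) (sq_nonneg z.im) hpos
      (show 0 < m by linarith) (show 0 ≤ 8 * t ^ 3 by positivity) hab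
      (show 0 ≤ k by linarith [hk_mem.1]) hkmb
    rw [re_mul_cube_sub, im_mul_cube_sub, ← normSq_eq_norm_sq, normSq_apply, ← sq, ← sq]
    linarith [mul_lt_mul_of_pos_left hlt (show 0 < t ^ 2 by positivity)]
  · rw [← div_eq_inv_mul, le_div_iff₀ (by positivity), ← pow_mul, mul_comm]
    exact hre_ge z

lemma exists_isSectorMultiplier_three {t : ℝ} (ht : 1.07 < t) :
    ∃ a b c : ℂ, IsSectorMultiplier 3 t fun z => a * z + b * (z + t * conj z) ^ 3 + c * z ^ 3 := by
  rcases lt_or_ge (4 / 3) (t ^ 2) with h | h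
  · refine ⟨1, 0, 0, ?_⟩
    simpa only [one_mul, zero_mul, add_zero] using isSectorMultiplier_three_id (by linarith) h
  · refine ⟨0, 1, -(1 + t ^ 4), ?_⟩
    simpa only [zero_mul, zero_add, one_mul, neg_mul, ← sub_eq_add_neg]
      using isSectorMultiplier_three_cube_sub ht h

end Multiplier

section PolynomialHull

lemma exists_algHom_forall_apply_eq_of_norm_le {𝕜 E A B : Type*} [NontriviallyNormedField 𝕜]
    [Ring E] [Algebra 𝕜 E] [NormedRing A] [NormedAlgebra 𝕜 A] [NormedRing B] [NormedAlgebra 𝕜 B]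
    [CompleteSpace B] (e : E →ₐ[𝕜] A) (he : DenseRange e) (f : E →ₐ[𝕜] B)
    (hf : ∀ x, ‖f x‖ ≤ ‖e x‖) : ∃ χ : A →ₐ[𝕜] B, ∀ x, χ (e x) = f x := by
  let L : A →L[𝕜] B := f.toLinearMap.extendOfNorm e.toLinearMap
  have hL (x : E) : L (e x) = f x := LinearMap.extendOfNorm_eq he ⟨1, by simpa using hf⟩ x
  refine ⟨AlgHom.ofLinearMap L ?_ fun a b => ?_, hL⟩
  · exact (congrArg L (map_one e).symm).trans ((hL 1).trans (map_one f))
  · refine he.induction_on₂ (p := fun a b => L (a * b) = L a * L b)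
      (isClosed_eq (by fun_prop) (by fun_prop)) (fun x y => ?_) a b
    rw [← map_mul, hL, hL, hL, map_mul]

section PolyAlgebra

variable (K : Set (ℂ × ℂ))

/-- Restriction of polynomials on `ℂ²` to `K`. -/
noncomputable def polyRestrict : MvPolynomial (Fin 2) ℂ →ₐ[ℂ] C(K, ℂ) :=
  MvPolynomial.aeval fun i => if i = 0 then ⟨fun w => w.1.1, by fun_prop⟩
    else ⟨fun w => w.1.2, by fun_prop⟩

lemma polyRestrict_apply (P : MvPolynomial (Fin 2) ℂ) (w : K) :
    polyRestrict K P w = MvPolynomial.eval (fun i => if i = 0 then w.1.1 else w.1.2) P := by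
  have hcomp : (ContinuousMap.evalAlgHom ℂ ℂ w).comp (polyRestrict K) =
      MvPolynomial.aeval fun i => if i = 0 then w.1.1 else w.1.2 := by
    refine MvPolynomial.algHom_ext fun i => ?_
    rw [AlgHom.comp_apply, polyRestrict, MvPolynomial.aeval_X, MvPolynomial.aeval_X]
    split_ifs <;> rfl
  exact (DFunLike.congr_fun hcomp P).trans (congrFun (MvPolynomial.aeval_eq_eval _) P)

variable [CompactSpace K]

/-- The uniform algebra `P(K)`: the closure in `C(K)` of the polynomials. -/
noncomputable def polyAlgebra : Subalgebra ℂ C(K, ℂ) := (polyRestrict K).range.topologicalClosure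

lemma isClosed_polyAlgebra : IsClosed (polyAlgebra K : Set C(K, ℂ)) :=
  (polyRestrict K).range.isClosed_topologicalClosure

/-- Restriction of polynomials on `ℂ²` to `K`, as elements of `P(K)`. -/
noncomputable def toPolyAlgebra : MvPolynomial (Fin 2) ℂ →ₐ[ℂ] polyAlgebra K :=
  (polyRestrict K).codRestrict _ fun P => (polyRestrict K).range.le_topologicalClosure ⟨P, rfl⟩

lemma toPolyAlgebra_apply (P : MvPolynomial (Fin 2) ℂ) (w : K) :
    (toPolyAlgebra K P : C(K, ℂ)) w =
      MvPolynomial.eval (fun i => if i = 0 then w.1.1 else w.1.2) P :=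
  polyRestrict_apply K P w

lemma denseRange_toPolyAlgebra : DenseRange (toPolyAlgebra K) := by
  refine Subtype.dense_iff.2 ?_
  rw [← Set.range_comp]
  exact (polyRestrict K).range.topologicalClosure_coe.subset

variable {K}

lemma exists_character_of_mem_polyHull2 {p : ℂ × ℂ} (hp : p ∈ polyHull2 K) :
    ∃ χ : polyAlgebra K →ₐ[ℂ] ℂ, ∀ P, χ (toPolyAlgebra K P) =
      MvPolynomial.eval (fun i => if i = 0 then p.1 else p.2) P := by
  refine exists_algHom_forall_apply_eq_of_norm_le (toPolyAlgebra K) (denseRange_toPolyAlgebra K)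
    (MvPolynomial.aeval fun i => if i = 0 then p.1 else p.2) fun P =>
      (hp P).trans (Real.sSup_le ?_ (norm_nonneg _))
  rintro _ ⟨w, hw, rfl⟩
  beta_reduce
  rw [← toPolyAlgebra_apply K P ⟨w, hw⟩]
  exact (toPolyAlgebra K P : C(K, ℂ)).norm_coe_le_norm _

end PolyAlgebra

lemma subset_polyHull2 {K : Set (ℂ × ℂ)} (hK : IsCompact K) : K ⊆ polyHull2 K := fun w hw P =>
  le_csSup (hK.image (by
    refine ((MvPolynomial.continuous_eval P).comp (continuous_pi fun i => ?_)).norm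
    split_ifs <;> fun_prop)).bddAbove ⟨w, hw, rfl⟩

-- Test `p` against the polynomial `w ↦ ⟪p, w⟫` and apply AM-GM.
lemma polyHull2_subset_eClosedBall {K : Set (ℂ × ℂ)} {r : ℝ} (hK : K ⊆ eClosedBall r) :
    polyHull2 K ⊆ eClosedBall r := by
  intro p hp
  let L : MvPolynomial (Fin 2) ℂ := .C (conj p.1) * .X 0 + .C (conj p.2) * .X 1
  have hL (w : ℂ × ℂ) : MvPolynomial.eval (fun i => if i = 0 then w.1 else w.2) L =
      conj p.1 * w.1 + conj p.2 * w.2 := by simp [L]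
  have hLp : ‖conj p.1 * p.1 + conj p.2 * p.2‖ = ‖p.1‖ ^ 2 + ‖p.2‖ ^ 2 := by
    rw [conj_mul', conj_mul', ← ofReal_pow, ← ofReal_pow, ← ofReal_add, norm_real,
      Real.norm_of_nonneg (by positivity)]
  have hle : ‖p.1‖ ^ 2 + ‖p.2‖ ^ 2 ≤ (‖p.1‖ ^ 2 + ‖p.2‖ ^ 2 + r ^ 2) / 2 := by
    refine (hLp.symm.trans (congrArg norm (hL p).symm)).le.trans
      ((hp L).trans (Real.sSup_le ?_ (by positivity)))
    rintro _ ⟨w, hw, rfl⟩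
    have hwr : ‖w.1‖ ^ 2 + ‖w.2‖ ^ 2 ≤ r ^ 2 := hK hw
    calc ‖MvPolynomial.eval (fun i => if i = 0 then w.1 else w.2) L‖
        ≤ ‖p.1‖ * ‖w.1‖ + ‖p.2‖ * ‖w.2‖ := by
          rw [hL, ← norm_conj p.1, ← norm_conj p.2, ← norm_mul, ← norm_mul]
          exact norm_add_le _ _
      _ ≤ (‖p.1‖ ^ 2 + ‖p.2‖ ^ 2 + r ^ 2) / 2 := by
          linarith [two_mul_le_add_sq ‖p.1‖ ‖w.1‖, two_mul_le_add_sq ‖p.2‖ ‖w.2‖]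
  change ‖p.1‖ ^ 2 + ‖p.2‖ ^ 2 ≤ r ^ 2
  linarith

lemma isCompact_eClosedBall (r : ℝ) : IsCompact (eClosedBall r) := by
  refine Metric.isCompact_of_isClosed_isBounded ?_ ?_
  · exact isClosed_le (by fun_prop) continuous_const
  · refine isBounded_iff_forall_norm_le.2 ⟨|r|, fun z hz => ?_⟩
    have hz' : ‖z.1‖ ^ 2 + ‖z.2‖ ^ 2 ≤ r ^ 2 := hz
    have hle {a : ℝ} (ha : a ^ 2 ≤ r ^ 2) : a ≤ |r| := (le_abs_self a).trans (sq_le_sq.1 ha)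
    exact max_le (hle ((le_add_of_nonneg_right (sq_nonneg _)).trans hz'))
      (hle ((le_add_of_nonneg_left (sq_nonneg _)).trans hz'))

variable {t : ℝ}

lemma mem_Sset_iff {p : ℂ × ℂ} : p ∈ Sset t ↔
    p.2 = p.1 ^ 2 * conj p.1 + t * p.1 * conj p.1 ^ 2 + t ^ 2 / 3 * conj p.1 ^ 3 := by
  constructor
  · rintro ⟨z, rfl⟩
    rfl
  · exact fun h => ⟨p.1, Prod.ext rfl h⟩

lemma mem_Sset_iff_add_mul_conj_pow (ht : t ≠ 0) {p : ℂ × ℂ} :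
    p ∈ Sset t ↔ 3 * t * p.2 + p.1 ^ 3 = (p.1 + t * conj p.1) ^ 3 := by
  have ht' : (t : ℂ) ≠ 0 := ofReal_ne_zero.2 ht
  rw [mem_Sset_iff, ← mul_right_inj' (mul_ne_zero three_ne_zero ht'), ← sub_eq_zero,
    ← sub_eq_zero (a := _ + _)]
  ring_nf

lemma isClosed_Sset (t : ℝ) : IsClosed (Sset t) := by
  rw [show Sset t = _ from Set.ext fun p => mem_Sset_iff]
  exact isClosed_eq (by fun_prop) (by fun_prop)

theorem polyHull2_subset_Sset {K : Set (ℂ × ℂ)} (ht : 1.07 < t) (hK : IsCompact K)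
    (hKt : K ⊆ Sset t) : polyHull2 K ⊆ Sset t := by
  intro p hp
  have : CompactSpace K := isCompact_iff_compactSpace.1 hK
  have ht₀ : t ≠ 0 := by linarith
  obtain ⟨χ, hχ⟩ := exists_character_of_mem_polyHull2 hp
  obtain ⟨a, b, c, hd⟩ := exists_isSectorMultiplier_three ht
  let Z : MvPolynomial (Fin 2) ℂ := .X 0
  let U : MvPolynomial (Fin 2) ℂ := .C (3 * t : ℂ) * .X 1 + Z ^ 3
  let D : MvPolynomial (Fin 2) ℂ := .C a * Z + .C b * U + .C c * Z ^ 3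
  have hZ (w : ℂ × ℂ) : MvPolynomial.eval (fun i => if i = 0 then w.1 else w.2) Z = w.1 := by
    simp [Z]
  have hU (w : ℂ × ℂ) : MvPolynomial.eval (fun i => if i = 0 then w.1 else w.2) U =
      3 * t * w.2 + w.1 ^ 3 := by simp [U, Z]
  have hD (w : ℂ × ℂ) : MvPolynomial.eval (fun i => if i = 0 then w.1 else w.2) D =
      a * w.1 + b * (3 * t * w.2 + w.1 ^ 3) + c * w.1 ^ 3 := by simp [D, hZ, hU]
  have hKU (w : K) : 3 * t * w.1.2 + w.1.1 ^ 3 = (w.1.1 + t * conj w.1.1) ^ 3 :=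
    (mem_Sset_iff_add_mul_conj_pow ht₀).1 (hKt w.2)
  have hχU := hd.character_eq (isClosed_polyAlgebra K) χ three_ne_zero
    (Z := toPolyAlgebra K Z) (D := toPolyAlgebra K D) (U := toPolyAlgebra K U)
    (fun w => by simp only [toPolyAlgebra_apply, hD, hZ, hKU])
    (fun w => by simp only [toPolyAlgebra_apply, hU, hZ, hKU])
  rw [hχ, hχ, hU, hZ] at hχU
  exact (mem_Sset_iff_add_mul_conj_pow ht₀).2 hχU

end PolynomialHull

theorem stmt_5_general {t : ℝ} (ht : 1.07 < t) (r : ℝ) : PolyConvex2 (Sset t ∩ eClosedBall r) := by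
  have hcompact := (isCompact_eClosedBall r).inter_left (isClosed_Sset t)
  exact (Set.subset_inter (polyHull2_subset_Sset ht hcompact Set.inter_subset_left)
    (polyHull2_subset_eClosedBall Set.inter_subset_right)).antisymm (subset_polyHull2 hcompact)

lemma le_sqrt_fifteen_sub_sqrt_div : 1.07 ≤ √(15 - √33) / (2 * √2) := by
  have h33 : √33 ≤ 5.84 := Real.sqrt_le_iff.2 ⟨by norm_num, by norm_num⟩
  rw [le_div_iff₀ (by positivity)]
  refine Real.le_sqrt_of_sq_le ?_
  rw [mul_pow, mul_pow, Real.sq_sqrt zero_le_two]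
  linarith

/-- for `t > √(15 − √33)/(2√2)`, the surface `S_t` is locally polynomially
convex at the origin. -/
theorem stmt_5 (t : ℝ) (ht : Real.sqrt (15 - Real.sqrt 33) / (2 * Real.sqrt 2) < t) :
    ∃ r > (0 : ℝ), PolyConvex2 (Sset t ∩ eClosedBall r) :=
  ⟨1, one_pos, stmt_5_general (le_sqrt_fifteen_sub_sqrt_div.trans_lt ht) 1⟩
end
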